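/- arXiv:2210.03545 — 9 statements merged into one kernel-verified Lean document; each statement's English description precedes it below -/
import Mathlib

section
/- There exists a constant c > 0 such that for all sufficiently large n, r(K_4^(3) − e, S_n) ≥ c·n²/(log n)²; that is, there exists a 2-coloring of K_N^(3) with N = ⌊c·n²/(log n)²⌋ that contains no red copy of K_4^(3) − e and no blue copy of S_n. -/
/-!
A 2-coloring of `K_N^(3)` is `χ : Finset (Fin N) → Bool`, read on 3-element subsets,
with `true` = red and `false` = blue.
-/

/-- A red copy of `K₄⁽³⁾ − e`: a 4-element vertex set with at least three of its four
3-element subsets red. -/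
def HasRedK4e (N : ℕ) (χ : Finset (Fin N) → Bool) : Prop :=
  ∃ S : Finset (Fin N), S.card = 4 ∧
    3 ≤ ((S.powersetCard 3).filter fun T => χ T = true).card

/-- A blue copy of the star `Sₙ`: a vertex `v` and an `n`-element set `S` with `v ∉ S`
such that every triple `{v, a, b}` with `a ≠ b` in `S` is blue. -/
def HasBlueStar (N n : ℕ) (χ : Finset (Fin N) → Bool) : Prop :=
  ∃ v : Fin N, ∃ S : Finset (Fin N), v ∉ S ∧ S.card = n ∧
    ∀ a ∈ S, ∀ b ∈ S, a ≠ b → χ {v, a, b} = false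

open MeasureTheory ProbabilityTheory

/-- The asymmetric Lovász local lemma. -/
theorem lll_aux {Ω ι : Type*} [MeasurableSpace Ω] [DecidableEq ι] (μ : Measure Ω)
    [IsProbabilityMeasure μ] (A : ι → Set Ω) (hA : ∀ i, MeasurableSet (A i)) (I : Finset ι)
    (nb : ι → Finset ι) (x : ι → ℝ) (hx0 : ∀ i, 0 ≤ x i) (hx1 : ∀ i, x i < 1)
    (hind : ∀ i ∈ I, ∀ S ⊆ I, Disjoint S (nb i) →
      μ.real (A i ∩ ⋂ j ∈ S, (A j)ᶜ) = μ.real (A i) * μ.real (⋂ j ∈ S, (A j)ᶜ))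
    (hp : ∀ i ∈ I, μ.real (A i) ≤ x i * ∏ j ∈ nb i, (1 - x j)) :
    ∀ k : ℕ, ∀ S ⊆ I, S.card ≤ k → ∀ i ∈ I, i ∉ S →
      (1 - x i) * μ.real (⋂ j ∈ S, (A j)ᶜ) ≤ μ.real (⋂ j ∈ insert i S, (A j)ᶜ) := by
  intro k
  induction k using Nat.strong_induction_on with
  | _ k ih =>
  intro S hSI hk i hi hiS
  have hmeas : ∀ S : Finset ι, MeasurableSet (⋂ j ∈ S, (A j)ᶜ) := fun S =>
    Finset.measurableSet_biInter S fun j _ => (hA j).compl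
  -- inner claim
  have inner : ∀ U : Finset ι, U ⊆ S ∩ nb i →
      (∏ j ∈ U, (1 - x j)) * μ.real (⋂ j ∈ S \ nb i, (A j)ᶜ)
        ≤ μ.real (⋂ j ∈ U ∪ (S \ nb i), (A j)ᶜ) := by
    intro U
    induction U using Finset.induction_on with
    | empty => intro _; simp
    | insert a U ha ihU =>
      intro hU
      have haS : a ∈ S ∩ nb i := hU (Finset.mem_insert_self _ _)
      have hU' : U ⊆ S ∩ nb i := fun z hz => hU (Finset.mem_insert_of_mem hz)
      have h1 := ihU hU'
      rw [Finset.mem_inter] at haS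
      have hanot : a ∉ U ∪ (S \ nb i) := by
        simp [ha, haS.2]
      have hsub : U ∪ (S \ nb i) ⊆ S := by
        intro z hz
        rcases Finset.mem_union.1 hz with h | h
        · exact (Finset.mem_inter.1 (hU' h)).1
        · exact (Finset.mem_sdiff.1 h).1
      have hlt : (U ∪ (S \ nb i)).card < S.card :=
        Finset.card_lt_card ⟨hsub, fun h => hanot (h haS.1)⟩
      have h2 := ih _ (lt_of_lt_of_le hlt hk) _ (hsub.trans hSI) le_rfl a (hSI haS.1) hanot
      rw [Finset.insert_union, Finset.prod_insert ha, mul_assoc]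
      refine le_trans ?_ h2
      exact mul_le_mul_of_nonneg_left h1 (by linarith [hx1 a])
  have hS : (S ∩ nb i) ∪ (S \ nb i) = S := by
    ext z; simp; tauto
  have h1 := inner _ le_rfl
  rw [hS] at h1
  have h2 := hind i hi (S \ nb i) (Finset.sdiff_subset.trans hSI) Finset.sdiff_disjoint
  have h3 : μ.real (A i ∩ ⋂ j ∈ S, (A j)ᶜ) ≤ μ.real (A i ∩ ⋂ j ∈ S \ nb i, (A j)ᶜ) := by
    refine measureReal_mono (Set.inter_subset_inter_right _ ?_) (measure_ne_top _ _)
    exact Set.biInter_subset_biInter_left (fun z hz => (Finset.mem_sdiff.1 hz).1)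
  have h4 : ∏ j ∈ nb i, (1 - x j) ≤ ∏ j ∈ S ∩ nb i, (1 - x j) := by
    apply Finset.prod_le_prod_of_subset_of_le_one Finset.inter_subset_right
    · intro j _; linarith [hx1 j]
    · intro j _ _; linarith [hx0 j]
  have h5 : μ.real (A i ∩ ⋂ j ∈ S, (A j)ᶜ) ≤ x i * μ.real (⋂ j ∈ S, (A j)ᶜ) := by
    calc _ ≤ _ := h3
      _ = _ := h2
      _ ≤ (x i * ∏ j ∈ S ∩ nb i, (1 - x j)) * μ.real (⋂ j ∈ S \ nb i, (A j)ᶜ) := by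
        apply mul_le_mul_of_nonneg_right _ measureReal_nonneg
        exact (hp i hi).trans (mul_le_mul_of_nonneg_left h4 (hx0 i))
      _ ≤ _ := by
        rw [mul_assoc]
        exact mul_le_mul_of_nonneg_left h1 (hx0 i)
  have h6 : (⋂ j ∈ insert i S, (A j)ᶜ) = (⋂ j ∈ S, (A j)ᶜ) \ A i := by
    rw [Finset.set_biInter_insert, Set.inter_comm]; rfl
  have h7 := measureReal_inter_add_sdiff (μ := μ) (s := ⋂ j ∈ S, (A j)ᶜ) (hA i)
  rw [h6]
  rw [Set.inter_comm] at h7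
  linarith

theorem lll {Ω ι : Type*} [MeasurableSpace Ω] [DecidableEq ι] (μ : Measure Ω)
    [IsProbabilityMeasure μ] (A : ι → Set Ω) (hA : ∀ i, MeasurableSet (A i)) (I : Finset ι)
    (nb : ι → Finset ι) (x : ι → ℝ) (hx0 : ∀ i, 0 ≤ x i) (hx1 : ∀ i, x i < 1)
    (hind : ∀ i ∈ I, ∀ S ⊆ I, Disjoint S (nb i) →
      μ.real (A i ∩ ⋂ j ∈ S, (A j)ᶜ) = μ.real (A i) * μ.real (⋂ j ∈ S, (A j)ᶜ))
    (hp : ∀ i ∈ I, μ.real (A i) ≤ x i * ∏ j ∈ nb i, (1 - x j)) :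
    ∃ ω, ∀ i ∈ I, ω ∉ A i := by
  have key : ∀ S ⊆ I, 0 < μ.real (⋂ j ∈ S, (A j)ᶜ) := by
    intro S
    induction S using Finset.induction_on with
    | empty => intro _; simp
    | insert a S ha ih =>
      intro hS
      have hS' : S ⊆ I := fun z hz => hS (Finset.mem_insert_of_mem hz)
      have := lll_aux μ A hA I nb x hx0 hx1 hind hp _ S hS' le_rfl a
        (hS (Finset.mem_insert_self _ _)) ha
      exact lt_of_lt_of_le (mul_pos (by linarith [hx1 a]) (ih hS')) this
  have h := key I le_rfl
  have hne : (⋂ j ∈ I, (A j)ᶜ).Nonempty := by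
    by_contra hcon
    rw [Set.not_nonempty_iff_eq_empty] at hcon
    rw [hcon] at h
    simp at h
  obtain ⟨ω, hω⟩ := hne
  exact ⟨ω, fun i hi => by simpa using Set.mem_iInter₂.1 hω i hi⟩

theorem indep_cyl {E : Type*} [Fintype E] [DecidableEq E] (ν : Measure Bool)
    [IsProbabilityMeasure ν] (T : Finset E) (A B : Set (E → Bool))
    (hA : ∀ f g : E → Bool, (∀ e ∈ T, f e = g e) → f ∈ A → g ∈ A)
    (hB : ∀ f g : E → Bool, (∀ e ∉ T, f e = g e) → f ∈ B → g ∈ B) :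
    (Measure.pi fun _ : E => ν).real (A ∩ B) =
      (Measure.pi fun _ : E => ν).real A * (Measure.pi fun _ : E => ν).real B := by
  have h := iIndepFun_pi (μ := fun _ : E => ν) (X := fun _ => (id : Bool → Bool))
    (fun _ => aemeasurable_id)
  have h2 := h.indepFun_finset T Tᶜ disjoint_compl_right (fun i => by fun_prop)
  set rA : (E → Bool) → (T → Bool) := fun ω i => id (ω i)
  set rB : (E → Bool) → ((Tᶜ : Finset E) → Bool) := fun ω i => id (ω i)
  have e1 : rA ⁻¹' (rA '' A) = A := by
    apply Set.Subset.antisymm _ (Set.subset_preimage_image _ _)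
    rintro g ⟨f, hf, hfg⟩
    exact hA f g (fun e he => congrFun hfg ⟨e, he⟩) hf
  have e2 : rB ⁻¹' (rB '' B) = B := by
    apply Set.Subset.antisymm _ (Set.subset_preimage_image _ _)
    rintro g ⟨f, hf, hfg⟩
    exact hB f g (fun e he => congrFun hfg ⟨e, by simpa using he⟩) hf
  have h3 := h2.measure_inter_preimage_eq_mul (rA '' A) (rB '' B)
    (Set.toFinite _).measurableSet (Set.toFinite _).measurableSet
  rw [e1, e2] at h3
  simp only [Measure.real]
  rw [h3, ENNReal.toReal_mul]

theorem cyl_prob {E : Type*} [Fintype E] [DecidableEq E] (ν : Measure Bool)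
    [IsProbabilityMeasure ν] (T : Finset E) (b : Bool) :
    (Measure.pi fun _ : E => ν).real {f | ∀ e ∈ T, f e = b} = ν.real {b} ^ T.card := by
  have : {f : E → Bool | ∀ e ∈ T, f e = b} =
      Set.pi Set.univ (fun e => if e ∈ T then {b} else Set.univ) := by
    ext f
    simp only [Set.mem_ofPred_eq, Set.mem_pi, Set.mem_univ, true_imp_iff]
    refine forall_congr' fun e => ?_
    by_cases he : e ∈ T <;> simp [he]
  rw [this]
  simp only [Measure.real]
  rw [Measure.pi_pi, ENNReal.toReal_prod]
  have : ∀ e, (ν (if e ∈ T then {b} else Set.univ)).toReal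
      = if e ∈ T then (ν {b}).toReal else 1 := by
    intro e; split_ifs <;> simp [-Bool.univ_eq, measure_univ]
  simp only [this]
  simp

theorem bernoulli_exists (p : ℝ) (h0 : 0 ≤ p) (h1 : p ≤ 1) :
    ∃ ν : Measure Bool, IsProbabilityMeasure ν ∧ ν.real {true} = p ∧ ν.real {false} = 1 - p := by
  refine ⟨ENNReal.ofReal p • Measure.dirac true + ENNReal.ofReal (1 - p) • Measure.dirac false,
    ⟨?_⟩, ?_, ?_⟩
  · simp [← ENNReal.ofReal_add h0 (sub_nonneg.2 h1)]
  · simp [Measure.real, h0]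
  · simp [Measure.real, h1]

/-- Two-family version of the local lemma. -/
theorem two_family {E : Type*} [Fintype E] [DecidableEq E] (F G : Finset (Finset E))
    (p x y : ℝ) (m D M : ℕ) (hp0 : 0 ≤ p) (hp1 : p ≤ 1) (hx0 : 0 ≤ x) (hx1 : x < 1)
    (hy0 : 0 ≤ y) (hy1 : y < 1)
    (hF : ∀ T ∈ F, T.card = 3) (hG : ∀ T ∈ G, T.card = m)
    (hD : ∀ e : E, (F.filter fun T => e ∈ T).card ≤ D) (hM : G.card ≤ M)
    (h1 : p ^ 3 ≤ x * ((1 - x) ^ (3 * D) * (1 - y) ^ M))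
    (h2 : (1 - p) ^ m ≤ y * ((1 - x) ^ (m * D) * (1 - y) ^ M)) :
    ∃ χ : E → Bool, (∀ T ∈ F, ∃ e ∈ T, χ e = false) ∧ (∀ T ∈ G, ∃ e ∈ T, χ e = true) := by
  obtain ⟨ν, hν, hνt, hνf⟩ := bernoulli_exists p hp0 hp1
  let A : Finset E ⊕ Finset E → Set (E → Bool) :=
    Sum.elim (fun T => {f | ∀ e ∈ T, f e = true}) (fun T => {f | ∀ e ∈ T, f e = false})
  let tt : Finset E ⊕ Finset E → Finset E := Sum.elim id id
  let nb : Finset E ⊕ Finset E → Finset (Finset E ⊕ Finset E) := fun i =>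
    (F.filter fun T => ¬ Disjoint T (tt i)).disjSum (G.filter fun T => ¬ Disjoint T (tt i))
  let xx : Finset E ⊕ Finset E → ℝ := Sum.elim (fun _ => x) (fun _ => y)
  have hAdep : ∀ i, ∀ f g : E → Bool, (∀ e ∈ tt i, f e = g e) → f ∈ A i → g ∈ A i := by
    rintro (T | T) f g hfg hf e he
    · rw [← hfg e he]; exact hf e he
    · rw [← hfg e he]; exact hf e he
  have hcnt : ∀ U : Finset E, (F.filter fun T => ¬ Disjoint T U).card ≤ U.card * D := by
    intro U
    have : (F.filter fun T => ¬ Disjoint T U) ⊆ U.biUnion fun e => F.filter fun T => e ∈ T := by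
      intro T hT
      rw [Finset.mem_filter, Finset.not_disjoint_iff] at hT
      obtain ⟨hT, e, he, heU⟩ := hT
      simp only [Finset.mem_biUnion, Finset.mem_filter]
      exact ⟨e, heU, hT, he⟩
    exact (Finset.card_le_card this).trans (Finset.card_biUnion_le_card_mul _ _ _ fun e _ => hD e)
  have hprod : ∀ i, (1 - x) ^ ((tt i).card * D) * (1 - y) ^ M ≤ ∏ j ∈ nb i, (1 - xx j) := by
    intro i
    simp only [nb, Finset.prod_disjSum, xx, Sum.elim_inl, Sum.elim_inr, Finset.prod_const]
    apply mul_le_mul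
    · exact pow_le_pow_of_le_one (by linarith) (by linarith) (hcnt _)
    · exact pow_le_pow_of_le_one (by linarith) (by linarith)
        ((Finset.card_filter_le _ _).trans hM)
    · apply pow_nonneg; linarith
    · apply pow_nonneg; linarith
  obtain ⟨ω, hω⟩ := lll (Measure.pi fun _ : E => ν) A (fun i => (Set.toFinite _).measurableSet)
    (F.disjSum G) nb xx (by rintro (T | T) <;> simpa [xx]) (by rintro (T | T) <;> simpa [xx])
    (by
      intro i hi S hS hdis
      apply indep_cyl ν (tt i) _ _ (hAdep i)
      intro f g hfg hf
      rw [Set.mem_iInter₂] at hf ⊢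
      intro j hj hgj
      refine hf j hj (hAdep j g f ?_ hgj)
      intro e he
      refine (hfg e fun hei => ?_).symm
      refine Finset.disjoint_left.1 hdis hj ?_
      have hjI := hS hj
      rcases j with T | T
      · simp only [nb, Finset.inl_mem_disjSum, Finset.mem_filter, Finset.not_disjoint_iff] at hjI ⊢
        exact ⟨hjI, e, he, hei⟩
      · simp only [nb, Finset.inr_mem_disjSum, Finset.mem_filter, Finset.not_disjoint_iff] at hjI ⊢
        exact ⟨hjI, e, he, hei⟩)
    (by
      rintro (T | T) hi
      · rw [Finset.inl_mem_disjSum] at hi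
        have := cyl_prob ν T true
        rw [hνt, hF T hi] at this
        refine (this.le.trans h1).trans (mul_le_mul_of_nonneg_left ?_ hx0)
        have := hprod (Sum.inl T)
        simpa only [tt, Sum.elim_inl, id, hF T hi] using this
      · rw [Finset.inr_mem_disjSum] at hi
        have := cyl_prob ν T false
        rw [hνf, hG T hi] at this
        refine (this.le.trans h2).trans (mul_le_mul_of_nonneg_left ?_ hy0)
        have := hprod (Sum.inr T)
        simpa only [tt, Sum.elim_inr, id, hG T hi] using this)
  refine ⟨ω, fun T hT => ?_, fun T hT => ?_⟩
  · have := hω (Sum.inl T) (by simpa using hT)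
    simpa [A] using this
  · have := hω (Sum.inr T) (by simpa using hT)
    simpa [A] using this

/-- The triples `{v,a,b}` with `a ≠ b` in `S`. -/
def starTriples {N : ℕ} (v : Fin N) (S : Finset (Fin N)) : Finset (Finset (Fin N)) :=
  (S.powersetCard 2).image (insert v)

theorem card_starTriples {N : ℕ} (v : Fin N) (S : Finset (Fin N)) (hv : v ∉ S) :
    (starTriples v S).card = S.card.choose 2 := by
  rw [starTriples, Finset.card_image_of_injOn, Finset.card_powersetCard]
  intro P hP Q hQ h
  have hP' : v ∉ P := fun h => hv ((Finset.mem_powersetCard.1 hP).1 h)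
  have hQ' : v ∉ Q := fun h => hv ((Finset.mem_powersetCard.1 hQ).1 h)
  have : (insert v P).erase v = (insert v Q).erase v := by
    rw [h]
  rwa [Finset.erase_insert hP', Finset.erase_insert hQ'] at this

/-- The family of stars with `k` leaves. -/
def starFam (N k : ℕ) : Finset (Finset (Finset (Fin N))) :=
  (((Finset.univ : Finset (Fin N)) ×ˢ (Finset.univ.powersetCard k)).filter
    fun q => q.1 ∉ q.2).image fun q => starTriples q.1 q.2

theorem mem_starFam {N k : ℕ} {T : Finset (Finset (Fin N))} :
    T ∈ starFam N k ↔ ∃ v S, v ∉ S ∧ S.card = k ∧ starTriples v S = T := by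
  simp only [starFam, Finset.mem_image, Finset.mem_filter, Finset.mem_product, Finset.mem_univ,
    true_and, Finset.mem_powersetCard, Finset.subset_univ, Prod.exists]
  constructor
  · rintro ⟨v, S, ⟨h1, h2⟩, h3⟩; exact ⟨v, S, h2, h1, h3⟩
  · rintro ⟨v, S, h2, h1, h3⟩; exact ⟨v, S, ⟨h1, h2⟩, h3⟩

theorem card_starFam (N k : ℕ) : (starFam N k).card ≤ N ^ (k + 1) := by
  refine Finset.card_image_le.trans ((Finset.card_filter_le _ _).trans ?_)
  rw [Finset.card_product, Finset.card_powersetCard, Finset.card_univ, Fintype.card_fin, pow_succ,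
    mul_comm]
  exact Nat.mul_le_mul_right _ (Nat.choose_le_pow N k)

theorem degree_starFam (N : ℕ) (e : Finset (Fin N)) :
    ((starFam N 3).filter fun T => e ∈ T).card ≤ 3 * N := by
  by_cases he : e.card = 3
  · have : ((starFam N 3).filter fun T => e ∈ T) ⊆
        (e ×ˢ (Finset.univ : Finset (Fin N))).image
          fun q => starTriples q.1 (insert q.2 (e.erase q.1)) := by
      intro T hT
      rw [Finset.mem_filter, mem_starFam] at hT
      obtain ⟨⟨v, S, hv, hS, rfl⟩, heT⟩ := hT
      rw [starTriples, Finset.mem_image] at heT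
      obtain ⟨P, hP, rfl⟩ := heT
      rw [Finset.mem_powersetCard] at hP
      have hvP : v ∉ P := fun h => hv (hP.1 h)
      have hc : (S \ P).card = 1 := by
        rw [Finset.card_sdiff_of_subset hP.1, hS, hP.2]
      obtain ⟨c, hc⟩ := Finset.card_eq_one.1 hc
      rw [Finset.mem_image]
      refine ⟨(v, c), by simp, ?_⟩
      simp only [Finset.erase_insert hvP]
      congr 1
      rw [Finset.insert_eq, ← hc, Finset.sdiff_union_of_subset hP.1]
    refine (Finset.card_le_card this).trans (Finset.card_image_le.trans ?_)
    rw [Finset.card_product, he, Finset.card_univ, Fintype.card_fin]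
  · rw [Finset.filter_false_of_mem]
    · simp
    · intro T hT heT
      rw [mem_starFam] at hT
      obtain ⟨v, S, hv, hS, rfl⟩ := hT
      rw [starTriples, Finset.mem_image] at heT
      obtain ⟨P, hP, rfl⟩ := heT
      rw [Finset.mem_powersetCard] at hP
      apply he
      rw [Finset.card_insert_of_notMem (fun h => hv (hP.1 h)), hP.2]

theorem red_star_of_K4e {N : ℕ} {χ : Finset (Fin N) → Bool} (h : HasRedK4e N χ) :
    ∃ T ∈ starFam N 3, ∀ e ∈ T, χ e = true := by
  obtain ⟨S, hS, h3⟩ := h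
  have hcard : (S.powersetCard 3).card = 4 := by
    rw [Finset.card_powersetCard, hS]; rfl
  have hsum := Finset.card_filter_add_card_filter_not (s := S.powersetCard 3)
    (fun T => χ T = true)
  have hle : ((S.powersetCard 3).filter fun T => ¬ χ T = true).card ≤ 1 := by omega
  rw [Finset.card_le_one] at hle
  obtain ⟨v, hvS, hv⟩ : ∃ v ∈ S, ∀ T ∈ S.powersetCard 3, v ∈ T → χ T = true := by
    by_cases hb : ∃ T₀ ∈ S.powersetCard 3, ¬ χ T₀ = true
    · obtain ⟨T₀, hT₀, hb⟩ := hb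
      have hT' := Finset.mem_powersetCard.1 hT₀
      obtain ⟨v, hvS, hvT⟩ : ∃ v ∈ S, v ∉ T₀ := by
        by_contra hcon
        push Not at hcon
        have := Finset.card_le_card (show S ⊆ T₀ from hcon)
        omega
      refine ⟨v, hvS, fun T hT hvT' => ?_⟩
      by_contra hne
      have := hle T (Finset.mem_filter.2 ⟨hT, hne⟩) T₀ (Finset.mem_filter.2 ⟨hT₀, hb⟩)
      exact hvT (this ▸ hvT')
    · push Not at hb
      obtain ⟨v, hv⟩ : S.Nonempty := Finset.card_pos.1 (by omega)
      exact ⟨v, hv, fun T hT _ => hb T hT⟩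
  refine ⟨starTriples v (S.erase v), mem_starFam.2 ⟨v, S.erase v, by simp, ?_, rfl⟩, ?_⟩
  · rw [Finset.card_erase_of_mem hvS, hS]
  · intro e he
    rw [starTriples, Finset.mem_image] at he
    obtain ⟨P, hP, rfl⟩ := he
    rw [Finset.mem_powersetCard] at hP
    refine hv _ (Finset.mem_powersetCard.2 ⟨?_, ?_⟩) (Finset.mem_insert_self _ _)
    · exact Finset.insert_subset hvS (hP.1.trans (Finset.erase_subset _ _))
    · rw [Finset.card_insert_of_notMem (fun h => by simpa using hP.1 h), hP.2]

theorem blue_star {N n : ℕ} {χ : Finset (Fin N) → Bool} (h : HasBlueStar N n χ) :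
    ∃ T ∈ starFam N n, ∀ e ∈ T, χ e = false := by
  obtain ⟨v, S, hv, hS, h⟩ := h
  refine ⟨starTriples v S, mem_starFam.2 ⟨v, S, hv, hS, rfl⟩, ?_⟩
  intro e he
  rw [starTriples, Finset.mem_image] at he
  obtain ⟨P, hP, rfl⟩ := he
  rw [Finset.mem_powersetCard] at hP
  obtain ⟨a, b, hab, rfl⟩ := Finset.card_eq_two.1 hP.2
  exact h a (hP.1 (by simp)) b (hP.1 (by simp)) hab

theorem exp_le_one_sub {x : ℝ} (h0 : 0 ≤ x) (h1 : x ≤ 1 / 2) : Real.exp (-(2 * x)) ≤ 1 - x := by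
  rw [Real.exp_neg, inv_le_comm₀ (Real.exp_pos _) (by linarith)]
  have h := Real.add_one_le_exp (2 * x)
  refine le_trans ?_ h
  rw [inv_le_iff_one_le_mul₀ (by linarith)]
  nlinarith

/-- The numerical core. -/
theorem coloring_exists (N n : ℕ) (p : ℝ) (hN : 1 ≤ N) (hp0 : 0 ≤ p) (hp1 : p ≤ 1 / 2)
    (hpN : p ^ 2 * N ≤ 1 / 48)
    (hbig : Real.log 4 + (n + 1) * Real.log N ≤ p * (n.choose 2 : ℕ) / 2) :
    ∃ χ : Finset (Fin N) → Bool, ¬ HasRedK4e N χ ∧ ¬ HasBlueStar N n χ := by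
  have hNR : (1 : ℝ) ≤ N := by exact_mod_cast hN
  set Y : ℝ := (N : ℝ) ^ (n + 1) with hY
  have hY1 : 1 ≤ Y := one_le_pow₀ hNR
  set x : ℝ := 4 * p ^ 3 with hx
  set y : ℝ := 1 / (2 * Y) with hy
  have hp3 : 0 ≤ p ^ 3 := by positivity
  have hx0 : 0 ≤ x := by positivity
  have hx1 : x ≤ 1 / 2 := by
    have : p ^ 3 ≤ (1 / 2) ^ 3 := pow_le_pow_left₀ hp0 hp1 3
    rw [hx]; linarith
  have hy0 : 0 ≤ y := by positivity
  have hy1 : y ≤ 1 / 2 := by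
    rw [hy]; apply one_div_le_one_div_of_le <;> linarith
  have hxN : x * N ≤ p / 12 := by
    have := mul_le_mul_of_nonneg_left hpN hp0
    rw [hx]; nlinarith
  have hyM : (1 / 2 : ℝ) ≤ (1 - y) ^ (N ^ (n + 1)) := by
    have h := one_add_mul_le_pow (a := -y) (by linarith) (N ^ (n + 1))
    have e : ((N ^ (n + 1) : ℕ) : ℝ) * -y = - (1 / 2) := by
      push_cast; rw [← hY, hy]; field_simp
    rw [e] at h
    calc (1 / 2 : ℝ) = 1 + - (1 / 2) := by norm_num
      _ ≤ _ := h
      _ = _ := by ring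
  have hxD : (1 / 2 : ℝ) ≤ (1 - x) ^ (3 * (3 * N)) := by
    have h := one_add_mul_le_pow (a := -x) (by linarith) (3 * (3 * N))
    push_cast at h
    have h' : (1 / 2 : ℝ) ≤ 1 + 3 * (3 * N) * -x := by nlinarith
    calc (1 / 2 : ℝ) ≤ _ := h'
      _ ≤ _ := h
      _ = _ := by ring
  set m := n.choose 2 with hm
  have hxm : Real.exp (- (p * m / 2)) ≤ (1 - x) ^ (m * (3 * N)) := by
    have h := pow_le_pow_left₀ (Real.exp_pos _).le (exp_le_one_sub hx0 hx1) (m * (3 * N))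
    refine le_trans ?_ h
    rw [← Real.exp_nat_mul]
    apply Real.exp_le_exp.2
    push_cast
    have hm0 : (0 : ℝ) ≤ m := Nat.cast_nonneg _
    have := mul_le_mul_of_nonneg_left hxN hm0
    nlinarith
  have hpm : (1 - p) ^ m ≤ Real.exp (- (p * m)) := by
    have h := pow_le_pow_left₀ (by linarith) (Real.one_sub_le_exp_neg p) m
    refine h.trans ?_
    rw [← Real.exp_nat_mul]
    apply Real.exp_le_exp.2
    linarith
  have hyE : Real.exp (- (p * m / 2)) ≤ y / 2 := by
    have e : y / 2 = Real.exp (-(Real.log 4 + (n + 1) * Real.log N)) := by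
      rw [Real.exp_neg, Real.exp_add, Real.exp_log (by norm_num)]
      have : ((n : ℝ) + 1) * Real.log N = ((n + 1 : ℕ) : ℝ) * Real.log N := by push_cast; ring
      rw [this, Real.exp_nat_mul, Real.exp_log (by linarith), ← hY, hy]
      field_simp; norm_num
    rw [e]
    apply Real.exp_le_exp.2
    linarith
  obtain ⟨χ, hF, hG⟩ := two_family (starFam N 3) (starFam N n) p x y m (3 * N) (N ^ (n + 1))
    hp0 (by linarith) hx0 (by linarith) hy0 (by linarith)
    (by
      intro T hT
      obtain ⟨v, S, hv, hS, rfl⟩ := mem_starFam.1 hT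
      rw [card_starTriples v S hv, hS]; rfl)
    (by
      intro T hT
      obtain ⟨v, S, hv, hS, rfl⟩ := mem_starFam.1 hT
      rw [card_starTriples v S hv, hS])
    (degree_starFam N) (card_starFam N n)
    (by
      have := mul_le_mul hxD hyM (by norm_num) (by positivity)
      have := mul_le_mul_of_nonneg_left this hx0
      refine le_trans ?_ this
      rw [hx]; linarith)
    (by
      have h1 := mul_le_mul hxm hyM (by norm_num) (le_trans (Real.exp_pos _).le hxm)
      have h2 := mul_le_mul_of_nonneg_left h1 hy0
      refine hpm.trans (le_trans ?_ h2)
      have e : Real.exp (- (p * m)) = Real.exp (- (p * m / 2)) * Real.exp (- (p * m / 2)) := by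
        rw [← Real.exp_add]; congr 1; ring
      rw [e]
      have := mul_le_mul_of_nonneg_left hyE (Real.exp_pos (- (p * m / 2))).le
      linarith)
  refine ⟨χ, fun h => ?_, fun h => ?_⟩
  · obtain ⟨T, hT, hr⟩ := red_star_of_K4e h
    obtain ⟨e, he, hb⟩ := hF T hT
    simp [hr e he] at hb
  · obtain ⟨T, hT, hr⟩ := blue_star h
    obtain ⟨e, he, hb⟩ := hG T hT
    simp [hr e he] at hb

theorem log_small : ∃ n₀ : ℕ, ∀ n : ℕ, n₀ ≤ n → 40 * Real.logb 2 n ≤ n := by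
  have h := Real.isLittleO_log_id_atTop.bound (show (0 : ℝ) < Real.log 2 / 40 by positivity)
  have h2 := tendsto_natCast_atTop_atTop (R := ℝ) |>.eventually h
  obtain ⟨n₀, hn⟩ := Filter.eventually_atTop.1 h2
  refine ⟨n₀, fun n hn' => ?_⟩
  have h3 := hn n hn'
  simp only [id, Real.norm_eq_abs, Nat.abs_cast] at h3
  have h4 := (le_abs_self _).trans h3
  have hl : 0 < Real.log 2 := by positivity
  rw [Real.logb, ← mul_div_assoc, div_le_iff₀ hl]
  linarith

/-- There is `c > 0` such that for all sufficiently large `n`,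
`r(K₄⁽³⁾ − e, Sₙ) ≥ c n² / (log₂ n)²`: with `N = ⌊c n² / (log₂ n)²⌋` there is a
2-coloring of `K_N^(3)` with no red `K₄⁽³⁾ − e` and no blue `Sₙ`. -/
theorem lower_bound_K4e_star :
    ∃ c : ℝ, 0 < c ∧ ∃ n₀ : ℕ, ∀ n : ℕ, n₀ ≤ n →
      ∀ N : ℕ, N = ⌊c * (n : ℝ) ^ 2 / (Real.logb 2 n) ^ 2⌋₊ →
        ∃ χ : Finset (Fin N) → Bool, ¬ HasRedK4e N χ ∧ ¬ HasBlueStar N n χ := by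
  obtain ⟨n₁, hn₁⟩ := log_small
  refine ⟨1 / 19200, by norm_num, max n₁ 3, fun n hn N hN => ?_⟩
  rcases Nat.eq_zero_or_pos N with h0 | hNpos
  · clear hN
    subst h0
    refine ⟨fun _ => true, ?_, ?_⟩
    · rintro ⟨S, hS, -⟩
      have := Finset.card_le_univ S
      simp at this
      simp [this] at hS
    · rintro ⟨v, -⟩
      exact v.elim0
  have hsmall := hn₁ n ((le_max_left _ _).trans hn)
  have hn3 : 3 ≤ n := (le_max_right _ _).trans hn
  have hn3R : (3 : ℝ) ≤ n := by exact_mod_cast hn3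
  set L := Real.logb 2 n with hL
  have hl2 : 0 < Real.log 2 := by positivity
  have hl2' : Real.log 2 ≤ 1 := by linarith [Real.log_two_lt_d9]
  have hlogn : Real.log n = L * Real.log 2 := by rw [hL, Real.logb]; field_simp
  have hL1 : 1 ≤ L := by
    rw [hL, Real.le_logb_iff_rpow_le (by norm_num) (by linarith)]
    norm_num; linarith
  have hNle : (N : ℝ) ≤ 1 / 19200 * (n : ℝ) ^ 2 / L ^ 2 := by
    rw [hN]; exact Nat.floor_le (by positivity)
  have hNR : (1 : ℝ) ≤ N := by exact_mod_cast hNpos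
  have hNL : (N : ℝ) * L ^ 2 ≤ 1 / 19200 * (n : ℝ) ^ 2 := by
    rwa [le_div_iff₀ (by positivity)] at hNle
  have hNn : (N : ℝ) ≤ (n : ℝ) ^ 2 := by
    have : (1 : ℝ) ≤ L ^ 2 := one_le_pow₀ hL1
    nlinarith [sq_nonneg (n : ℝ)]
  have hlogN : Real.log N ≤ 2 * L := by
    have h := Real.log_le_log (by linarith) hNn
    rw [Real.log_pow, hlogn] at h
    push_cast at h
    nlinarith
  have hlog4 : Real.log 4 ≤ 2 := by
    have : (4 : ℝ) = 2 ^ 2 := by norm_num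
    rw [this, Real.log_pow]; push_cast; linarith
  have hn0 : (0 : ℝ) < n := by linarith
  apply coloring_exists N n (20 * L / n) hNpos (by positivity)
  · rw [div_le_iff₀ hn0]; linarith
  · rw [div_pow, div_mul_eq_mul_div, div_le_iff₀ (by positivity)]
    nlinarith
  · rw [Nat.cast_choose_two]
    have e : 20 * L / n * ((n : ℝ) * (n - 1) / 2) / 2 = 5 * L * (n - 1) := by
      field_simp; ring
    rw [e]
    have h1 : ((n : ℝ) + 1) * Real.log N ≤ (n + 1) * (2 * L) :=
      mul_le_mul_of_nonneg_left hlogN (by linarith)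
    nlinarith
end

section
/- There exists a constant c' > 0 such that for all integers n ≥ 2, r(K_4^(3) − e, S_n) ≤ c'·n²/log n; that is, if N ≥ c'·n²/log n, then every 2-coloring of K_N^(3) contains a red copy of K_4^(3) − e or a blue copy of S_n. -/
open Finset in
open scoped Classical in
theorem aks_sum_powerset {V : Type*} (X : Finset V) :
    (2 : ℝ) * ∑ T ∈ X.powerset, (T.card : ℝ) = X.card * 2 ^ X.card := by
  have h : ∑ T ∈ X.powerset, (T.card : ℝ) = ∑ T ∈ X.powerset, ((X \ T).card : ℝ) := by
    refine Finset.sum_bij' (fun T _ => X \ T) (fun T _ => X \ T) ?_ ?_ ?_ ?_ ?_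
    · intro T _; simp
    · intro T _; simp
    · intro T hT; simpa using Finset.sdiff_sdiff_eq_self (Finset.mem_powerset.1 hT)
    · intro T hT; simpa using Finset.sdiff_sdiff_eq_self (Finset.mem_powerset.1 hT)
    · intro T hT
      simp only [Finset.sdiff_sdiff_eq_self (Finset.mem_powerset.1 hT)]
  rw [two_mul]
  nth_rewrite 2 [h]
  rw [← Finset.sum_add_distrib]
  have : ∀ T ∈ X.powerset, (T.card : ℝ) + ((X \ T).card : ℝ) = X.card := by
    intro T hT
    have := Finset.card_sdiff_add_card_eq_card (Finset.mem_powerset.1 hT)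
    rw [← this]; push_cast; ring
  rw [Finset.sum_congr rfl this]
  simp [mul_comm]

theorem aks_numeric (d : ℕ) (hd : 2 ≤ d) (x : ℕ) (t : ℝ) (ht : t = Real.logb 2 d / 16) :
    t * (2 ^ x + 1) ≤ d + x * 2 ^ x / 2 := by
  have hd1 : (2 : ℝ) ≤ d := by exact_mod_cast hd
  have hL1 : 1 ≤ Real.logb 2 d := by
    rw [Real.le_logb_iff_rpow_le (by norm_num) (by linarith)]; simpa using hd1
  set L := Real.logb 2 d with hL
  have hdL : (2 : ℝ) ^ L = d := Real.rpow_logb (by norm_num) (by norm_num) (by linarith)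
  have hx1 : (1 : ℝ) ≤ 2 ^ x := one_le_pow₀ (by norm_num)
  by_cases hx : 2 * t + 1 ≤ x
  · have h2 : (x : ℝ) ≤ 2 ^ x := by exact_mod_cast (Nat.lt_two_pow_self (n := x)).le
    nlinarith
  · push Not at hx
    have hxL : (2 : ℝ) ^ x ≤ 2 * 2 ^ (L / 8) := by
      have : (2 : ℝ) ^ (x : ℝ) ≤ 2 ^ (L / 8 + 1) :=
        Real.rpow_le_rpow_of_exponent_le (by norm_num) (by rw [ht] at hx; linarith)
      rw [Real.rpow_natCast, Real.rpow_add (by norm_num), Real.rpow_one] at this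
      linarith
    have hb : L / 4 ≤ (2 : ℝ) ^ (L / 4) := by
      have h1 := Real.add_one_le_exp (Real.log 2 * (L / 4))
      rw [Real.rpow_def_of_pos (by norm_num)]
      have h2 := Real.quadratic_le_exp_of_nonneg (x := Real.log 2 * (L / 4)) (by have := Real.log_two_gt_d9; positivity)
      have h3 := Real.log_two_gt_d9
      nlinarith [sq_nonneg (Real.log 2 * (L / 4) - 1)]
    have hc : (1 : ℝ) ≤ 2 ^ (L / 8) := Real.one_le_rpow (by norm_num) (by linarith)
    have he : (2 : ℝ) ^ (L / 4) * 2 ^ (L / 8) ≤ 2 ^ L := by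
      rw [← Real.rpow_add (by norm_num)]
      exact Real.rpow_le_rpow_of_exponent_le (by norm_num) (by linarith)
    rw [hdL] at he
    have hnn : (0 : ℝ) ≤ x * 2 ^ x / 2 := by positivity
    have h1 : t * (2 ^ x + 1) ≤ t * (3 * 2 ^ (L / 8)) := by
      apply mul_le_mul_of_nonneg_left <;> linarith
    have h2 : t * 3 ≤ (2 : ℝ) ^ (L / 4) := by rw [ht]; linarith
    have h3 : t * 3 * 2 ^ (L / 8) ≤ (2 : ℝ) ^ (L / 4) * 2 ^ (L / 8) :=
      mul_le_mul_of_nonneg_right h2 (by linarith)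
    linarith

open Finset in
open scoped Classical in
/-- Local estimate: for each vertex the weighted sum over independent sets is large. -/
theorem aks_local {V : Type*} [Fintype V] (r : V → V → Prop)
    (hs : ∀ a b, r a b → r b a) (hi : ∀ a, ¬ r a a)
    (htri : ∀ a b c, r a b → r a c → ¬ r b c)
    (d : ℕ) (t : ℝ) (hnum : ∀ x : ℕ, t * (2 ^ x + 1) ≤ d + x * 2 ^ x / 2) (v : V) :
    0 ≤ ∑ W ∈ univ.filter (fun W : Finset V => ∀ a ∈ W, ∀ b ∈ W, ¬ r a b),
      ((if v ∈ W then (d : ℝ) else 0) + ((W.filter (r v)).card : ℝ) - t) := by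
  set I := univ.filter (fun W : Finset V => ∀ a ∈ W, ∀ b ∈ W, ¬ r a b) with hI
  let g : Finset V → Finset V := fun W => W.filter (fun a => a ≠ v ∧ ¬ r v a)
  rw [← Finset.sum_fiberwise_of_maps_to (s := I) (t := I.image g) (g := g)
    (fun W hW => mem_image_of_mem g hW)]
  apply Finset.sum_nonneg
  intro Z hZ
  obtain ⟨W₀, hW₀, rfl⟩ := mem_image.1 hZ
  have hW₀' : ∀ a ∈ W₀, ∀ b ∈ W₀, ¬ r a b := by simpa [hI] using hW₀
  set Z := g W₀ with hZdef
  have hZ1 : ∀ a ∈ Z, a ≠ v ∧ ¬ r v a := fun a ha => (mem_filter.1 ha).2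
  have hZ2 : ∀ a ∈ Z, ∀ b ∈ Z, ¬ r a b := fun a ha b hb =>
    hW₀' a (mem_filter.1 ha).1 b (mem_filter.1 hb).1
  let X : Finset V := univ.filter (fun a => r v a ∧ ∀ z ∈ Z, ¬ r a z)
  have hX : ∀ a, a ∈ X ↔ r v a ∧ ∀ z ∈ Z, ¬ r a z := by intro a; simp [X]
  have hfib : I.filter (fun W => g W = Z)
      = insert (insert v Z) (X.powerset.image (fun T => Z ∪ T)) := by
    ext W
    simp only [mem_filter, mem_insert, mem_image, mem_powerset, hI, mem_univ, true_and]
    constructor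
    · rintro ⟨hW, hg⟩
      have hgm : ∀ a, a ∈ Z ↔ a ∈ W ∧ a ≠ v ∧ ¬ r v a := by
        intro a; rw [← hg]; simp [g]
      by_cases hv : v ∈ W
      · left
        ext a
        rw [mem_insert, hgm]
        have := hW v hv a
        by_cases hav : a = v
        · subst hav; simp [hv]
        · tauto
      · right
        refine ⟨W.filter (r v), ?_, ?_⟩
        · intro a ha
          rw [mem_filter] at ha
          rw [hX]
          exact ⟨ha.2, fun z hz => hW a ha.1 z ((hgm z).1 hz).1⟩
        · ext a
          rw [mem_union, hgm, mem_filter]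
          by_cases hav : a = v
          · subst hav; simp [hv]
          · tauto
    · rintro (rfl | ⟨T, hT, rfl⟩)
      · constructor
        · intro a ha b hb hab
          rw [mem_insert] at ha hb
          rcases ha with rfl | ha <;> rcases hb with rfl | hb
          · exact hi _ hab
          · exact (hZ1 b hb).2 hab
          · exact (hZ1 a ha).2 (hs _ _ hab)
          · exact hZ2 a ha b hb hab
        · ext a
          simp only [g, mem_filter, mem_insert]
          have := hZ1 a
          tauto
      · constructor
        · intro a ha b hb hab
          rw [mem_union] at ha hb
          rcases ha with ha | ha <;> rcases hb with hb | hb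
          · exact hZ2 a ha b hb hab
          · exact ((hX b).1 (hT hb)).2 a ha (hs _ _ hab)
          · exact ((hX a).1 (hT ha)).2 b hb hab
          · exact htri v a b ((hX a).1 (hT ha)).1 ((hX b).1 (hT hb)).1 hab
        · ext a
          simp only [g, mem_filter, mem_union]
          have h1 := hZ1 a
          have h2 : a ∈ T → r v a := fun h => ((hX a).1 (hT h)).1
          tauto
  rw [hfib]
  have hvZ : v ∉ Z := fun h => (hZ1 v h).1 rfl
  have hvX : v ∉ X := fun h => hi v ((hX v).1 h).1
  rw [sum_insert, sum_image]
  · have hterm : ∀ T ∈ X.powerset,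
        ((if v ∈ Z ∪ T then (d : ℝ) else 0) + (((Z ∪ T).filter (r v)).card : ℝ) - t)
          = (T.card : ℝ) - t := by
      intro T hT
      have hT := mem_powerset.1 hT
      have h1 : v ∉ Z ∪ T := by
        rw [mem_union]; rintro (h | h)
        · exact hvZ h
        · exact hvX (hT h)
      have h2 : (Z ∪ T).filter (r v) = T := by
        ext a
        simp only [mem_filter, mem_union]
        have h1 := hZ1 a
        have h2 : a ∈ T → r v a := fun h => ((hX a).1 (hT h)).1
        tauto
      rw [if_neg h1, h2]; ring
    rw [sum_congr rfl hterm, sum_sub_distrib]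
    have h3 := aks_sum_powerset X
    have h4 : ((insert v Z).filter (r v)).card = 0 := by
      rw [card_eq_zero, filter_eq_empty_iff]
      intro a ha
      rcases mem_insert.1 ha with rfl | ha
      · exact hi _
      · exact (hZ1 a ha).2
    rw [h4, if_pos (mem_insert_self _ _)]
    have h5 := hnum X.card
    simp only [sum_const, card_powerset, nsmul_eq_mul]
    push_cast
    linarith
  · intro T hT T' hT' h
    have key : ∀ S ⊆ X, (Z ∪ S).filter (r v) = S := by
      intro S hS
      ext a
      simp only [mem_filter, mem_union]
      have h1 := hZ1 a
      have h2 : a ∈ S → r v a := fun h => ((hX a).1 (hS h)).1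
      tauto
    have hT := mem_powerset.1 (mem_coe.1 hT)
    have hT' := mem_powerset.1 (mem_coe.1 hT')
    rw [← key T hT, ← key T' hT']
    simp only at h
    rw [h]
  · intro h
    obtain ⟨T, hT, h⟩ := mem_image.1 h
    have : v ∈ Z ∪ T := by rw [h]; exact mem_insert_self _ _
    rcases mem_union.1 this with h | h
    · exact hvZ h
    · exact hvX (mem_powerset.1 hT h)

open Finset in
open scoped Classical in
theorem aks_main {V : Type*} [Fintype V] (r : V → V → Prop)
    (hs : ∀ a b, r a b → r b a) (hi : ∀ a, ¬ r a a)
    (htri : ∀ a b c, r a b → r a c → ¬ r b c)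
    (d : ℕ) (hd : 2 ≤ d) (hdeg : ∀ v, (univ.filter (r v)).card ≤ d)
    (hind : ∀ W : Finset V, (∀ a ∈ W, ∀ b ∈ W, ¬ r a b) → W.card ≤ d) :
    (Fintype.card V : ℝ) * Real.logb 2 d ≤ 32 * (d : ℝ) ^ 2 := by
  obtain ⟨t, ht⟩ : ∃ t : ℝ, t = Real.logb 2 d / 16 := ⟨_, rfl⟩
  have hloc := aks_local r hs hi htri d t (fun x => aks_numeric d hd x t ht)
  set I := univ.filter (fun W : Finset V => ∀ a ∈ W, ∀ b ∈ W, ¬ r a b) with hI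
  have hpos : (0 : ℝ) < I.card := by
    have : ∅ ∈ I := by simp [hI]
    exact_mod_cast card_pos.2 ⟨_, this⟩
  have h0 := sum_nonneg (fun v (_ : v ∈ (univ : Finset V)) => hloc v)
  rw [sum_comm] at h0
  have hW : ∀ W ∈ I, ∑ v : V, ((if v ∈ W then (d : ℝ) else 0)
      + ((W.filter (r v)).card : ℝ) - t) ≤ 2 * (d : ℝ) ^ 2 - Fintype.card V * t := by
    intro W hW
    have hc : (W.card : ℝ) ≤ d := by
      exact_mod_cast hind W (by simpa [hI] using hW)
    rw [sum_sub_distrib, sum_add_distrib]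
    have e1 : ∑ v : V, (if v ∈ W then (d : ℝ) else 0) = W.card * d := by
      rw [← sum_filter]; simp
    have e2 : ∑ v : V, ((W.filter (r v)).card : ℝ) ≤ W.card * d := by
      have : ∑ v : V, ((W.filter (r v)).card : ℝ)
          = ∑ w ∈ W, ((univ.filter (r w)).card : ℝ) := by
        simp only [card_filter, Nat.cast_sum]
        rw [sum_comm]
        refine sum_congr rfl fun w _ => sum_congr rfl fun v _ => ?_
        have : r v w ↔ r w v := ⟨hs _ _, hs _ _⟩
        simp [this]
      rw [this]
      calc ∑ w ∈ W, ((univ.filter (r w)).card : ℝ) ≤ ∑ w ∈ W, (d : ℝ) :=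
            sum_le_sum fun w _ => by exact_mod_cast hdeg w
        _ = W.card * d := by simp
    have e3 : ∑ v : V, t = Fintype.card V * t := by simp
    rw [e1, e3]
    have : (W.card : ℝ) * d ≤ d * d := mul_le_mul_of_nonneg_right hc (by positivity)
    nlinarith
  have h1 := h0.trans (sum_le_sum hW)
  rw [sum_const, nsmul_eq_mul] at h1
  have h2 := nonneg_of_mul_nonneg_right h1 hpos
  rw [ht] at h2
  linarith

open Finset in
open scoped Classical in
theorem upper_bound_aux :
    ∃ c' : ℝ, 0 < c' ∧ ∀ n : ℕ, 2 ≤ n →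
      ∀ N : ℕ, c' * (n : ℝ) ^ 2 / Real.logb 2 n ≤ N →
        ∀ χ : Finset (Fin N) → Bool, HasRedK4e N χ ∨ HasBlueStar N n χ := by
  refine ⟨33, by norm_num, ?_⟩
  intro n hn N hN χ
  by_contra hcon
  push Not at hcon
  obtain ⟨hred, hblue⟩ := hcon
  have hn1 : (2 : ℝ) ≤ n := by exact_mod_cast hn
  have hL : 0 < Real.logb 2 n := Real.logb_pos (by norm_num) (by linarith)
  have hNpos : 0 < N := by
    have : (0 : ℝ) < N := lt_of_lt_of_le (by positivity) hN
    exact_mod_cast this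
  let v : Fin N := ⟨0, hNpos⟩
  obtain ⟨r, hr⟩ : ∃ r : Fin N → Fin N → Prop, ∀ a b, r a b ↔
      (a ≠ b ∧ a ≠ v ∧ b ≠ v ∧ χ {v, a, b} = true) := ⟨_, fun _ _ => Iff.rfl⟩
  -- independent sets avoiding `v` are small
  have hsmall : ∀ W : Finset (Fin N), v ∉ W → (∀ a ∈ W, ∀ b ∈ W, ¬ r a b) → W.card < n := by
    intro W hv hW
    by_contra hc
    push Not at hc
    obtain ⟨S, hSW, hS⟩ := exists_subset_card_eq hc
    refine hblue ⟨v, S, fun h => hv (hSW h), hS, ?_⟩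
    intro a ha b hb hab
    have := hW a (hSW ha) b (hSW hb)
    by_contra h
    refine this ((hr a b).2 ⟨hab, ?_, ?_, by simpa using h⟩)
    · rintro rfl; exact hv (hSW ha)
    · rintro rfl; exact hv (hSW hb)
  have htri : ∀ a b c, r a b → r a c → ¬ r b c := by
    intro a b c r1 r2 r3
    obtain ⟨hab, hav, hbv, h1⟩ := (hr _ _).1 r1
    obtain ⟨hac, -, hcv, h2⟩ := (hr _ _).1 r2
    obtain ⟨hbc, -, -, h3⟩ := (hr _ _).1 r3
    apply hred
    refine ⟨{v, a, b, c}, ?_, ?_⟩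
    · rw [card_insert_of_notMem, card_insert_of_notMem, card_insert_of_notMem] <;>
        simp [*, Ne.symm hav, Ne.symm hbv, Ne.symm hcv]
    · have hsub : ({{v, a, b}, {v, a, c}, {v, b, c}} : Finset (Finset (Fin N)))
          ⊆ (({v, a, b, c} : Finset (Fin N)).powersetCard 3).filter fun T => χ T = true := by
        have c3 : ∀ x y : Fin N, x ≠ v → y ≠ v → x ≠ y → ({v, x, y} : Finset (Fin N)).card = 3 := by
          intro x y hx hy hxy
          exact card_eq_three.2 ⟨v, x, y, hx.symm, hy.symm, hxy, rfl⟩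
        intro T hT
        simp only [mem_insert, mem_singleton] at hT
        rw [mem_filter, mem_powersetCard]
        rcases hT with rfl | rfl | rfl
        · exact ⟨⟨by intro z; simp; tauto, c3 _ _ hav hbv hab⟩, h1⟩
        · exact ⟨⟨by intro z; simp; tauto, c3 _ _ hav hcv hac⟩, h2⟩
        · exact ⟨⟨by intro z; simp; tauto, c3 _ _ hbv hcv hbc⟩, h3⟩
      refine le_trans (le_of_eq ?_) (card_le_card hsub)
      symm
      refine card_eq_three.2 ⟨_, _, _, ?_, ?_, ?_, rfl⟩
      · intro h
        have : b ∈ ({v, a, c} : Finset (Fin N)) := by rw [← h]; simp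
        simp [hbv, hab.symm, hbc] at this
      · intro h
        have : a ∈ ({v, b, c} : Finset (Fin N)) := by rw [← h]; simp
        simp [hav, hab, hac] at this
      · intro h
        have : a ∈ ({v, b, c} : Finset (Fin N)) := by rw [← h]; simp
        simp [hav, hab, hac] at this
  have key := aks_main r ?_ ?_ htri n hn ?_ ?_
  · rw [Fintype.card_fin] at key
    rw [div_le_iff₀ hL] at hN
    nlinarith
  · intro a b hab
    obtain ⟨h1, h2, h3, h4⟩ := (hr _ _).1 hab
    exact (hr _ _).2 ⟨h1.symm, h3, h2, by rw [pair_comm b a]; exact h4⟩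
  · exact fun a h => ((hr _ _).1 h).1 rfl
  · intro u
    refine (hsmall _ ?_ ?_).le
    · intro h; exact ((hr _ _).1 (mem_filter.1 h).2).2.2.1 rfl
    · intro a ha b hb
      exact htri u a b (mem_filter.1 ha).2 (mem_filter.1 hb).2
  · intro W hW
    have := hsmall (W.erase v) (by simp)
      (fun a ha b hb => hW a (mem_of_mem_erase ha) b (mem_of_mem_erase hb))
    have h2 := pred_card_le_card_erase (s := W) (a := v)
    omega

/-- There is `c' > 0` such that for all `n ≥ 2`, `r(K₄⁽³⁾ − e, Sₙ) ≤ c' n² / log₂ n`: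
if `N ≥ c' n² / log₂ n` then every 2-coloring of `K_N^(3)` contains a red
`K₄⁽³⁾ − e` or a blue `Sₙ`. -/
theorem upper_bound_K4e_star :
    ∃ c' : ℝ, 0 < c' ∧ ∀ n : ℕ, 2 ≤ n →
      ∀ N : ℕ, c' * (n : ℝ) ^ 2 / Real.logb 2 n ≤ N →
        ∀ χ : Finset (Fin N) → Bool, HasRedK4e N χ ∨ HasBlueStar N n χ := upper_bound_aux
end

section
/- There exists a constant c > 0 such that for all sufficiently large n, r(K_4^(3), S_n) ≥ 2^{c·(log n)²}; that is, there exists a 2-coloring of K_N^(3) with N = ⌊2^{c·(log n)²}⌋ that contains no red copy of K_4^(3) and no blue copy of S_n. -/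
/-- A red copy of `K_s^(3)`: an `s`-element vertex set all of whose 3-element subsets
are red (red = `true`). -/
def HasRedClique3 (N s : ℕ) (χ : Finset (Fin N) → Bool) : Prop :=
  ∃ S : Finset (Fin N), S.card = s ∧ ∀ T ⊆ S, T.card = 3 → χ T = true

open Finset in
lemma code_exists (N p A K : ℕ) [Fact p.Prime] (hN : N ≤ p ^ A) (hK : K ≤ p) :
    ∃ ε : Fin N → Fin K → ZMod p, ∀ x y, x ≠ y →
      (univ.filter fun l => ε x l = ε y l).card ≤ A := by
  classical
  have hc : Fintype.card (Fin N) ≤ Fintype.card (Fin A → ZMod p) := by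
    simp [ZMod.card, hN]
  obtain ⟨g⟩ := Function.Embedding.nonempty_of_card_le hc
  let P : Fin N → Polynomial (ZMod p) := fun x =>
    ∑ i : Fin A, Polynomial.C (g x i) * Polynomial.X ^ (i : ℕ)
  have hdeg : ∀ x, (P x).degree < (A : ℕ) := by
    intro x
    refine (Polynomial.degree_sum_le _ _).trans_lt ?_
    rw [Finset.sup_lt_iff (by exact WithBot.bot_lt_coe A)]
    intro i _
    refine (Polynomial.degree_C_mul_X_pow_le _ _).trans_lt ?_
    exact_mod_cast i.2
  have hcoeff : ∀ x (i : Fin A), (P x).coeff i = g x i := by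
    intro x i
    simp only [P, Polynomial.finsetSum_coeff, Polynomial.coeff_C_mul_X_pow]
    rw [Finset.sum_eq_single i]
    · simp
    · intro b _ hb
      rw [if_neg]
      intro h
      exact hb (Fin.ext h.symm)
    · simp
  refine ⟨fun x l => (P x).eval ((l : ℕ) : ZMod p), ?_⟩
  intro x y hxy
  by_contra hcard
  push Not at hcard
  apply hxy
  apply g.injective
  have hPP : P x = P y := by
    refine Polynomial.eq_of_degrees_lt_of_eval_index_eq
      (univ.filter fun l : Fin K => (P x).eval ((l : ℕ) : ZMod p) = (P y).eval ((l : ℕ) : ZMod p))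
      (v := fun l : Fin K => ((l : ℕ) : ZMod p)) ?_ ?_ ?_ ?_
    · intro a _ b _ hab
      have := (ZMod.natCast_eq_natCast_iff' _ _ _).1 hab
      rw [Nat.mod_eq_of_lt (a.2.trans_le hK), Nat.mod_eq_of_lt (b.2.trans_le hK)] at this
      exact Fin.ext this
    · exact (hdeg x).trans (by exact_mod_cast hcard)
    · exact (hdeg y).trans (by exact_mod_cast hcard)
    · intro i hi
      exact (mem_filter.1 hi).2
  funext i
  rw [← hcoeff x i, ← hcoeff y i, hPP]

open Finset in
lemma exists_omega {P Ω Θ : Type*} [Fintype P] [DecidableEq P] [Fintype Ω] [DecidableEq Ω]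
    [Nonempty Ω] [Fintype Θ] (Q : Θ → Finset P) (Good : Θ → P → Finset Ω) (m D : ℕ) (hD : 1 ≤ D)
    (hQ : ∀ θ, (Q θ).card = m)
    (hG : ∀ θ, ∀ z ∈ Q θ, Fintype.card Ω ≤ (Good θ z).card * D)
    (hcount : (Fintype.card Θ : ℝ) * (1 - 1 / (D : ℝ)) ^ m < 1) :
    ∃ ω : P → Ω, ∀ θ, ∃ z ∈ Q θ, ω z ∈ Good θ z := by
  classical
  by_contra hcon
  push Not at hcon
  let B : Θ → Finset (P → Ω) := fun θ =>
    Fintype.piFinset fun z => if z ∈ Q θ then (Good θ z)ᶜ else univ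
  have hsub : (univ : Finset (P → Ω)) ⊆ univ.biUnion B := by
    intro ω _
    obtain ⟨θ, hθ⟩ := hcon ω
    simp only [mem_biUnion, mem_univ, true_and]
    refine ⟨θ, ?_⟩
    simp only [B, Fintype.mem_piFinset]
    intro z
    split_ifs with h
    · simpa using hθ z h
    · simp
  have h1 : Fintype.card (P → Ω) ≤ ∑ θ, (B θ).card := by
    rw [← Finset.card_univ]
    exact (card_le_card hsub).trans card_biUnion_le
  set M : ℝ := (Fintype.card Ω : ℝ) with hM
  have hMpos : 0 < M := by
    rw [hM]; exact_mod_cast Fintype.card_pos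
  have hDpos : (0 : ℝ) < D := by exact_mod_cast hD
  have h2 : ∀ θ, ((B θ).card : ℝ) ≤ M ^ Fintype.card P * (1 - 1 / (D : ℝ)) ^ m := by
    intro θ
    simp only [B, Fintype.card_piFinset, Nat.cast_prod]
    calc ∏ z, (((if z ∈ Q θ then (Good θ z)ᶜ else univ : Finset Ω).card : ℕ) : ℝ)
        ≤ ∏ z, (M * (if z ∈ Q θ then (1 - 1 / (D : ℝ)) else 1)) := by
          apply Finset.prod_le_prod
          · intros; positivity
          · intro z _
            split_ifs with h
            · rw [card_compl, Nat.cast_sub (card_le_univ _), ← hM]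
              have := hG θ z h
              have h3 : M ≤ (Good θ z).card * D := by rw [hM]; exact_mod_cast this
              have h4 : M / D ≤ (Good θ z).card := by
                rw [div_le_iff₀ hDpos]; exact h3
              have : M * (1 - 1 / (D : ℝ)) = M - M / D := by ring
              rw [this]; linarith
            · simp [hM]
      _ = _ := by
          rw [Finset.prod_mul_distrib, Finset.prod_const, Finset.card_univ]
          congr 1
          rw [Finset.prod_ite_mem, univ_inter, Finset.prod_const, hQ]
  have h5 : M ^ Fintype.card P ≤
      (Fintype.card Θ : ℝ) * (M ^ Fintype.card P * (1 - 1 / (D : ℝ)) ^ m) := by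
    have : ((Fintype.card (P → Ω) : ℕ) : ℝ) ≤ ∑ θ, ((B θ).card : ℝ) := by exact_mod_cast h1
    rw [Fintype.card_fun, Nat.cast_pow, ← hM] at this
    refine this.trans ((Finset.sum_le_sum fun θ _ => h2 θ).trans ?_)
    simp
  have h6 : 0 < M ^ Fintype.card P := by positivity
  nlinarith

/-- Redness with apex `v`. -/
def RedAt {V : Type*} {K p : ℕ} (bit : V → Fin K → Bool) (ε : V → Fin K → ZMod p)
    (u : Sym2 V → Fin K) (ω : Sym2 V → ZMod 3 × ZMod p × (Fin K → Bool)) (v x y : V) : Prop :=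
  (ω s(v, x)).1 = (ω s(v, y)).1 ∧ (ω s(x, y)).1 = (ω s(v, x)).1 + 1 ∧
  ε v (u s(x, y)) = (ω s(x, y)).2.1 ∧
  ∀ l, ε x l = ε y l → bit v l = (ω s(x, y)).2.2 l

lemma RedAt.symm {V : Type*} {K p : ℕ} {bit : V → Fin K → Bool} {ε : V → Fin K → ZMod p}
    {u : Sym2 V → Fin K} {ω : Sym2 V → ZMod 3 × ZMod p × (Fin K → Bool)} {v x y : V}
    (h : RedAt bit ε u ω v x y) : RedAt bit ε u ω v y x := by
  obtain ⟨h1, h2, h3, h4⟩ := h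
  refine ⟨h1.symm, ?_, ?_, ?_⟩
  · rw [Sym2.eq_swap, h2, h1]
  · rw [Sym2.eq_swap (a := y)]; exact h3
  · intro l hl
    rw [Sym2.eq_swap (a := y)]; exact h4 l hl.symm

lemma no_c4 {V : Type*} {K p : ℕ} {bit : V → Fin K → Bool} {ε : V → Fin K → ZMod p}
    {u : Sym2 V → Fin K} {ω : Sym2 V → ZMod 3 × ZMod p × (Fin K → Bool)}
    (hu : ∀ x y, x ≠ y → bit x (u s(x, y)) ≠ bit y (u s(x, y)))
    {a b c d : V} (hbc : b ≠ c)
    (h1 : RedAt bit ε u ω a b c) (h2 : RedAt bit ε u ω d b c)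
    (h3 : RedAt bit ε u ω b a d) (h4 : RedAt bit ε u ω c a d) : False := by
  apply hu b c hbc
  have : ε a (u s(b, c)) = ε d (u s(b, c)) := h1.2.2.1.trans h2.2.2.1.symm
  rw [h3.2.2.2 _ this, h4.2.2.2 _ this]


/-- The color analysis when `abc` has apex `a`. -/
lemma no_k4_apex {V : Type*} {K p : ℕ} {bit : V → Fin K → Bool} {ε : V → Fin K → ZMod p}
    {u : Sym2 V → Fin K} {ω : Sym2 V → ZMod 3 × ZMod p × (Fin K → Bool)}
    (hu : ∀ x y, x ≠ y → bit x (u s(x, y)) ≠ bit y (u s(x, y)))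
    {a b c d : V} (hbc : b ≠ c)
    (h1 : RedAt bit ε u ω a b c)
    (h2 : RedAt bit ε u ω a b d ∨ RedAt bit ε u ω b a d ∨ RedAt bit ε u ω d a b)
    (h3 : RedAt bit ε u ω a c d ∨ RedAt bit ε u ω c a d ∨ RedAt bit ε u ω d a c)
    (h4 : RedAt bit ε u ω b c d ∨ RedAt bit ε u ω c b d ∨ RedAt bit ε u ω d b c) : False := by
  have key : ∀ ab ac bc ad bd cd : ZMod 3, ab = ac → bc = ab + 1 →
      ((ab = ad ∧ bd = ab + 1) ∨ (ab = bd ∧ ad = ab + 1) ∨ (ad = bd ∧ ab = ad + 1)) →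
      ((ac = ad ∧ cd = ac + 1) ∨ (ac = cd ∧ ad = ac + 1) ∨ (ad = cd ∧ ac = ad + 1)) →
      ((bc = bd ∧ cd = bc + 1) ∨ (bc = cd ∧ bd = bc + 1) ∨ (bd = cd ∧ bc = bd + 1)) →
      ad = ab + 1 ∧ bd = ab ∧ cd = ab := by
    decide
  have n1 : ∀ t : ZMod 3, t ≠ t + 1 := by decide
  have n2 : ∀ t : ZMod 3, t ≠ t + 1 + 1 := by decide
  have e := fun x y : V => (Sym2.eq_swap : s(x, y) = s(y, x))
  have k := key (ω s(a, b)).1 (ω s(a, c)).1 (ω s(b, c)).1 (ω s(a, d)).1 (ω s(b, d)).1 (ω s(c, d)).1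
    h1.1 h1.2.1
    (by rcases h2 with h | h | h
        · exact Or.inl ⟨h.1, h.2.1⟩
        · refine Or.inr (Or.inl ⟨?_, ?_⟩)
          · rw [e a b]; exact h.1
          · rw [e a b]; exact h.2.1
        · refine Or.inr (Or.inr ⟨?_, ?_⟩)
          · rw [e a d, e b d]; exact h.1
          · rw [e a d]; exact h.2.1)
    (by rcases h3 with h | h | h
        · exact Or.inl ⟨h.1, h.2.1⟩
        · refine Or.inr (Or.inl ⟨?_, ?_⟩)
          · rw [e a c]; exact h.1
          · rw [e a c]; exact h.2.1
        · refine Or.inr (Or.inr ⟨?_, ?_⟩)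
          · rw [e a d, e c d]; exact h.1
          · rw [e a d]; exact h.2.1)
    (by rcases h4 with h | h | h
        · exact Or.inl ⟨h.1, h.2.1⟩
        · refine Or.inr (Or.inl ⟨?_, ?_⟩)
          · rw [e b c]; exact h.1
          · rw [e b c]; exact h.2.1
        · refine Or.inr (Or.inr ⟨?_, ?_⟩)
          · rw [e b d, e c d]; exact h.1
          · rw [e b d]; exact h.2.1)
  obtain ⟨k1, k2, k3⟩ := k
  have g1 := h1.1
  have g2 := h1.2.1
  have r2 : RedAt bit ε u ω b a d := by
    rcases h2 with h | h | h
    · exact absurd (h.1.trans k1) (n1 _)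
    · exact h
    · have := h.1
      rw [e d a, e d b, k1, k2] at this
      exact absurd this.symm (n1 _)
  have r3 : RedAt bit ε u ω c a d := by
    rcases h3 with h | h | h
    · have := h.1
      rw [k1, ← g1] at this
      exact absurd this (n1 _)
    · exact h
    · have := h.1
      rw [e d a, e d c, k1, k3] at this
      exact absurd this.symm (n1 _)
  have r4 : RedAt bit ε u ω d b c := by
    rcases h4 with h | h | h
    · have := h.1
      rw [g2, k2] at this
      exact absurd this.symm (n1 _)
    · have := h.1
      rw [e c b, g2, k3] at this
      exact absurd this.symm (n1 _)
    · exact h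
  exact no_c4 hu hbc h1 r4 r2 r3

lemma no_k4 {V : Type*} {K p : ℕ} {bit : V → Fin K → Bool} {ε : V → Fin K → ZMod p}
    {u : Sym2 V → Fin K} {ω : Sym2 V → ZMod 3 × ZMod p × (Fin K → Bool)}
    (hu : ∀ x y, x ≠ y → bit x (u s(x, y)) ≠ bit y (u s(x, y)))
    {a b c d : V} (hbc : b ≠ c) (hac : a ≠ c) (hab : a ≠ b)
    (h1 : RedAt bit ε u ω a b c ∨ RedAt bit ε u ω b a c ∨ RedAt bit ε u ω c a b)
    (h2 : RedAt bit ε u ω a b d ∨ RedAt bit ε u ω b a d ∨ RedAt bit ε u ω d a b)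
    (h3 : RedAt bit ε u ω a c d ∨ RedAt bit ε u ω c a d ∨ RedAt bit ε u ω d a c)
    (h4 : RedAt bit ε u ω b c d ∨ RedAt bit ε u ω c b d ∨ RedAt bit ε u ω d b c) : False := by
  have s := fun v x y => (RedAt.symm : RedAt bit ε u ω v x y → RedAt bit ε u ω v y x)
  rcases h1 with h | h | h
  · exact no_k4_apex hu hbc h h2 h3 h4
  · refine no_k4_apex hu hac h ?_ h4 h3
    rcases h2 with h | h | h
    · exact Or.inr (Or.inl h)
    · exact Or.inl h
    · exact Or.inr (Or.inr (s _ _ _ h))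
  · refine no_k4_apex hu hab h ?_ ?_ h2
    · rcases h3 with h | h | h
      · exact Or.inr (Or.inl h)
      · exact Or.inl h
      · exact Or.inr (Or.inr (s _ _ _ h))
    · rcases h4 with h | h | h
      · exact Or.inr (Or.inl h)
      · exact Or.inl h
      · exact Or.inr (Or.inr (s _ _ _ h))

open Finset in
lemma core (N K A p n s : ℕ) [Fact p.Prime] (hN : N ≤ p ^ A) (hNK : N ≤ 2 ^ K)
    (hKp : K ≤ p) (hK : 0 < K) (hs : 3 * s ≤ n)
    (hcount : ((N * (3 * N.choose s) : ℕ) : ℝ) *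
      (1 - 1 / ((3 * p * 2 ^ A : ℕ) : ℝ)) ^ (s.choose 2) < 1) :
    ∃ χ : Finset (Fin N) → Bool, ¬ HasRedClique3 N 4 χ ∧ ¬ HasBlueStar N n χ := by
  classical
  have hp : 0 < p := (Fact.out : p.Prime).pos
  obtain ⟨ε, hε⟩ := code_exists N p A K hN hKp
  obtain ⟨bit⟩ : Nonempty (Fin N ↪ (Fin K → Bool)) :=
    Function.Embedding.nonempty_of_card_le (by simpa using hNK)
  have hu0 : ∀ z : Sym2 (Fin N), ∃ l : Fin K, ∀ x y, z = s(x, y) → x ≠ y → bit x l ≠ bit y l := by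
    intro z
    induction z using Sym2.ind with
    | _ x y =>
      by_cases hxy : x = y
      · refine ⟨⟨0, hK⟩, ?_⟩
        intro x' y' h hne
        rw [Sym2.eq_iff] at h
        exfalso
        rcases h with ⟨rfl, rfl⟩ | ⟨rfl, rfl⟩
        · exact hne hxy
        · exact hne hxy.symm
      · have : bit x ≠ bit y := fun h => hxy (bit.injective h)
        obtain ⟨l, hl⟩ := Function.ne_iff.1 this
        refine ⟨l, ?_⟩
        intro x' y' h hne
        rw [Sym2.eq_iff] at h
        rcases h with ⟨rfl, rfl⟩ | ⟨rfl, rfl⟩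
        · exact hl
        · exact hl.symm
  choose u hu1 using hu0
  have hu : ∀ x y, x ≠ y → bit x (u s(x, y)) ≠ bit y (u s(x, y)) :=
    fun x y h => hu1 _ x y rfl h
  let Ω := ZMod 3 × ZMod p × (Fin K → Bool)
  let Θ := Fin N × ZMod 3 × {S : Finset (Fin N) // S ∈ powersetCard s univ}
  let Q : Θ → Finset (Sym2 (Fin N)) := fun θ => θ.2.2.1.offDiag.image (fun q => s(q.1, q.2))
  let Good : Θ → Sym2 (Fin N) → Finset Ω := fun θ z => univ.filter fun w =>
    w.1 = θ.2.1 + 1 ∧ ε θ.1 (u z) = w.2.1 ∧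
      ∀ x y, z = s(x, y) → ∀ l, ε x l = ε y l → bit θ.1 l = w.2.2 l
  have hQ : ∀ θ, (Q θ).card = s.choose 2 := by
    rintro ⟨v, α, S, hS⟩
    have := Sym2.card_image_offDiag S
    rw [(mem_powersetCard.1 hS).2] at this
    exact this
  have hG : ∀ θ, ∀ z ∈ Q θ, Fintype.card Ω ≤ (Good θ z).card * (3 * p * 2 ^ A) := by
    rintro ⟨v, α, S, hS⟩ z hz
    obtain ⟨⟨x, y⟩, hxy, rfl⟩ := mem_image.1 hz
    have hne : x ≠ y := (mem_offDiag.1 hxy).2.2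
    let F : Finset (ZMod 3 × ZMod p × (Fin K → Bool)) := {α + 1} ×ˢ ({ε v (u s(x, y))} ×ˢ
      Fintype.piFinset fun l => if ε x l = ε y l then {bit v l} else univ)
    have hsub : F ⊆ Good (v, α, ⟨S, hS⟩) s(x, y) := by
      rintro ⟨w1, w2, w3⟩ hw
      simp only [F, mem_product, mem_singleton, Fintype.mem_piFinset] at hw
      obtain ⟨h1, h2, h3⟩ := hw
      simp only [Good, mem_filter, mem_univ, true_and]
      refine ⟨h1, h2.symm, ?_⟩
      intro x' y' h l hl
      have hl' : ε x l = ε y l := by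
        rw [Sym2.eq_iff] at h
        rcases h with ⟨rfl, rfl⟩ | ⟨rfl, rfl⟩
        · exact hl
        · exact hl.symm
      have := h3 l
      rw [if_pos hl', mem_singleton] at this
      exact this.symm
    have hF : 2 ^ K ≤ F.card * 2 ^ A := by
      simp only [F, card_product, card_singleton, one_mul, Fintype.card_piFinset]
      have e1 : ∀ l : Fin K, (if ε x l = ε y l then ({bit v l} : Finset Bool) else univ).card
          = if ε x l = ε y l then 1 else 2 := by
        intro l; split_ifs <;> simp
      rw [Finset.prod_congr rfl fun l _ => e1 l]
      calc 2 ^ K = (∏ l : Fin K, (if ε x l = ε y l then 1 else 2)) *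
            ∏ l : Fin K, (if ε x l = ε y l then 2 else 1) := by
            rw [← Finset.prod_mul_distrib, Finset.prod_congr rfl (g := fun _ => 2)]
            · simp
            · intro l _; split_ifs <;> rfl
        _ ≤ _ := by
            apply Nat.mul_le_mul_left
            rw [Finset.prod_ite]
            simp only [prod_const, one_pow, mul_one]
            exact Nat.pow_le_pow_right (by norm_num) (hε x y hne)
    have hΩ : Fintype.card Ω = 3 * (p * 2 ^ K) := by
      simp [Ω, ZMod.card]
    rw [hΩ]
    calc 3 * (p * 2 ^ K) ≤ 3 * (p * (F.card * 2 ^ A)) := by gcongr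
      _ = F.card * (3 * p * 2 ^ A) := by ring
      _ ≤ _ := by gcongr
  have hΘ : Fintype.card Θ = N * (3 * N.choose s) := by
    simp only [Θ, Fintype.card_prod, Fintype.card_fin, ZMod.card, Fintype.card_coe,
      card_powersetCard, card_univ]
  have hD : 1 ≤ 3 * p * 2 ^ A := Nat.succ_le_of_lt (by positivity)
  obtain ⟨ω, hω⟩ := exists_omega Q Good (s.choose 2) (3 * p * 2 ^ A) hD hQ hG
    (by rw [hΘ]; exact hcount)
  let χ : Finset (Fin N) → Bool := fun T =>
    decide (∃ v x y, T = {v, x, y} ∧ RedAt bit ε u ω v x y)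
  refine ⟨χ, ?_, ?_⟩
  · rintro ⟨S, hS, hred⟩
    obtain ⟨a, b, c, d, hab, hac, had, hbc, hbd, hcd, rfl⟩ := card_eq_four.1 hS
    have key : ∀ x y z : Fin N, x ≠ y → x ≠ z → y ≠ z →
        ({x, y, z} : Finset (Fin N)) ⊆ {a, b, c, d} →
        RedAt bit ε u ω x y z ∨ RedAt bit ε u ω y x z ∨ RedAt bit ε u ω z x y := by
      intro x y z hxy hxz hyz hsub
      have h := hred _ hsub (card_eq_three.2 ⟨x, y, z, hxy, hxz, hyz, rfl⟩)
      simp only [χ, decide_eq_true_eq] at h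
      obtain ⟨v, x', y', hT, hR⟩ := h
      have hR' := hR.symm
      have hx : x ∈ ({v, x', y'} : Finset (Fin N)) := by rw [← hT]; simp
      have hy : y ∈ ({v, x', y'} : Finset (Fin N)) := by rw [← hT]; simp
      have hz : z ∈ ({v, x', y'} : Finset (Fin N)) := by rw [← hT]; simp
      simp only [mem_insert, mem_singleton] at hx hy hz
      rcases hx with rfl | rfl | rfl <;> rcases hy with rfl | rfl | rfl <;>
        rcases hz with rfl | rfl | rfl <;> first | contradiction | tauto
    refine no_k4 hu hbc hac hab (key a b c hab hac hbc ?_) (key a b d hab had hbd ?_)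
      (key a c d hac had hcd ?_) (key b c d hbc hbd hcd ?_)
    all_goals
      intro t ht
      simp only [mem_insert, mem_singleton] at ht ⊢
      tauto
  · rintro ⟨v, S, hv, hS, hblue⟩
    obtain ⟨α, _, hα⟩ := exists_le_card_fiber_of_mul_le_card_of_maps_to (s := S)
      (t := (univ : Finset (ZMod 3))) (f := fun x => (ω s(v, x)).1) (n := s)
      (fun _ _ => mem_univ _) ⟨0, mem_univ _⟩ (by rw [card_univ, ZMod.card, hS]; exact hs)
    obtain ⟨S', hS', hcard⟩ := exists_subset_card_eq hα
    obtain ⟨z, hz, hzg⟩ := hω (v, α, ⟨S', mem_powersetCard.2 ⟨subset_univ _, hcard⟩⟩)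
    obtain ⟨⟨x, y⟩, hxy, rfl⟩ := mem_image.1 hz
    obtain ⟨hx, hy, hne⟩ := mem_offDiag.1 hxy
    have hx' := mem_filter.1 (hS' hx)
    have hy' := mem_filter.1 (hS' hy)
    have hb := hblue x hx'.1 y hy'.1 hne
    simp only [Good, mem_filter, mem_univ, true_and] at hzg
    obtain ⟨g1, g2, g3⟩ := hzg
    simp only [χ, decide_eq_false_iff_not] at hb
    apply hb
    refine ⟨v, x, y, rfl, ?_, ?_, g2, ?_⟩
    · exact hx'.2.trans hy'.2.symm
    · rw [g1]; rw [show (ω s(v, x)).1 = α from hx'.2]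
    · exact g3 x y rfl

lemma count_bound (a N D : ℕ) (ha : 10 ≤ a) (hN : N ≤ 2 ^ (a ^ 2)) (hD1 : 1 ≤ D)
    (hD : D ≤ 2 ^ (3 * a)) :
    ((N * (3 * N.choose (2 ^ (6 * a))) : ℕ) : ℝ) *
      (1 - 1 / (D : ℝ)) ^ ((2 ^ (6 * a)).choose 2) < 1 := by
  set s := 2 ^ (6 * a) with hs
  have hDpos : (0 : ℝ) < D := by exact_mod_cast hD1
  have hDge1 : (1 : ℝ) ≤ D := by exact_mod_cast hD1
  set T : ℕ := a ^ 2 * (s + 1) + 3 with hT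
  -- the exponent is at least `D * T`
  have h1 : D * T ≤ s.choose 2 := by
    have ha2 : a ^ 2 ≤ 2 ^ (2 * a) := by
      rw [mul_comm, pow_mul]
      exact Nat.pow_le_pow_left (Nat.lt_two_pow_self).le 2
    have e4 : 16 ≤ 2 ^ a := by
      calc 16 = 2 ^ 4 := by norm_num
        _ ≤ 2 ^ a := Nat.pow_le_pow_right (by norm_num) (by omega)
    set X := 2 ^ a with hX
    have es : s = X ^ 6 := by rw [hs, hX, ← pow_mul]; ring_nf
    have ed : D ≤ X ^ 3 := by rw [hX, ← pow_mul]; convert hD using 2; ring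
    have ea : a ^ 2 ≤ X ^ 2 := by rw [hX, ← pow_mul]; convert ha2 using 2; ring
    rw [Nat.choose_two_right, Nat.le_div_iff_mul_le (by norm_num)]
    have hT' : T ≤ X ^ 2 * (s + 1) + 3 := by rw [hT]; gcongr
    have hX6 : 1 ≤ X ^ 6 := Nat.one_le_pow _ _ (by omega)
    calc D * T * 2 ≤ X ^ 3 * (X ^ 2 * (s + 1) + 3) * 2 := by gcongr
      _ ≤ s * (s - 1) := by
        rw [es]
        obtain ⟨y, hy⟩ : ∃ y, X ^ 6 = y + 1 := ⟨X ^ 6 - 1, by omega⟩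
        have h3 : X ^ 3 * (X ^ 2 * (X ^ 6 + 1) + 3) * 2 ≤ 8 * X ^ 11 := by
          have q1 : X ^ 5 ≤ X ^ 11 := Nat.pow_le_pow_right (by omega) (by norm_num)
          have q2 : X ^ 3 ≤ X ^ 11 := Nat.pow_le_pow_right (by omega) (by norm_num)
          nlinarith
        have h4 : 16 * X ^ 11 ≤ X ^ 12 := by
          rw [pow_succ X 11, mul_comm]; gcongr
        have h5 : X ^ 6 * (X ^ 6 - 1) = X ^ 12 - X ^ 6 := by
          rw [Nat.mul_sub, ← pow_add]; simp
        have h6 : X ^ 6 ≤ X ^ 11 := Nat.pow_le_pow_right (by omega) (by norm_num)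
        omega
  have h0 : (0 : ℝ) ≤ 1 - 1 / (D : ℝ) := by
    rw [sub_nonneg, div_le_one hDpos]; exact hDge1
  have h01 : 1 - 1 / (D : ℝ) ≤ 1 := by
    have : 0 ≤ 1 / (D : ℝ) := by positivity
    linarith
  have hhalf : (1 - 1 / (D : ℝ)) ^ D ≤ 1 / 2 := by
    have b1 : (1 - 1 / (D : ℝ)) ^ D ≤ Real.exp (-1) := by
      calc (1 - 1 / (D : ℝ)) ^ D ≤ (Real.exp (-(1 / (D : ℝ)))) ^ D := by
            gcongr
            have := Real.add_one_le_exp (-(1 / (D : ℝ)))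
            linarith
        _ = Real.exp (-1) := by
            rw [← Real.exp_nat_mul]
            congr 1
            field_simp
    refine b1.trans ?_
    rw [Real.exp_neg, ← one_div]
    have := Real.add_one_le_exp (1 : ℝ)
    apply one_div_le_one_div_of_le (by norm_num)
    linarith
  have h2 : (1 - 1 / (D : ℝ)) ^ (s.choose 2) ≤ (1 / 2) ^ T := by
    calc (1 - 1 / (D : ℝ)) ^ (s.choose 2) ≤ (1 - 1 / (D : ℝ)) ^ (D * T) :=
          pow_le_pow_of_le_one h0 h01 h1
      _ = ((1 - 1 / (D : ℝ)) ^ D) ^ T := pow_mul _ _ _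
      _ ≤ _ := by gcongr
  have h3 : N * (3 * N.choose s) < 2 ^ T := by
    have c1 : N.choose s ≤ N ^ s := Nat.choose_le_pow _ _
    calc N * (3 * N.choose s) ≤ 2 ^ (a ^ 2) * (3 * (2 ^ (a ^ 2)) ^ s) := by
          gcongr
          exact c1.trans (Nat.pow_le_pow_left hN s)
      _ = 3 * 2 ^ (a ^ 2 * (s + 1)) := by rw [← pow_mul]; ring
      _ < 8 * 2 ^ (a ^ 2 * (s + 1)) := by
          have : 0 < 2 ^ (a ^ 2 * (s + 1)) := by positivity
          omega
      _ = 2 ^ T := by rw [hT, pow_add]; ring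
  have h3' : ((N * (3 * N.choose s) : ℕ) : ℝ) < 2 ^ T := by exact_mod_cast h3
  have hpos : (0 : ℝ) < (1 / 2) ^ T := by positivity
  calc ((N * (3 * N.choose s) : ℕ) : ℝ) * (1 - 1 / (D : ℝ)) ^ (s.choose 2)
      ≤ ((N * (3 * N.choose s) : ℕ) : ℝ) * (1 / 2) ^ T := by gcongr
    _ < 2 ^ T * (1 / 2) ^ T := by gcongr
    _ = 1 := by rw [← mul_pow]; norm_num

/-- There is `c > 0` such that for all sufficiently large `n`,
`r(K₄⁽³⁾, Sₙ) ≥ 2^(c (log₂ n)²)`: with `N = ⌊2^(c (log₂ n)²)⌋` there is a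
2-coloring of `K_N^(3)` with no red `K₄⁽³⁾` and no blue `Sₙ`. -/
theorem lower_bound_K4_star :
    ∃ c : ℝ, 0 < c ∧ ∃ n₀ : ℕ, ∀ n : ℕ, n₀ ≤ n →
      ∀ N : ℕ, N = ⌊(2 : ℝ) ^ (c * (Real.logb 2 n) ^ 2)⌋₊ →
        ∃ χ : Finset (Fin N) → Bool, ¬ HasRedClique3 N 4 χ ∧ ¬ HasBlueStar N n χ := by
  refine ⟨1 / 100, by norm_num, 2 ^ 80, ?_⟩
  intro n hn N hNdef
  have hn0 : n ≠ 0 := by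
    rintro rfl
    norm_num at hn
  set ℓ := Nat.log 2 n with hℓ
  have hℓ80 : 80 ≤ ℓ := Nat.le_log_of_pow_le (by norm_num) hn
  obtain ⟨a, ha⟩ : ∃ a, a = ℓ / 8 := ⟨_, rfl⟩
  have ha10 : 10 ≤ a := by omega
  have hn1 : 2 ^ (8 * a) ≤ n :=
    (Nat.pow_le_pow_right (by norm_num) (by omega)).trans (Nat.pow_log_le_self 2 hn0)
  have hn2 : n < 2 ^ (8 * a + 8) :=
    (Nat.lt_pow_succ_log_self (by norm_num) n).trans_le
      (Nat.pow_le_pow_right (by norm_num) (by omega))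
  have hN : N ≤ 2 ^ (a ^ 2) := by
    have hlog0 : 0 ≤ Real.logb 2 n :=
      Real.logb_nonneg (by norm_num) (by exact_mod_cast Nat.one_le_iff_ne_zero.2 hn0)
    have hlog : Real.logb 2 n ≤ 8 * a + 8 := by
      rw [Real.logb_le_iff_le_rpow (by norm_num) (by exact_mod_cast Nat.pos_of_ne_zero hn0)]
      have : ((8 : ℝ) * a + 8) = ((8 * a + 8 : ℕ) : ℝ) := by push_cast; ring
      rw [this, Real.rpow_natCast]
      exact_mod_cast hn2.le
    have haR : (10 : ℝ) ≤ a := by exact_mod_cast ha10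
    have hexp : 1 / 100 * (Real.logb 2 n) ^ 2 ≤ ((a ^ 2 : ℕ) : ℝ) := by
      push_cast
      have : Real.logb 2 n ≤ 10 * a := by linarith
      nlinarith
    have : (N : ℝ) ≤ ((2 ^ (a ^ 2) : ℕ) : ℝ) := by
      calc (N : ℝ) ≤ (2 : ℝ) ^ (1 / 100 * (Real.logb 2 n) ^ 2) := by
            rw [hNdef]; exact Nat.floor_le (by positivity)
        _ ≤ (2 : ℝ) ^ (((a ^ 2 : ℕ) : ℝ)) :=
            Real.rpow_le_rpow_of_exponent_le (by norm_num) hexp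
        _ = _ := by rw [Real.rpow_natCast]; push_cast; rfl
    exact_mod_cast this
  obtain ⟨p, hp, hp1, hp2⟩ := Nat.exists_prime_lt_and_le_two_mul (2 ^ a) (by positivity)
  have : Fact p.Prime := ⟨hp⟩
  have e4 : 16 ≤ 2 ^ a := by
    calc 16 = 2 ^ 4 := by norm_num
      _ ≤ 2 ^ a := Nat.pow_le_pow_right (by norm_num) (by omega)
  have haa : a ^ 2 ≤ 2 ^ a := by
    clear * - ha10
    induction a, ha10 using Nat.le_induction with
    | base => norm_num
    | succ k hk ih => rw [pow_succ 2 k]; nlinarith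
  refine core N (a ^ 2) a p n (2 ^ (6 * a)) ?_ hN ?_ (by positivity) ?_ ?_
  · calc N ≤ 2 ^ (a ^ 2) := hN
      _ = (2 ^ a) ^ a := by rw [← pow_mul, sq]
      _ ≤ p ^ a := Nat.pow_le_pow_left hp1.le a
  · omega
  · calc 3 * 2 ^ (6 * a) ≤ 2 ^ (2 * a) * 2 ^ (6 * a) := by
          gcongr
          calc 3 ≤ 2 ^ a := by omega
            _ ≤ 2 ^ (2 * a) := Nat.pow_le_pow_right (by norm_num) (by omega)
      _ = 2 ^ (8 * a) := by rw [← pow_add]; congr 1; ring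
      _ ≤ n := hn1
  · apply count_bound a N _ ha10 hN
    · exact Nat.succ_le_of_lt (by have := hp.pos; positivity)
    · calc 3 * p * 2 ^ a ≤ 3 * (2 * 2 ^ a) * 2 ^ a := by gcongr
        _ = 6 * (2 ^ a * 2 ^ a) := by ring
        _ ≤ 2 ^ a * (2 ^ a * 2 ^ a) := by gcongr; omega
        _ = 2 ^ (3 * a) := by ring
end

section
/- There exists a constant c' > 0 such that for all integers n ≥ 2, r(K_4^(3), S_n) ≤ 2^{c'·n^{2/3}·log n}; that is, if N ≥ 2^{c'·n^{2/3}·log n}, then every 2-coloring of K_N^(3) contains a red copy of K_4^(3) or a blue copy of S_n. -/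
def RIndep {α : Type*} (r : α → α → Prop) (S : Finset α) : Prop :=
  ∀ a ∈ S, ∀ b ∈ S, a ≠ b → ¬ r a b

open Classical in
theorem ramsey_choose {α : Type*} (r : α → α → Prop) (hs : ∀ a b, r a b → r b a) :
    ∀ (m s t : ℕ), s + t = m → ∀ (W : Finset α), (s + t).choose s ≤ W.card →
      (∃ S ⊆ W, S.card = s ∧ ∀ a ∈ S, ∀ b ∈ S, a ≠ b → r a b) ∨
      (∃ S ⊆ W, S.card = t ∧ ∀ a ∈ S, ∀ b ∈ S, a ≠ b → ¬ r a b) := by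
  intro m
  induction m with
  | zero =>
    intro s t h W _
    left
    refine ⟨∅, by simp, ?_, by simp⟩
    simp; omega
  | succ m ih =>
    intro s t h W hW
    rcases s with _ | s
    · left; exact ⟨∅, by simp, by simp, by simp⟩
    rcases t with _ | t
    · right; exact ⟨∅, by simp, by simp, by simp⟩
    have hpos : 0 < W.card := lt_of_lt_of_le (Nat.choose_pos (by omega)) hW
    obtain ⟨v, hv⟩ := Finset.card_pos.mp hpos
    have hch : (s + 1 + (t + 1)).choose (s + 1)
        = (s + (t + 1)).choose s + (s + 1 + t).choose (s + 1) := by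
      have : s + 1 + (t + 1) = (s + (t + 1)) + 1 := by ring
      rw [this, Nat.choose_succ_succ]
      congr 2
      ring
    have hsplit := Finset.card_filter_add_card_filter_not (s := W.erase v) (fun b => r v b)
    have hc := Finset.card_erase_of_mem hv
    by_cases h1 : (s + (t + 1)).choose s ≤ ((W.erase v).filter (fun b => r v b)).card
    · rcases ih s (t + 1) (by omega) _ h1 with ⟨S, hSW, hSc, hS⟩ | ⟨S, hSW, hSc, hS⟩
      · left
        have hmem : ∀ b ∈ S, b ∈ W ∧ b ≠ v ∧ r v b := by
          intro b hb
          have := hSW hb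
          simp at this
          tauto
        refine ⟨insert v S, ?_, ?_, ?_⟩
        · intro x hx
          rcases Finset.mem_insert.mp hx with rfl | hx
          · exact hv
          · exact (hmem x hx).1
        · rw [Finset.card_insert_of_notMem, hSc]
          intro hvS
          exact (hmem v hvS).2.1 rfl
        · intro a ha b hb hab
          rcases Finset.mem_insert.mp ha with rfl | ha' <;>
          rcases Finset.mem_insert.mp hb with rfl | hb'
          · exact absurd rfl hab
          · exact (hmem b hb').2.2
          · exact hs _ _ (hmem a ha').2.2
          · exact hS a ha' b hb' hab
      · right
        exact ⟨S, hSW.trans ((Finset.filter_subset _ _).trans (Finset.erase_subset _ _)), hSc, hS⟩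
    · have h2 : (s + 1 + t).choose (s + 1) ≤ ((W.erase v).filter (fun b => ¬ r v b)).card := by
        omega
      rcases ih (s + 1) t (by omega) _ h2 with ⟨S, hSW, hSc, hS⟩ | ⟨S, hSW, hSc, hS⟩
      · left
        exact ⟨S, hSW.trans ((Finset.filter_subset _ _).trans (Finset.erase_subset _ _)), hSc, hS⟩
      · right
        have hmem : ∀ b ∈ S, b ∈ W ∧ b ≠ v ∧ ¬ r v b := by
          intro b hb
          have := hSW hb
          simp at this
          tauto
        refine ⟨insert v S, ?_, ?_, ?_⟩
        · intro x hx
          rcases Finset.mem_insert.mp hx with rfl | hx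
          · exact hv
          · exact (hmem x hx).1
        · rw [Finset.card_insert_of_notMem, hSc]
          intro hvS
          exact (hmem v hvS).2.1 rfl
        · intro a ha b hb hab
          rcases Finset.mem_insert.mp ha with rfl | ha' <;>
          rcases Finset.mem_insert.mp hb with rfl | hb'
          · exact absurd rfl hab
          · exact (hmem b hb').2.2
          · exact fun h => (hmem a ha').2.2 (hs _ _ h)
          · exact hS a ha' b hb' hab

theorem small_subsets_card {α : Type*} (I : Finset α) (n t : ℕ) (hn : 1 ≤ n) (hI : I.card ≤ n) :
    (I.powerset.filter (fun X => X.card ≤ t)).card ≤ (t + 1) * n ^ t := by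
  classical
  have hsub : I.powerset.filter (fun X => X.card ≤ t) ⊆
      (Finset.range (t + 1)).biUnion (fun j => I.powersetCard j) := by
    intro X hX
    simp only [Finset.mem_filter, Finset.mem_powerset] at hX
    simp only [Finset.mem_biUnion, Finset.mem_range, Finset.mem_powersetCard]
    exact ⟨X.card, by omega, hX.1, rfl⟩
  refine (Finset.card_le_card hsub).trans ?_
  have := Finset.card_biUnion_le_card_mul (Finset.range (t + 1)) (fun j => I.powersetCard j)
    (n ^ t) (by
      intro j hj
      rw [Finset.card_powersetCard]
      calc I.card.choose j ≤ I.card ^ j := Nat.choose_le_pow _ _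
        _ ≤ n ^ j := Nat.pow_le_pow_left hI j
        _ ≤ n ^ t := Nat.pow_le_pow_right hn (by simp at hj; omega))
  simpa using this

open Classical in
theorem erdos_szemeredi {α : Type*} (r : α → α → Prop) (hs : ∀ a b, r a b → r b a)
    (B : Finset α) (n k t : ℕ) (hn : 1 ≤ n) (hkt : 8 * n ≤ k * (t + 1))
    (hdens : k * ∑ v ∈ B, (B.filter (fun u => r v u)).card ≤ B.card ^ 2)
    (hB1 : 8 * n ≤ B.card)
    (hB2 : 8 * ((t + 1) * n ^ t * (n + (t + 1)).choose n) ≤ B.card) :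
      (∃ S ⊆ B, S.card = n ∧ ∀ a ∈ S, ∀ b ∈ S, a ≠ b → r a b) ∨
      (∃ S ⊆ B, S.card = n ∧ ∀ a ∈ S, ∀ b ∈ S, a ≠ b → ¬ r a b) := by
  by_contra hcon
  push Not at hcon
  obtain ⟨hclique, hindep⟩ := hcon
  set M := B.card with hM
  have hMpos : 0 < M := by omega
  set deg : α → ℕ := fun v => (B.filter (fun u => r v u)).card with hdeg
  set B' := B.filter (fun v => k * deg v ≤ 2 * M) with hB'
  set Bb := B.filter (fun v => ¬ k * deg v ≤ 2 * M) with hBb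
  have hsplit : B'.card + Bb.card = M :=
    Finset.card_filter_add_card_filter_not (s := B) (fun v => k * deg v ≤ 2 * M)
  have hbad : Bb.card * 2 ≤ M := by
    have h1 : Bb.card * (2 * M) ≤ ∑ v ∈ Bb, k * deg v := by
      rw [← smul_eq_mul]
      apply Finset.card_nsmul_le_sum
      intro v hv
      have := (Finset.mem_filter.mp hv).2
      omega
    have h2 : ∑ v ∈ Bb, k * deg v ≤ ∑ v ∈ B, k * deg v :=
      Finset.sum_le_sum_of_subset (Finset.filter_subset _ _)
    rw [← Finset.mul_sum (s := B)] at h2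
    have h3 : (Bb.card * 2) * M ≤ M * M := by
      calc (Bb.card * 2) * M = Bb.card * (2 * M) := by ring
        _ ≤ M ^ 2 := h1.trans (h2.trans hdens)
        _ = M * M := by ring
    exact Nat.le_of_mul_le_mul_right h3 hMpos
  -- maximum independent set
  set F := B'.powerset.filter (fun S => RIndep r S) with hF
  have hFne : F.Nonempty := ⟨∅, Finset.mem_filter.mpr ⟨by simp, fun a ha => absurd ha (by simp)⟩⟩
  obtain ⟨I, hIF, hImax⟩ := Finset.exists_max_image F Finset.card hFne
  have hIB' : I ⊆ B' := by
    have := (Finset.mem_filter.mp hIF).1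
    simpa using this
  have hIind := (Finset.mem_filter.mp hIF).2
  have hB'B : B' ⊆ B := Finset.filter_subset _ _
  have hIn : I.card < n := by
    by_contra hge
    push Not at hge
    obtain ⟨S, hSI, hSc⟩ := Finset.exists_subset_card_eq hge
    obtain ⟨a, ha, b, hb, hab, h⟩ := hindep S (hSI.trans (hIB'.trans hB'B)) hSc
    exact hIind a (hSI ha) b (hSI hb) hab h
  set pat : α → Finset α := fun v => I.filter (fun u => r u v) with hpat
  set G := (B' \ I).filter (fun v => (pat v).card ≤ t) with hG
  set Gb := (B' \ I).filter (fun v => ¬ (pat v).card ≤ t) with hGb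
  have hsplit2 : G.card + Gb.card = (B' \ I).card :=
    Finset.card_filter_add_card_filter_not (s := B' \ I) (fun v => (pat v).card ≤ t)
  have hsd : (B' \ I).card + I.card = B'.card := Finset.card_sdiff_add_card_eq_card hIB'
  have hGbad : Gb.card * 4 ≤ M := by
    have h1 : Gb.card * (t + 1) ≤ ∑ v ∈ Gb, (pat v).card := by
      rw [← smul_eq_mul]
      apply Finset.card_nsmul_le_sum
      intro v hv
      have := (Finset.mem_filter.mp hv).2
      omega
    have h2 : ∑ v ∈ Gb, (pat v).card = ∑ u ∈ I, (Gb.filter (fun v => r u v)).card := by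
      simp only [hpat, Finset.card_filter]
      exact Finset.sum_comm
    have hGbB : Gb ⊆ B := (Finset.filter_subset _ _).trans (Finset.sdiff_subset.trans hB'B)
    have h3 : ∑ u ∈ I, (Gb.filter (fun v => r u v)).card ≤ ∑ u ∈ I, deg u :=
      Finset.sum_le_sum fun u _ => Finset.card_le_card (Finset.filter_subset_filter _ hGbB)
    have h4 : k * ∑ u ∈ I, deg u ≤ I.card * (2 * M) := by
      rw [Finset.mul_sum, ← smul_eq_mul]
      apply Finset.sum_le_card_nsmul
      intro u hu
      exact (Finset.mem_filter.mp (hIB' hu)).2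
    have h5 : Gb.card * (8 * n) ≤ n * (2 * M) := by
      calc Gb.card * (8 * n) ≤ Gb.card * (k * (t + 1)) := Nat.mul_le_mul_left _ hkt
        _ = k * (Gb.card * (t + 1)) := by ring
        _ ≤ k * ∑ u ∈ I, deg u := Nat.mul_le_mul_left _ (h1.trans (h2.le.trans h3))
        _ ≤ I.card * (2 * M) := h4
        _ ≤ n * (2 * M) := Nat.mul_le_mul_right _ hIn.le
    have h6 : (Gb.card * 4) * (2 * n) ≤ M * (2 * n) := by linarith
    exact Nat.le_of_mul_le_mul_right h6 (by omega)
  have hGcard : M ≤ 8 * G.card := by omega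
  set P := I.powerset.filter (fun X => X.card ≤ t) with hP
  have hPc : P.card ≤ (t + 1) * n ^ t := small_subsets_card I n t hn hIn.le
  have hmaps : ∀ v ∈ G, pat v ∈ P := by
    intro v hv
    simp only [hP, Finset.mem_filter, Finset.mem_powerset]
    exact ⟨Finset.filter_subset _ _, (Finset.mem_filter.mp hv).2⟩
  have hPne : P.Nonempty := ⟨∅, by simp [hP]⟩
  have hle : P.card * (n + (t + 1)).choose n ≤ G.card := by
    have := Nat.mul_le_mul_right ((n + (t + 1)).choose n) hPc
    omega
  obtain ⟨X, hXP, hXc⟩ :=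
    Finset.exists_le_card_fiber_of_mul_le_card_of_maps_to hmaps hPne hle
  have hWG : (G.filter (fun v => pat v = X)) ⊆ G := Finset.filter_subset _ _
  have hGB' : G ⊆ B' \ I := Finset.filter_subset _ _
  rcases ramsey_choose r hs _ n (t + 1) rfl _ hXc with ⟨S, hSW, hSc, hS⟩ | ⟨J, hJW, hJc, hJ⟩
  · obtain ⟨a, ha, b, hb, hab, h⟩ := hclique S
      (hSW.trans (hWG.trans (hGB'.trans (Finset.sdiff_subset.trans hB'B)))) hSc
    exact h (hS a ha b hb hab)
  · have hXI : X ⊆ I := by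
      have := (Finset.mem_filter.mp hXP).1
      simpa using this
    have hXt : X.card ≤ t := (Finset.mem_filter.mp hXP).2
    have hJB : ∀ v ∈ J, v ∈ B' ∧ v ∉ I ∧ pat v = X := by
      intro v hv
      have h1 := hJW hv
      have h2 := Finset.mem_sdiff.mp (hGB' (hWG h1))
      exact ⟨h2.1, h2.2, (Finset.mem_filter.mp h1).2⟩
    have hno : ∀ u ∈ I \ X, ∀ v ∈ J, ¬ r u v := by
      intro u hu v hv h
      obtain ⟨hu1, hu2⟩ := Finset.mem_sdiff.mp hu
      apply hu2
      rw [← (hJB v hv).2.2]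
      exact Finset.mem_filter.mpr ⟨hu1, h⟩
    have hmem : (I \ X) ∪ J ∈ F := by
      refine Finset.mem_filter.mpr ⟨Finset.mem_powerset.mpr ?_, ?_⟩
      · exact Finset.union_subset (Finset.sdiff_subset.trans hIB') fun v hv => (hJB v hv).1
      · intro a ha b hb hab
        rcases Finset.mem_union.mp ha with ha | ha <;>
        rcases Finset.mem_union.mp hb with hb | hb
        · exact hIind a (Finset.sdiff_subset ha) b (Finset.sdiff_subset hb) hab
        · exact hno a ha b hb
        · exact fun h => hno b hb a ha (hs _ _ h)
        · exact hJ a ha b hb hab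
    have hle2 := hImax _ hmem
    have hdisj : Disjoint (I \ X) J := by
      rw [Finset.disjoint_left]
      intro v hv hvJ
      exact (hJB v hvJ).2.1 (Finset.sdiff_subset hv)
    rw [Finset.card_union_of_disjoint hdisj] at hle2
    have := Finset.card_sdiff_add_card_eq_card hXI
    omega

open Classical in
theorem core_K4_star (N n k t : ℕ) (hn : 1 ≤ n) (hk : 2 ≤ k) (hkt : 8 * n ≤ k * (t + 1))
    (m : ℕ) (hm1 : 8 * n ≤ m)
    (hm2 : 8 * ((t + 1) * n ^ t * (n + (t + 1)).choose n) ≤ m)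
    (hN : (k + n).choose k + ((k + n).choose k) ^ k * m ≤ N)
    (χ : Finset (Fin N) → Bool) : HasRedClique3 N 4 χ ∨ HasBlueStar N n χ := by
  by_contra hcon
  push Not at hcon
  obtain ⟨hred, hblue⟩ := hcon
  set L := (k + n).choose k with hL
  have hLN : L ≤ (Finset.univ : Finset (Fin N)).card := by simp; omega
  obtain ⟨A, -, hA⟩ := Finset.exists_subset_card_eq hLN
  set r : Fin N → Fin N → Fin N → Prop := fun v a b => a ≠ b ∧ χ {v, a, b} = true with hr
  have hrs : ∀ v a b, r v a b → r v b a := by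
    rintro v a b ⟨h1, h2⟩
    refine ⟨h1.symm, ?_⟩
    rw [Finset.pair_comm]
    exact h2
  -- no independent sets in links
  have hlink : ∀ v : Fin N, ∀ S : Finset (Fin N), v ∉ S → S.card = n →
      ¬ (∀ a ∈ S, ∀ b ∈ S, a ≠ b → ¬ r v a b) := by
    intro v S hv hS h
    apply hblue
    refine ⟨v, S, hv, hS, ?_⟩
    intro a ha b hb hab
    have := h a ha b hb hab
    by_contra hx
    exact this ⟨hab, by simpa using hx⟩
  have hcl : ∀ b : Fin N, ∃ K : Finset (Fin N), b ∈ Aᶜ → K ⊆ A ∧ K.card = k ∧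
      ∀ x ∈ K, ∀ y ∈ K, x ≠ y → r b x y := by
    intro b
    by_cases hb : b ∈ Aᶜ
    · have hbA : b ∉ A := by simpa using hb
      rcases ramsey_choose (r b) (hrs b) _ k n rfl A hA.ge with ⟨S, h1, h2, h3⟩ | ⟨S, h1, h2, h3⟩
      · exact ⟨S, fun _ => ⟨h1, h2, h3⟩⟩
      · exact absurd h3 (hlink b S (fun h => hbA (h1 h)) h2)
    · exact ⟨∅, fun h => absurd h hb⟩
  choose f hf using hcl
  have hmaps : ∀ b ∈ Aᶜ, f b ∈ A.powersetCard k := by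
    intro b hb
    exact Finset.mem_powersetCard.mpr ⟨(hf b hb).1, (hf b hb).2.1⟩
  have hAc : Aᶜ.card = N - L := by rw [Finset.card_compl, hA]; simp
  have hPc : (A.powersetCard k).card ≤ L ^ k := by
    rw [Finset.card_powersetCard, hA]
    exact Nat.choose_le_pow _ _
  have hle : (A.powersetCard k).card * m ≤ Aᶜ.card := by
    have := Nat.mul_le_mul_right m hPc
    omega
  have hAcpos : 0 < Aᶜ.card := by
    have : 0 < L ^ k * m := Nat.mul_pos (Nat.pow_pos (Nat.choose_pos (by omega))) (by omega)
    omega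
  obtain ⟨b0, hb0⟩ := Finset.card_pos.mp hAcpos
  obtain ⟨K, hKP, hKm⟩ :=
    Finset.exists_le_card_fiber_of_mul_le_card_of_maps_to hmaps ⟨_, hmaps b0 hb0⟩ hle
  set B := Aᶜ.filter (fun b => f b = K) with hB
  obtain ⟨hKA, hKc⟩ := Finset.mem_powersetCard.mp hKP
  have hBK : ∀ b ∈ B, ∀ x ∈ K, ∀ y ∈ K, x ≠ y → r b x y := by
    intro b hb
    obtain ⟨h1, h2⟩ := Finset.mem_filter.mp hb
    have := (hf b h1).2.2
    rwa [h2] at this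
  have hBnK : ∀ b ∈ B, b ∉ K := by
    intro b hb h
    have := (Finset.mem_filter.mp hb).1
    exact (Finset.mem_compl.mp this) (hKA h)
  have hdisj : ∀ x ∈ K, ∀ y ∈ K, x ≠ y → ∀ b ∈ B, ∀ c ∈ B, r x b c → ¬ r y b c := by
    intro x hx y hy hxy b hb c hc h1 h2
    apply hred
    have hbc := h1.1
    have hxb : x ≠ b := fun h => hBnK b hb (h ▸ hx)
    have hxc : x ≠ c := fun h => hBnK c hc (h ▸ hx)
    have hyb : y ≠ b := fun h => hBnK b hb (h ▸ hy)
    have hyc : y ≠ c := fun h => hBnK c hc (h ▸ hy)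
    have hcard : ({x, y, b, c} : Finset (Fin N)).card = 4 := by
      simp [hxy, hxb, hxc, hyb, hyc, hbc]
    refine ⟨{x, y, b, c}, hcard, ?_⟩
    intro T hT hTc
    have e1 : χ {x, b, c} = true := h1.2
    have e2 : χ {y, b, c} = true := h2.2
    have e3 : χ {b, x, y} = true := (hBK b hb x hx y hy hxy).2
    have e4 : χ {c, x, y} = true := (hBK c hc x hx y hy hxy).2
    have hex : ∃ z ∈ ({x, y, b, c} : Finset (Fin N)), z ∉ T := by
      by_contra hno
      push Not at hno
      have := Finset.card_le_card (show ({x, y, b, c} : Finset (Fin N)) ⊆ T from hno)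
      omega
    obtain ⟨z, hz, hzT⟩ := hex
    have hTe : T = ({x, y, b, c} : Finset (Fin N)).erase z := by
      apply Finset.eq_of_subset_of_card_le
      · intro w hw
        exact Finset.mem_erase.mpr ⟨fun h => hzT (h ▸ hw), hT hw⟩
      · rw [Finset.card_erase_of_mem hz]; omega
    simp only [Finset.mem_insert, Finset.mem_singleton] at hz
    rcases hz with rfl | rfl | rfl | rfl
    · rw [hTe, show ({z, y, b, c} : Finset (Fin N)).erase z = {y, b, c} by
        ext w; simp; grind]
      exact e2
    · rw [hTe, show ({x, z, b, c} : Finset (Fin N)).erase z = {x, b, c} by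
        ext w; simp; grind]
      exact e1
    · rw [hTe, show ({x, y, z, c} : Finset (Fin N)).erase z = {c, x, y} by
        ext w; simp; grind]
      exact e4
    · rw [hTe, show ({x, y, b, z} : Finset (Fin N)).erase z = {b, x, y} by
        ext w; simp; grind]
      exact e3
  -- sparse colour
  have hsum : ∑ x ∈ K, ∑ v ∈ B, (B.filter (fun u => r x v u)).card ≤ B.card ^ 2 := by
    rw [Finset.sum_comm, sq, ← smul_eq_mul (B.card)]
    apply Finset.sum_le_card_nsmul
    intro v hv
    rw [← Finset.card_biUnion]
    · apply Finset.card_le_card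
      intro u hu
      obtain ⟨x, hx, hu⟩ := Finset.mem_biUnion.mp hu
      exact (Finset.mem_filter.mp hu).1
    · intro x hx y hy hxy
      rw [Function.onFun, Finset.disjoint_left]
      intro u hu hu'
      obtain ⟨h1, h2⟩ := Finset.mem_filter.mp hu
      exact hdisj x hx y hy hxy v hv u h1 h2 (Finset.mem_filter.mp hu').2
  have hKne : K.Nonempty := Finset.card_pos.mp (by omega)
  obtain ⟨x, hx, hxmin⟩ := Finset.exists_min_image K
    (fun x => ∑ v ∈ B, (B.filter (fun u => r x v u)).card) hKne
  have hdens : k * ∑ v ∈ B, (B.filter (fun u => r x v u)).card ≤ B.card ^ 2 := by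
    refine le_trans ?_ hsum
    rw [← hKc, ← smul_eq_mul]
    exact Finset.card_nsmul_le_sum _ _ _ hxmin
  rcases erdos_szemeredi (r x) (hrs x) B n k t hn hkt (by convert hdens) (hm1.trans hKm) (hm2.trans hKm) with
    ⟨S, hSB, hSc, hS⟩ | ⟨S, hSB, hSc, hS⟩
  · obtain ⟨y, hy, hyx⟩ := Finset.exists_mem_ne (by omega : 1 < K.card) x
    refine hlink y S (fun h => hBnK y (hSB h) hy) hSc ?_
    intro a ha b hb hab
    exact hdisj x hx y hy hyx.symm a (hSB ha) b (hSB hb) (hS a ha b hb hab)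
  · exact hlink x S (fun h => hBnK x (hSB h) hx) hSc hS

theorem numeric_bounds (n k t : ℕ) (hn : 2 ≤ n) (hk : 2 ≤ k) (hkn : k ≤ n) (ht : t ≤ 4 * n) :
    8 * n ≤ n ^ (5 * t + 11) ∧
    8 * ((t + 1) * n ^ t * (n + (t + 1)).choose n) ≤ n ^ (5 * t + 11) ∧
    (k + n).choose k + ((k + n).choose k) ^ k * n ^ (5 * t + 11) ≤
      n ^ (2 * k ^ 2 + 5 * t + 12) := by
  have h8 : 8 ≤ n ^ 3 := by
    calc 8 = 2 ^ 3 := by norm_num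
      _ ≤ n ^ 3 := Nat.pow_le_pow_left hn 3
  have hn1 : 1 ≤ n := by omega
  have h5 : 5 * n + 1 ≤ n ^ 4 := by
    have : n ^ 4 = n ^ 3 * n := by ring
    nlinarith
  refine ⟨?_, ?_, ?_⟩
  · calc 8 * n ≤ n ^ 3 * n := Nat.mul_le_mul_right _ h8
      _ = n ^ 4 := by ring
      _ ≤ _ := Nat.pow_le_pow_right hn1 (by omega)
  · have hc : (n + (t + 1)).choose n ≤ (n ^ 4) ^ (t + 1) := by
      rw [Nat.choose_symm_add]
      exact (Nat.choose_le_pow _ _).trans (Nat.pow_le_pow_left (by omega) _)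
    calc 8 * ((t + 1) * n ^ t * (n + (t + 1)).choose n)
        ≤ n ^ 3 * (n ^ 4 * n ^ t * (n ^ 4) ^ (t + 1)) := by
          gcongr
          omega
      _ = n ^ (5 * t + 11) := by ring
  · have hL : (k + n).choose k ≤ (n ^ 2) ^ k := by
      refine (Nat.choose_le_pow _ _).trans (Nat.pow_le_pow_left ?_ _)
      nlinarith
    have hL1 : (k + n).choose k ≤ n ^ (2 * k ^ 2 + 5 * t + 11) := by
      refine hL.trans ?_
      rw [← pow_mul]
      apply Nat.pow_le_pow_right hn1
      nlinarith
    have hL2 : ((k + n).choose k) ^ k * n ^ (5 * t + 11) ≤ n ^ (2 * k ^ 2 + 5 * t + 11) := by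
      calc ((k + n).choose k) ^ k * n ^ (5 * t + 11)
          ≤ ((n ^ 2) ^ k) ^ k * n ^ (5 * t + 11) := by gcongr
        _ = n ^ (2 * k ^ 2 + 5 * t + 11) := by
          rw [← pow_mul, ← pow_mul, ← pow_add]
          congr 1
          ring
    calc _ ≤ n ^ (2 * k ^ 2 + 5 * t + 11) + n ^ (2 * k ^ 2 + 5 * t + 11) := add_le_add hL1 hL2
      _ = n ^ (2 * k ^ 2 + 5 * t + 11) * 2 := by ring
      _ ≤ n ^ (2 * k ^ 2 + 5 * t + 11) * n := Nat.mul_le_mul_left _ hn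
      _ = _ := by rw [← pow_succ]

/-- There is `c' > 0` such that for all `n ≥ 2`, `r(K₄⁽³⁾, Sₙ) ≤ 2^(c' n^(2/3) log₂ n)`:
if `N ≥ 2^(c' n^(2/3) log₂ n)` then every 2-coloring of `K_N^(3)` contains a red
`K₄⁽³⁾` or a blue `Sₙ`. -/
theorem upper_bound_K4_star :
    ∃ c' : ℝ, 0 < c' ∧ ∀ n : ℕ, 2 ≤ n →
      ∀ N : ℕ, (2 : ℝ) ^ (c' * (n : ℝ) ^ ((2 : ℝ) / 3) * Real.logb 2 n) ≤ N →
        ∀ χ : Finset (Fin N) → Bool, HasRedClique3 N 4 χ ∨ HasBlueStar N n χ := by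
  refine ⟨60, by norm_num, ?_⟩
  intro n hn N hN χ
  have hn2 : (2 : ℝ) ≤ n := by exact_mod_cast hn
  have hn0 : (0 : ℝ) < n := by linarith
  set y : ℝ := (n : ℝ) ^ ((1 : ℝ) / 3) with hy
  have hy3 : y ^ 3 = n := by
    rw [hy, ← Real.rpow_natCast, ← Real.rpow_mul hn0.le]
    norm_num
  have hy2 : (n : ℝ) ^ ((2 : ℝ) / 3) = y ^ 2 := by
    rw [hy, ← Real.rpow_natCast, ← Real.rpow_mul hn0.le]
    norm_num
  have hy1 : 1 < y := Real.one_lt_rpow (by linarith) (by norm_num)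
  set k := ⌈y⌉₊ with hk
  have hyk : y ≤ k := Nat.le_ceil y
  have hky : (k : ℝ) < y + 1 := Nat.ceil_lt_add_one (by linarith)
  have hk2 : 2 ≤ k := by
    have : 1 < k := by
      have : (1 : ℝ) < k := by linarith
      exact_mod_cast this
    omega
  have hkn : k ≤ n := by
    apply Nat.ceil_le.mpr
    rw [← hy3]
    nlinarith [mul_pos (by linarith : (0:ℝ) < y) (by linarith : (0:ℝ) < y)]
  set t := 8 * n / k with ht
  have htk : 8 * n ≤ k * (t + 1) := (Nat.lt_mul_div_succ (8 * n) (by omega)).le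
  have htle : k * t ≤ 8 * n := Nat.mul_div_le _ _
  have ht4 : t ≤ 4 * n := by nlinarith
  have hty : (t : ℝ) ≤ 8 * y ^ 2 := by
    have h1 : (k : ℝ) * t ≤ 8 * n := by exact_mod_cast htle
    have h2 : y * t ≤ y * (8 * y ^ 2) := by
      calc y * t ≤ k * t := by gcongr
        _ ≤ 8 * n := h1
        _ = y * (8 * y ^ 2) := by rw [← hy3]; ring
    exact le_of_mul_le_mul_left h2 (by linarith)
  obtain ⟨b1, b2, b3⟩ := numeric_bounds n k t hn hk2 hkn ht4
  refine core_K4_star N n k t (by omega) hk2 htk _ b1 b2 (b3.trans ?_) χ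
  have hE : ((2 * k ^ 2 + 5 * t + 12 : ℕ) : ℝ) ≤ 60 * y ^ 2 := by
    push_cast
    have : (k : ℝ) ^ 2 ≤ 4 * y ^ 2 := by nlinarith
    nlinarith
  have hpow : (2 : ℝ) ^ (60 * (n : ℝ) ^ ((2 : ℝ) / 3) * Real.logb 2 n) = (n : ℝ) ^ (60 * y ^ 2) := by
    rw [hy2, mul_comm, Real.rpow_mul (by norm_num), Real.rpow_logb (by norm_num) (by norm_num) hn0]
  have hfin : ((n ^ (2 * k ^ 2 + 5 * t + 12) : ℕ) : ℝ) ≤ N := by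
    refine le_trans ?_ hN
    rw [hpow, Nat.cast_pow, ← Real.rpow_natCast]
    exact Real.rpow_le_rpow_of_exponent_le (by linarith) hE
  exact_mod_cast hfin
end

section
/- For every integer s ≥ 5 there exists a constant c_s > 0 such that for all sufficiently large n, r(K_s^(3), S_n) ≥ 2^{c_s·n}; that is, there exists a 2-coloring of K_N^(3) with N = ⌊2^{c_s·n}⌋ that contains no red copy of K_s^(3) and no blue copy of S_n. -/
open Finset in
/-- Counting bound: colorings that are constant `c` on a set `A`. -/
theorem card_const_colorings {E : Type} [Fintype E] [DecidableEq E] (A : Finset E) (c : Bool) :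
    (Finset.univ.filter (fun f : E → Bool => ∀ e ∈ A, f e = c)).card * 2 ^ A.card
      = 2 ^ Fintype.card E := by
  have h1 : (Finset.univ.filter (fun f : E → Bool => ∀ e ∈ A, f e = c))
      = Fintype.piFinset (fun e => if e ∈ A then ({c} : Finset Bool) else Finset.univ) := by
    ext f
    simp only [Finset.mem_filter, Finset.mem_univ, true_and, Fintype.mem_piFinset]
    refine forall_congr' fun e => ?_
    by_cases he : e ∈ A <;> simp [he]
  have h2 : 2 ^ A.card = ∏ e : E, (if e ∈ A then 2 else 1) := by
    rw [Finset.prod_ite_mem]; simp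
  rw [h1, Fintype.card_piFinset, h2, ← Finset.prod_mul_distrib]
  rw [Finset.prod_congr rfl (g := fun _ => 2)]
  · simp
  · intro e _
    by_cases he : e ∈ A <;> simp [he]

/-- Erdős lower bound: a coloring of pairs without monochromatic `m`-sets. -/
theorem exists_no_mono (N m : ℕ) (h : 2 * N ^ m < 2 ^ (m.choose 2)) :
    ∃ f : Finset (Fin N) → Bool, ∀ S : Finset (Fin N), S.card = m → ∀ c : Bool,
      ¬ ∀ e ∈ S.powersetCard 2, f e = c := by
  by_contra! hcon
  let X := (Finset.univ.powersetCard m : Finset (Finset (Fin N))) ×ˢ (Finset.univ : Finset Bool)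
  let B : Finset (Fin N) × Bool → Finset (Finset (Fin N) → Bool) := fun p =>
    Finset.univ.filter (fun f => ∀ e ∈ p.1.powersetCard 2, f e = p.2)
  have hcov : (Finset.univ : Finset (Finset (Fin N) → Bool)) ⊆ X.biUnion B := by
    intro f _
    obtain ⟨S, hS, c, hc⟩ := hcon f
    simp only [Finset.mem_biUnion]
    refine ⟨(S, c), ?_, ?_⟩
    · simp [X, hS, Finset.mem_powersetCard]
    · simp only [B, Finset.mem_filter, Finset.mem_univ, true_and]
      exact hc
  have h1 := (Finset.card_le_card hcov).trans Finset.card_biUnion_le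
  have hX : X.card ≤ 2 * N ^ m := by
    simp only [X, Finset.card_product, Finset.card_powersetCard, Finset.card_univ,
      Fintype.card_fin, Fintype.card_bool]
    have := Nat.choose_le_pow N m
    omega
  have h2 : (∑ p ∈ X, (B p).card) * 2 ^ (m.choose 2)
      = X.card * 2 ^ Fintype.card (Finset (Fin N)) := by
    rw [Finset.sum_mul, Finset.sum_congr rfl
      (g := fun _ => 2 ^ Fintype.card (Finset (Fin N)))]
    · simp
    · intro p hp
      have hp1 : p.1.card = m := by
        simp only [X, Finset.mem_product, Finset.mem_powersetCard] at hp
        exact hp.1.2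
      have := card_const_colorings (p.1.powersetCard 2) p.2
      rw [Finset.card_powersetCard, hp1] at this
      exact this
  have h3 : (Finset.univ : Finset (Finset (Fin N) → Bool)).card
      = 2 ^ Fintype.card (Finset (Fin N)) := by
    simp [Finset.card_univ]
  rw [h3] at h1
  have h4 := Nat.mul_le_mul_right (2 ^ (m.choose 2)) h1
  rw [h2] at h4
  have h5 : 0 < 2 ^ Fintype.card (Finset (Fin N)) := by positivity
  have h6 : 2 ^ (m.choose 2) ≤ X.card := by
    rw [mul_comm] at h4
    exact Nat.le_of_mul_le_mul_right h4 h5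
  omega

/-- Sorted triples are determined by their underlying sets. -/
theorem sorted_triple_eq {N : ℕ} {i j k a b c : Fin N} (h1 : i < j) (h2 : j < k)
    (h3 : a < b) (h4 : b < c) (h : ({i, j, k} : Finset (Fin N)) = {a, b, c}) :
    i = a ∧ j = b ∧ k = c := by
  have hi : i ∈ ({a, b, c} : Finset (Fin N)) := by rw [← h]; simp
  have hj : j ∈ ({a, b, c} : Finset (Fin N)) := by rw [← h]; simp
  have hk : k ∈ ({a, b, c} : Finset (Fin N)) := by rw [← h]; simp
  simp only [Finset.mem_insert, Finset.mem_singleton, Fin.ext_iff] at hi hj hk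
  simp only [Fin.lt_def, Fin.ext_iff] at *
  omega

open Classical in
/-- A triple `i < j < k` is red iff the pairs `ij` and `jk` get different colors. -/
noncomputable def tripleColor {N : ℕ} (f : Finset (Fin N) → Bool) (T : Finset (Fin N)) : Bool :=
  decide (∃ i j k : Fin N, i < j ∧ j < k ∧ T = {i, j, k} ∧ f {i, j} ≠ f {j, k})

theorem tripleColor_red {N : ℕ} {f : Finset (Fin N) → Bool} {i j k : Fin N}
    (h1 : i < j) (h2 : j < k) (h : tripleColor f {i, j, k} = true) : f {i, j} ≠ f {j, k} := by
  simp only [tripleColor, decide_eq_true_eq] at h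
  obtain ⟨a, b, c, hab, hbc, he, hf⟩ := h
  obtain ⟨rfl, rfl, rfl⟩ := sorted_triple_eq h1 h2 hab hbc he
  exact hf

theorem tripleColor_blue {N : ℕ} {f : Finset (Fin N) → Bool} {T : Finset (Fin N)} {i j k : Fin N}
    (h1 : i < j) (h2 : j < k) (hT : T = {i, j, k}) (h : tripleColor f T = false) :
    f {i, j} = f {j, k} := by
  simp only [tripleColor, decide_eq_false_iff_not] at h
  by_contra hne
  exact h ⟨i, j, k, h1, h2, hT, hne⟩

theorem no_red {N s : ℕ} (hs : 5 ≤ s) (f : Finset (Fin N) → Bool) :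
    ¬ HasRedClique3 N s (tripleColor f) := by
  rintro ⟨S, hS, hred⟩
  let g := S.orderEmbOfFin hS
  have key : ∀ a b c : Fin s, a < b → b < c → f {g a, g b} ≠ f {g b, g c} := by
    intro a b c hab hbc
    have h1 : g a < g b := g.strictMono hab
    have h2 : g b < g c := g.strictMono hbc
    refine tripleColor_red h1 h2 (hred _ ?_ ?_)
    · intro x hx
      simp only [Finset.mem_insert, Finset.mem_singleton] at hx
      rcases hx with rfl | rfl | rfl <;> exact Finset.orderEmbOfFin_mem S hS _
    · exact Finset.card_eq_three.mpr ⟨_, _, _, h1.ne, (h1.trans h2).ne, h2.ne, rfl⟩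
  let x0 : Fin s := ⟨0, by omega⟩
  let x1 : Fin s := ⟨1, by omega⟩
  let x2 : Fin s := ⟨2, by omega⟩
  let x3 : Fin s := ⟨3, by omega⟩
  let x4 : Fin s := ⟨4, by omega⟩
  have h01 : x0 < x1 := by simp [x0, x1]
  have h12 : x1 < x2 := by simp [x1, x2]
  have h23 : x2 < x3 := by simp [x2, x3]
  have h34 : x3 < x4 := by simp [x3, x4]
  have a1 := key x0 x1 x2 h01 h12
  have a2 := key x0 x1 x3 h01 (h12.trans h23)
  have a3 := key x1 x2 x3 h12 h23
  have a4 := key x1 x3 x4 (h12.trans h23) h34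
  have a5 := key x2 x3 x4 h23 h34
  revert a1 a2 a3 a4 a5
  generalize f {g x0, g x1} = b1
  generalize f {g x1, g x2} = b2
  generalize f {g x1, g x3} = b3
  generalize f {g x2, g x3} = b4
  generalize f {g x3, g x4} = b5
  cases b1 <;> cases b2 <;> cases b3 <;> cases b4 <;> cases b5 <;> simp

theorem no_blue {N n m : ℕ} (hm : 4 * m ≤ n) (f : Finset (Fin N) → Bool)
    (hf : ∀ S : Finset (Fin N), S.card = m → ∀ c : Bool,
      ¬ ∀ e ∈ S.powersetCard 2, f e = c) :
    ¬ HasBlueStar N n (tripleColor f) := by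
  rintro ⟨v, S, hv, hS, hblue⟩
  -- split `S` by side of `v` and color of the pair with `v`
  obtain ⟨⟨d, c⟩, -, hdc⟩ := Finset.exists_le_card_fiber_of_mul_le_card_of_maps_to
    (s := S) (t := (Finset.univ : Finset (Bool × Bool)))
    (f := fun a => (decide (a < v), f {v, a})) (n := m) (by simp) (by simp)
    (by simp [hS]; omega)
  obtain ⟨T, hT, hTm⟩ := Finset.exists_subset_card_eq hdc
  refine hf T hTm c ?_
  have hTp : ∀ a ∈ T, a ∈ S ∧ decide (a < v) = d ∧ f {v, a} = c := by
    intro a ha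
    have := hT ha
    simpa using this
  have main : ∀ a ∈ T, ∀ b ∈ T, a < b → f {a, b} = c := by
    intro a ha b hb hab
    obtain ⟨haS, had, hac⟩ := hTp a ha
    obtain ⟨hbS, hbd, hbc⟩ := hTp b hb
    have hbl := hblue a haS b hbS hab.ne
    have hav : a ≠ v := fun h => hv (h ▸ haS)
    have hbv : b ≠ v := fun h => hv (h ▸ hbS)
    cases d with
    | true =>
      have hbltv : b < v := by simpa using hbd
      have := tripleColor_blue hab hbltv (by ext x; simp; tauto) hbl
      rw [this, Finset.pair_comm, hbc]
    | false =>
      have hva : v < a := lt_of_le_of_ne (by simpa using had) hav.symm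
      have := tripleColor_blue hva hab rfl hbl
      rw [← this, hac]
  intro e he
  obtain ⟨heT, he2⟩ := Finset.mem_powersetCard.mp he
  obtain ⟨a, b, hab, rfl⟩ := Finset.card_eq_two.mp he2
  have haT : a ∈ T := heT (by simp)
  have hbT : b ∈ T := heT (by simp)
  rcases lt_or_gt_of_ne hab with h | h
  · exact main a haT b hbT h
  · rw [Finset.pair_comm]; exact main b hbT a haT h

/-- For every `s ≥ 5` there is `c_s > 0` such that for all sufficiently large `n`,
`r(K_s^(3), Sₙ) ≥ 2^(c_s n)`: with `N = ⌊2^(c_s n)⌋` there is a 2-coloring of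
`K_N^(3)` with no red `K_s^(3)` and no blue `Sₙ`. -/
theorem lower_bound_Ks_star :
    ∀ s : ℕ, 5 ≤ s → ∃ c : ℝ, 0 < c ∧ ∃ n₀ : ℕ, ∀ n : ℕ, n₀ ≤ n →
      ∀ N : ℕ, N = ⌊(2 : ℝ) ^ (c * n)⌋₊ →
        ∃ χ : Finset (Fin N) → Bool, ¬ HasRedClique3 N s χ ∧ ¬ HasBlueStar N n χ := by
  intro s hs
  refine ⟨1 / 32, by norm_num, 32, ?_⟩
  intro n hn N hN
  obtain ⟨m, hm⟩ : ∃ m, m = n / 4 := ⟨_, rfl⟩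
  obtain ⟨k, hk⟩ : ∃ k, k = n / 16 := ⟨_, rfl⟩
  have hNk : N ≤ 2 ^ k := by
    rw [hN]
    apply Nat.floor_le_of_le
    push_cast
    rw [← Real.rpow_natCast]
    apply Real.rpow_le_rpow_of_exponent_le (by norm_num)
    have : n ≤ 32 * k := by omega
    have : (n : ℝ) ≤ 32 * k := by exact_mod_cast this
    linarith
  have hch : k * m + 1 < m.choose 2 := by
    rw [Nat.choose_two_right]
    have h8 : 8 ≤ m := by omega
    have h4 : 4 * k ≤ m := by omega
    obtain ⟨t, rfl⟩ : ∃ t, m = t + 1 := ⟨m - 1, by omega⟩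
    have : 2 * (k * (t + 1) + 2) ≤ (t + 1) * (t + 1 - 1) := by
      simp only [Nat.add_sub_cancel]
      nlinarith
    omega
  have hlt : 2 * N ^ m < 2 ^ (m.choose 2) := by
    calc 2 * N ^ m ≤ 2 * (2 ^ k) ^ m := by gcongr
      _ = 2 ^ (k * m + 1) := by rw [← pow_mul, pow_succ, mul_comm]
      _ < 2 ^ (m.choose 2) := Nat.pow_lt_pow_right (by norm_num) hch
  obtain ⟨f, hf⟩ := exists_no_mono N m hlt
  exact ⟨tripleColor f, no_red hs f, no_blue (by omega) f hf⟩
end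

section
/- For every integer s ≥ 5 there exists a constant c'_s > 0 such that for all integers n ≥ 3, r(K_s^(3), S_n) ≤ 2^{c'_s·n}; that is, if N ≥ 2^{c'_s·n}, then every 2-coloring of K_N^(3) contains a red copy of K_s^(3) or a blue copy of S_n. -/
/-- Pigeonhole over the powerset of `C`. -/
lemma pigeon_aux {V : Type} [DecidableEq V] (C A : Finset V) (f : V → Finset V)
    (hf : ∀ a, f a ⊆ C) (m : ℕ) (hm : 2 ^ C.card * m ≤ A.card) :
    ∃ D ⊆ C, m ≤ (A.filter (fun a => f a = D)).card := by
  have := Finset.exists_le_card_fiber_of_mul_le_card_of_maps_to (s := A) (t := C.powerset) (f := f)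
    (n := m) (fun a _ => Finset.mem_powerset.2 (hf a)) ⟨∅, by simp⟩ (by simpa using hm)
  obtain ⟨D, hD, h⟩ := this
  exact ⟨D, Finset.mem_powerset.1 hD, h⟩

/-- The main inductive construction: `C` is the current red clique, `B v` is the set of
discarded vertices which are blue with `v`, and `A` is the set of remaining vertices. -/
lemma main_aux (N s n : ℕ) (χ : Finset (Fin N) → Bool) (k : ℕ) :
    ∀ (C A : Finset (Fin N)) (B : Fin N → Finset (Fin N)),
      C.card ≤ s →
      (∀ x ∈ A, x ∉ C) →
      (∀ v ∈ C, ∀ x ∈ A, x ∉ B v) →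
      (∀ v ∈ C, v ∉ B v) →
      (∀ a ∈ C, ∀ b ∈ C, ∀ c ∈ C, a ≠ b → a ≠ c → b ≠ c → χ {a, b, c} = true) →
      (∀ a ∈ C, ∀ b ∈ C, a ≠ b → ∀ x ∈ A, χ {a, b, x} = true) →
      (∀ v ∈ C, ∀ a ∈ B v, ∀ b ∈ B v, a ≠ b → χ {v, a, b} = false) →
      (∀ v ∈ C, ∀ a ∈ B v, ∀ x ∈ A, χ {v, a, x} = false) →
      s + s * n ≤ k + C.card + ∑ v ∈ C, (B v).card →
      2 ^ ((s + 1) * k) ≤ A.card →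
      HasRedClique3 N s χ ∨ HasBlueStar N n χ := by
  have p1 : ∀ a b c : Fin N, ({a, b, c} : Finset (Fin N)) = {b, a, c} := by
    intro a b c; ext y; simp; tauto
  have p2 : ∀ a b c : Fin N, ({a, b, c} : Finset (Fin N)) = {a, c, b} := by
    intro a b c; ext y; simp; tauto
  induction k with
  | zero =>
    intro C A B hCs _ _ hvB hC _ hB _ hpot _
    by_cases hCe : C.card = s
    · left
      refine ⟨C, hCe, fun T hT hT3 => ?_⟩
      obtain ⟨a, b, c, hab, hac, hbc, rfl⟩ := Finset.card_eq_three.1 hT3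
      exact hC a (hT (by simp)) b (hT (by simp)) c (hT (by simp)) hab hac hbc
    by_cases hBn : ∃ v ∈ C, n ≤ (B v).card
    · right
      obtain ⟨v, hv, hn⟩ := hBn
      obtain ⟨S, hS, hSn⟩ := Finset.exists_subset_card_eq hn
      exact ⟨v, S, fun h => hvB v hv (hS h), hSn,
        fun a ha b hb hab => hB v hv a (hS ha) b (hS hb) hab⟩
    exfalso
    push Not at hBn
    have h1 : ∑ v ∈ C, (B v).card ≤ C.card * n := by
      have := Finset.sum_le_card_nsmul C (fun v => (B v).card) n (fun v hv => (hBn v hv).le)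
      simpa using this
    have h2 : C.card * n ≤ s * n := Nat.mul_le_mul_right _ hCs
    omega
  | succ k ih =>
    intro C A B hCs hAC hAB hvB hC hCA hB hBA hpot hA
    by_cases hCe : C.card = s
    · left
      refine ⟨C, hCe, fun T hT hT3 => ?_⟩
      obtain ⟨a, b, c, hab, hac, hbc, rfl⟩ := Finset.card_eq_three.1 hT3
      exact hC a (hT (by simp)) b (hT (by simp)) c (hT (by simp)) hab hac hbc
    have hApos : 0 < A.card := lt_of_lt_of_le (by positivity) hA
    obtain ⟨x, hx⟩ := Finset.card_pos.1 hApos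
    have hcard : (A.erase x).card = A.card - 1 := Finset.card_erase_of_mem hx
    obtain ⟨D, hDC, hD⟩ := pigeon_aux C (A.erase x)
      (fun y => C.filter (fun v => χ {v, x, y} = true)) (fun y => Finset.filter_subset _ _)
      (2 ^ ((s + 1) * k)) (by
        rw [hcard]
        have e1 : 2 ^ C.card * 2 ^ ((s + 1) * k) ≤ 2 ^ s * 2 ^ ((s + 1) * k) :=
          Nat.mul_le_mul_right _ (Nat.pow_le_pow_right (by norm_num) hCs)
        have e2 : 2 ^ ((s + 1) * (k + 1)) = 2 * (2 ^ s * 2 ^ ((s + 1) * k)) := by ring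
        have e3 : 0 < 2 ^ s * 2 ^ ((s + 1) * k) := by positivity
        omega)
    set A' := (A.erase x).filter
      (fun y => C.filter (fun v => χ {v, x, y} = true) = D) with hA'
    have hA'A : ∀ y ∈ A', y ∈ A := fun y hy =>
      Finset.mem_of_mem_erase (Finset.mem_filter.1 hy).1
    have hA'x : ∀ y ∈ A', y ≠ x := fun y hy =>
      Finset.ne_of_mem_erase (Finset.mem_filter.1 hy).1
    have hcol : ∀ y ∈ A', ∀ v ∈ C, (χ {v, x, y} = true ↔ v ∈ D) := by
      intro y hy v hv
      rw [← (Finset.mem_filter.1 hy).2]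
      simp [hv]
    have hxC := hAC x hx
    have hne : ∀ v ∈ C, v ≠ x := fun v hv h => hxC (h ▸ hv)
    by_cases hDe : D = C
    · -- all red: extend the clique
      have hup : ∀ v ∈ C, Function.update B x ∅ v = B v := fun v hv =>
        Function.update_of_ne (hne v hv) _ _
      have hupx : Function.update B x ∅ x = ∅ := Function.update_self _ _ _
      have hsum : ∑ v ∈ C, (Function.update B x ∅ v).card = ∑ v ∈ C, (B v).card :=
        Finset.sum_congr rfl (fun v hv => by rw [hup v hv])
      refine ih (insert x C) A' (Function.update B x ∅) ?_ ?_ ?_ ?_ ?_ ?_ ?_ ?_ ?_ hD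
      · rw [Finset.card_insert_of_notMem hxC]; omega
      · intro y hy h
        rcases Finset.mem_insert.1 h with h | h
        · exact hA'x y hy h
        · exact hAC y (hA'A y hy) h
      · intro v hv y hy
        rcases Finset.mem_insert.1 hv with rfl | h
        · simp [hupx]
        · rw [hup v h]; exact hAB v h y (hA'A y hy)
      · intro v hv
        rcases Finset.mem_insert.1 hv with rfl | h
        · simp [hupx]
        · rw [hup v h]; exact hvB v h
      · intro a ha b hb c hc hab hac hbc
        rcases Finset.mem_insert.1 ha with ha | ha <;>
        rcases Finset.mem_insert.1 hb with hb | hb <;>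
        rcases Finset.mem_insert.1 hc with hc | hc
        · exact absurd (ha.trans hb.symm) hab
        · exact absurd (ha.trans hb.symm) hab
        · exact absurd (ha.trans hc.symm) hac
        · rw [ha, p1, p2]; exact hCA b hb c hc hbc x hx
        · exact absurd (hb.trans hc.symm) hbc
        · rw [hb, p2]; exact hCA a ha c hc hac x hx
        · rw [hc]; exact hCA a ha b hb hab x hx
        · exact hC a ha b hb c hc hab hac hbc
      · intro a ha b hb hab y hy
        rcases Finset.mem_insert.1 ha with ha | ha <;>
        rcases Finset.mem_insert.1 hb with hb | hb
        · exact absurd (ha.trans hb.symm) hab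
        · rw [ha, p1]; exact (hcol y hy b hb).2 (hDe ▸ hb)
        · rw [hb]; exact (hcol y hy a ha).2 (hDe ▸ ha)
        · exact hCA a ha b hb hab y (hA'A y hy)
      · intro v hv
        rcases Finset.mem_insert.1 hv with rfl | h
        · simp [hupx]
        · rw [hup v h]; exact hB v h
      · intro v hv
        rcases Finset.mem_insert.1 hv with rfl | h
        · simp [hupx]
        · rw [hup v h]; exact fun a ha y hy => hBA v h a ha y (hA'A y hy)
      · rw [Finset.card_insert_of_notMem hxC, Finset.sum_insert hxC, hsum]
        omega
    · -- some blue: discard `x` into `B w`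
      obtain ⟨w, hwC, hwD⟩ : ∃ w ∈ C, w ∉ D := by
        by_contra! h
        exact hDe (Finset.Subset.antisymm hDC h)
      have hupw : Function.update B w (insert x (B w)) w = insert x (B w) :=
        Function.update_self _ _ _
      have hup : ∀ v, v ≠ w → Function.update B w (insert x (B w)) v = B v := fun v hv =>
        Function.update_of_ne hv _ _
      have hxB := hAB w hwC x hx
      refine ih C A' (Function.update B w (insert x (B w))) hCs
        (fun y hy => hAC y (hA'A y hy)) ?_ ?_ hC
        (fun a ha b hb hab y hy => hCA a ha b hb hab y (hA'A y hy)) ?_ ?_ ?_ hD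
      · intro v hv y hy
        by_cases h : v = w
        · subst h
          rw [hupw, Finset.mem_insert, not_or]
          exact ⟨hA'x y hy, hAB v hv y (hA'A y hy)⟩
        · rw [hup v h]; exact hAB v hv y (hA'A y hy)
      · intro v hv
        by_cases h : v = w
        · subst h
          rw [hupw, Finset.mem_insert, not_or]
          exact ⟨hne v hv, hvB v hv⟩
        · rw [hup v h]; exact hvB v hv
      · intro v hv
        by_cases h : v = w
        · subst h
          rw [hupw]
          intro a ha b hb hab
          rcases Finset.mem_insert.1 ha with ha | ha <;>
          rcases Finset.mem_insert.1 hb with hb | hb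
          · exact absurd (ha.trans hb.symm) hab
          · rw [ha, p2]; exact hBA v hv b hb x hx
          · rw [hb]; exact hBA v hv a ha x hx
          · exact hB v hv a ha b hb hab
        · rw [hup v h]; exact hB v hv
      · intro v hv
        by_cases h : v = w
        · subst h
          rw [hupw]
          intro a ha y hy
          rcases Finset.mem_insert.1 ha with ha | ha
          · rw [ha]
            exact Bool.eq_false_iff.2 (fun h => hwD ((hcol y hy v hv).1 h))
          · exact hBA v hv a ha y (hA'A y hy)
        · rw [hup v h]; exact fun a ha y hy => hBA v hv a ha y (hA'A y hy)
      · have h1 : ∑ v ∈ C, (Function.update B w (insert x (B w)) v).card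
            = ∑ v ∈ C, (B v).card + 1 := by
          rw [← Finset.add_sum_erase C _ hwC, ← Finset.add_sum_erase C (fun v => (B v).card) hwC,
            hupw, Finset.card_insert_of_notMem hxB,
            Finset.sum_congr rfl (fun v hv => by rw [hup v (Finset.ne_of_mem_erase hv)])]
          ring
        omega

/-- For every `s ≥ 5` there is `c'_s > 0` such that for all `n ≥ 3`,
`r(K_s^(3), Sₙ) ≤ 2^(c'_s n)`: if `N ≥ 2^(c'_s n)` then every 2-coloring of
`K_N^(3)` contains a red `K_s^(3)` or a blue `Sₙ`. -/
theorem upper_bound_Ks_star :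
    ∀ s : ℕ, 5 ≤ s → ∃ c' : ℝ, 0 < c' ∧ ∀ n : ℕ, 3 ≤ n →
      ∀ N : ℕ, (2 : ℝ) ^ (c' * n) ≤ N →
        ∀ χ : Finset (Fin N) → Bool, HasRedClique3 N s χ ∨ HasBlueStar N n χ := by
  intro s hs
  refine ⟨(((s + 1) * (2 * s) : ℕ) : ℝ), by
    have : 0 < (s + 1) * (2 * s) := by positivity
    exact_mod_cast this, ?_⟩
  intro n hn N hN χ
  have hN' : 2 ^ ((s + 1) * (2 * s) * n) ≤ N := by
    rw [← Nat.cast_mul, Real.rpow_natCast] at hN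
    exact_mod_cast hN
  refine main_aux N s n χ (s + s * n) ∅ Finset.univ (fun _ => ∅) (by simp) (by simp) (by simp)
    (by simp) (by simp) (by simp) (by simp) (by simp) (by simp) ?_
  rw [Finset.card_univ, Fintype.card_fin]
  refine le_trans (Nat.pow_le_pow_right (by norm_num) ?_) hN'
  rw [mul_assoc]
  refine Nat.mul_le_mul_left _ ?_
  nlinarith
end

section
/- For every integer n ≥ 5 and every positive integer N with N ≤ (3/2)^{n/2}, there exists a 2-coloring of K_N^(3) that contains no red copy of K_5^(3) and no blue copy of S_n. -/
/-- Sum over ordered pairs of distinct elements of `T` of the pair colours. -/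
def pairSum {N : ℕ} (φ : Sym2 (Fin N) → ZMod 3) (T : Finset (Fin N)) : ZMod 3 :=
  ∑ a ∈ T, ∑ b ∈ T, if a = b then 0 else φ s(a, b)

lemma pairSum_triple {N : ℕ} (φ : Sym2 (Fin N) → ZMod 3) (a b c : Fin N)
    (hab : a ≠ b) (hac : a ≠ c) (hbc : b ≠ c) :
    pairSum φ {a, b, c} = 2 * (φ s(a, b) + φ s(a, c) + φ s(b, c)) := by
  unfold pairSum
  have h1 : a ∉ ({b, c} : Finset (Fin N)) := by simp [hab, hac]
  have h2 : b ∉ ({c} : Finset (Fin N)) := by simp [hbc]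
  simp only [Finset.sum_insert h1, Finset.sum_insert h2, Finset.sum_singleton]
  simp only [if_true, hab, hac, hbc, hab.symm, hac.symm, hbc.symm, if_false]
  rw [Sym2.eq_swap (a := b) (b := a), Sym2.eq_swap (a := c) (b := a),
    Sym2.eq_swap (a := c) (b := b)]
  ring

lemma two_mul_eq (x : ZMod 3) : 2 * x = 2 ↔ x = 1 := by
  revert x; decide

lemma no_red_s6 {N : ℕ} (φ : Sym2 (Fin N) → ZMod 3) :
    ¬ HasRedClique3 N 5 (fun T => decide (pairSum φ T = 2)) := by
  classical
  rintro ⟨S, hS, h⟩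
  obtain ⟨a, S1, ha, rfl, hS1⟩ := Finset.card_eq_succ.1 hS
  obtain ⟨b, S2, hb, rfl, hS2⟩ := Finset.card_eq_succ.1 hS1
  obtain ⟨c, d, e, hcd, hce, hde, rfl⟩ := Finset.card_eq_three.1 hS2
  have key : ∀ x ∈ insert a (insert b ({c, d, e} : Finset (Fin N))),
      ∀ y ∈ insert a (insert b ({c, d, e} : Finset (Fin N))),
      ∀ z ∈ insert a (insert b ({c, d, e} : Finset (Fin N))),
      x ≠ y → x ≠ z → y ≠ z → φ s(x, y) + φ s(x, z) + φ s(y, z) = 1 := by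
    intro x hx y hy z hz hxy hxz hyz
    have := h {x, y, z} (by
      intro w hw
      simp only [Finset.mem_insert, Finset.mem_singleton] at hw
      rcases hw with rfl | rfl | rfl <;> assumption)
      (Finset.card_eq_three.2 ⟨x, y, z, hxy, hxz, hyz, rfl⟩)
    rw [decide_eq_true_iff, pairSum_triple φ x y z hxy hxz hyz, two_mul_eq] at this
    exact this
  simp only [Finset.mem_insert, Finset.mem_singleton, not_or] at ha hb
  obtain ⟨hab, hac, had, hae⟩ := ha
  obtain ⟨hbc, hbd, hbe⟩ := hb
  have k1 := key a (by simp) b (by simp) c (by simp) hab hac hbc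
  have k2 := key a (by simp) b (by simp) d (by simp) hab had hbd
  have k3 := key a (by simp) b (by simp) e (by simp) hab hae hbe
  have k4 := key a (by simp) c (by simp) d (by simp) hac had hcd
  have k5 := key a (by simp) c (by simp) e (by simp) hac hae hce
  have k6 := key a (by simp) d (by simp) e (by simp) had hae hde
  have k7 := key b (by simp) c (by simp) d (by simp) hbc hbd hcd
  have k8 := key b (by simp) c (by simp) e (by simp) hbc hbe hce
  have k9 := key b (by simp) d (by simp) e (by simp) hbd hbe hde
  have k10 := key c (by simp) d (by simp) e (by simp) hcd hce hde
  have h3 : (3 : ZMod 3) = 0 := by decide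
  have h1 : (1 : ZMod 3) = 0 := by
    linear_combination (-1 : ZMod 3) * (k1 + k2 + k3 + k4 + k5 + k6 + k7 + k8 + k9 + k10) +
      (φ s(a, b) + φ s(a, c) + φ s(a, d) + φ s(a, e) + φ s(b, c) + φ s(b, d) + φ s(b, e)
        + φ s(c, d) + φ s(c, e) + φ s(d, e) - 3) * h3
  exact absurd h1 (by decide)

/-- Shear-type counting lemma. -/
lemma count_le {ι : Type*} [Fintype ι] [DecidableEq ι] (E : Finset ι)
    (F : (ι → ZMod 3) → ι → ZMod 3)
    (hF : ∀ φ ψ : ι → ZMod 3, (∀ i ∉ E, φ i = ψ i) → ∀ e ∈ E, F φ e = F ψ e)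
    (B : Finset (ι → ZMod 3)) (hB : ∀ φ ∈ B, ∀ e ∈ E, φ e ≠ F φ e) :
    B.card * 3 ^ E.card ≤ 2 ^ E.card * 3 ^ Fintype.card ι := by
  classical
  let P : Finset (ι → ZMod 3) :=
    Fintype.piFinset (fun i => if i ∈ E then ({1, 2} : Finset (ZMod 3)) else Finset.univ)
  have hne : ∀ x : ZMod 3, x ≠ 0 → x ∈ ({1, 2} : Finset (ZMod 3)) := by decide
  have h1 : B.card ≤ P.card := by
    refine Finset.card_le_card_of_injOn
      (fun φ i => if i ∈ E then φ i - F φ i else φ i) ?_ ?_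
    · intro φ hφ
      simp only [P, Finset.mem_coe, Fintype.mem_piFinset]
      intro i
      by_cases hi : i ∈ E
      · simp only [hi, if_true]
        exact hne _ (sub_ne_zero.2 (hB φ hφ i hi))
      · simp [hi]
    · intro φ _ ψ _ heq
      have hoff : ∀ i ∉ E, φ i = ψ i := by
        intro i hi
        simpa [hi] using congrFun heq i
      funext i
      by_cases hi : i ∈ E
      · have := congrFun heq i
        simp only [hi, if_true, hF φ ψ hoff i hi] at this
        exact sub_left_injective this
      · exact hoff i hi
  have h2 : P.card = 2 ^ E.card * 3 ^ (Fintype.card ι - E.card) := by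
    have h12 : ({1, 2} : Finset (ZMod 3)).card = 2 := by decide
    have hu : (Finset.univ : Finset (ZMod 3)).card = 3 := by decide
    simp only [P, Fintype.card_piFinset, apply_ite Finset.card, h12, hu]
    rw [Finset.prod_ite]
    simp only [Finset.prod_const]
    congr 2
    · simp
    · rw [← Finset.card_compl]
      congr 1
      ext; simp
  have h3 : E.card ≤ Fintype.card ι := Finset.card_le_univ E
  calc B.card * 3 ^ E.card ≤ P.card * 3 ^ E.card := Nat.mul_le_mul_right _ h1
    _ = 2 ^ E.card * (3 ^ (Fintype.card ι - E.card) * 3 ^ E.card) := by rw [h2, mul_assoc]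
    _ = _ := by rw [← pow_add, Nat.sub_add_cancel h3]

lemma pow_lt_fact (n : ℕ) (hn : 5 ≤ n) : 3 ^ n < 2 ^ n * n.factorial := by
  induction n, hn using Nat.le_induction with
  | base => decide
  | succ k hk ih =>
    rw [pow_succ, pow_succ, Nat.factorial_succ]
    have h1 : 2 ^ k * k.factorial * 3 ≤ 2 ^ k * k.factorial * (2 * (k + 1)) :=
      Nat.mul_le_mul_left _ (by omega)
    calc 3 ^ k * 3 < 2 ^ k * k.factorial * 3 := by omega
      _ ≤ 2 ^ k * k.factorial * (2 * (k + 1)) := h1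
      _ = _ := by ring

lemma numeric (n N : ℕ) (hn : 5 ≤ n) (h : N ^ 2 * 2 ^ n ≤ 3 ^ n) :
    N * N.choose n * 2 ^ (n.choose 2) < 3 ^ (n.choose 2) := by
  set m := n.choose 2 with hm
  have h2m : m * 2 + 2 * n = n * (n + 1) := by
    rw [hm, Nat.choose_two_right, Nat.div_mul_cancel (Nat.even_mul_pred_self n).two_dvd]
    obtain ⟨k, rfl⟩ : ∃ k, n = k + 1 := ⟨n - 1, by omega⟩
    simp only [Nat.add_sub_cancel]; ring
  have hc : N.choose n * n.factorial ≤ N ^ n := by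
    rw [mul_comm, ← Nat.descFactorial_eq_factorial_mul_choose]
    exact Nat.descFactorial_le_pow N n
  have hA : (N ^ (n + 1) * 2 ^ m) ^ 2 * (2 ^ n) ^ 2 ≤ (3 ^ m) ^ 2 * (3 ^ n) ^ 2 := by
    calc (N ^ (n + 1) * 2 ^ m) ^ 2 * (2 ^ n) ^ 2
        = (N ^ 2) ^ (n + 1) * 2 ^ (m * 2 + 2 * n) := by ring
      _ = (N ^ 2 * 2 ^ n) ^ (n + 1) := by rw [h2m, mul_pow, pow_mul 2]
      _ ≤ (3 ^ n) ^ (n + 1) := Nat.pow_le_pow_left h _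
      _ = 3 ^ (m * 2 + 2 * n) := by rw [h2m, pow_mul]
      _ = _ := by ring
  rw [← mul_pow, ← mul_pow] at hA
  have hA' := (Nat.pow_le_pow_iff_left (by norm_num)).1 hA
  have hf := pow_lt_fact n hn
  have hpos : 0 < 2 ^ n * n.factorial := by positivity
  refine lt_of_mul_lt_mul_right ?_ hpos.le
  calc N * N.choose n * 2 ^ m * (2 ^ n * n.factorial)
      = N * (N.choose n * n.factorial) * 2 ^ m * 2 ^ n := by ring
    _ ≤ N * N ^ n * 2 ^ m * 2 ^ n := by gcongr
    _ = N ^ (n + 1) * 2 ^ m * 2 ^ n := by ring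
    _ ≤ 3 ^ m * 3 ^ n := hA'
    _ < 3 ^ m * (2 ^ n * n.factorial) := by gcongr

/-- The value that `s(a,b)` must avoid if `{v,a,b}` is blue. -/
def forb {N : ℕ} (v : Fin N) (φ : Sym2 (Fin N) → ZMod 3) : Sym2 (Fin N) → ZMod 3 :=
  Sym2.lift ⟨fun a b => 1 - φ s(v, a) - φ s(v, b), fun a b => by ring⟩

lemma bad_count {N n : ℕ} (v : Fin N) (S : Finset (Fin N)) (hv : v ∉ S) (hS : S.card = n)
    (B : Finset (Sym2 (Fin N) → ZMod 3))
    (hB : ∀ φ ∈ B, ∀ a ∈ S, ∀ b ∈ S, a ≠ b → decide (pairSum φ {v, a, b} = 2) = false) :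
    B.card * 3 ^ (n.choose 2) ≤ 2 ^ (n.choose 2) * 3 ^ Fintype.card (Sym2 (Fin N)) := by
  classical
  let E : Finset (Sym2 (Fin N)) := S.offDiag.image Sym2.mk.uncurry
  have hE : E.card = n.choose 2 := by
    rw [← hS]; exact Sym2.card_image_offDiag S
  rw [← hE]
  have hmem : ∀ e ∈ E, ∃ a ∈ S, ∃ b ∈ S, a ≠ b ∧ e = s(a, b) := by
    intro e he
    simp only [E, Finset.mem_image, Finset.mem_offDiag] at he
    obtain ⟨⟨a, b⟩, ⟨ha, hb, hab⟩, rfl⟩ := he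
    exact ⟨a, ha, b, hb, hab, rfl⟩
  have hvE : ∀ a, s(v, a) ∉ E := by
    intro a ha
    obtain ⟨x, hx, y, hy, _, h⟩ := hmem _ ha
    rcases Sym2.eq_iff.1 h with ⟨h1, _⟩ | ⟨h1, _⟩
    · exact hv (h1 ▸ hx)
    · exact hv (h1 ▸ hy)
  refine count_le E (forb v) ?_ B ?_
  · intro φ ψ h e he
    obtain ⟨a, ha, b, hb, hab, rfl⟩ := hmem e he
    simp [forb, h _ (hvE a), h _ (hvE b)]
  · intro φ hφ e he heq
    obtain ⟨a, ha, b, hb, hab, rfl⟩ := hmem e he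
    have := hB φ hφ a ha b hb hab
    rw [decide_eq_false_iff_not, pairSum_triple φ v a b (fun h => hv (h ▸ ha))
      (fun h => hv (h ▸ hb)) hab, two_mul_eq] at this
    apply this
    rw [heq]
    simp [forb]

/-- For every `n ≥ 5` and every positive `N` with `N ≤ (3/2)^(n/2)`, there is a
2-coloring of `K_N^(3)` with no red `K₅^(3)` and no blue `Sₙ`. -/
theorem K5_star_explicit_lower :
    ∀ n : ℕ, 5 ≤ n → ∀ N : ℕ, 0 < N → (N : ℝ) ≤ (3 / 2 : ℝ) ^ ((n : ℝ) / 2) →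
      ∃ χ : Finset (Fin N) → Bool, ¬ HasRedClique3 N 5 χ ∧ ¬ HasBlueStar N n χ := by
  classical
  intro n hn N hN h
  have hnat : N ^ 2 * 2 ^ n ≤ 3 ^ n := by
    have h1 : (N : ℝ) ^ 2 ≤ (3 / 2 : ℝ) ^ n := by
      calc (N : ℝ) ^ 2 ≤ ((3 / 2 : ℝ) ^ ((n : ℝ) / 2)) ^ 2 := by gcongr
        _ = (3 / 2 : ℝ) ^ n := by
          rw [← Real.rpow_natCast, ← Real.rpow_mul (by norm_num)]
          rw [← Real.rpow_natCast]
          congr 1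
          push_cast; ring
    rw [div_pow, le_div_iff₀ (by positivity)] at h1
    exact_mod_cast h1
  have hnum := numeric n N hn hnat
  by_contra hcon
  push Not at hcon
  let I : Finset (Fin N × Finset (Fin N)) :=
    Finset.univ ×ˢ Finset.powersetCard n Finset.univ
  let B : Fin N × Finset (Fin N) → Finset (Sym2 (Fin N) → ZMod 3) := fun p =>
    Finset.univ.filter (fun φ => p.1 ∉ p.2 ∧ p.2.card = n ∧ ∀ a ∈ p.2, ∀ b ∈ p.2, a ≠ b →
      decide (pairSum φ {p.1, a, b} = 2) = false)
  have hcover : (Finset.univ : Finset (Sym2 (Fin N) → ZMod 3)) ⊆ I.biUnion B := by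
    intro φ _
    obtain ⟨v, S, hv, hS, hb⟩ := hcon _ (no_red_s6 φ)
    refine Finset.mem_biUnion.2 ⟨(v, S), ?_, ?_⟩
    · simp [I, Finset.mem_powersetCard, hS]
    · simp only [B, Finset.mem_filter, Finset.mem_univ, true_and]
      exact ⟨hv, hS, hb⟩
  have hI : I.card = N * N.choose n := by
    simp [I, Finset.card_product, Finset.card_powersetCard]
  have htot : (Finset.univ : Finset (Sym2 (Fin N) → ZMod 3)).card
      = 3 ^ Fintype.card (Sym2 (Fin N)) := by
    rw [Finset.card_univ, Fintype.card_fun, ZMod.card]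
  set M := Fintype.card (Sym2 (Fin N))
  have hB : ∀ p ∈ I, (B p).card * 3 ^ (n.choose 2) ≤ 2 ^ (n.choose 2) * 3 ^ M := by
    intro p _
    by_cases hp : p.1 ∉ p.2 ∧ p.2.card = n
    · refine bad_count p.1 p.2 hp.1 hp.2 (B p) ?_
      intro φ hφ
      exact (Finset.mem_filter.1 hφ).2.2.2
    · have : B p = ∅ := by
        apply Finset.filter_eq_empty_iff.2
        intro φ _ hc
        exact hp ⟨hc.1, hc.2.1⟩
      simp [this]
  have hsum : 3 ^ M * 3 ^ (n.choose 2) ≤ (N * N.choose n) * (2 ^ (n.choose 2) * 3 ^ M) := by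
    calc 3 ^ M * 3 ^ (n.choose 2) ≤ (∑ p ∈ I, (B p).card) * 3 ^ (n.choose 2) := by
          rw [← htot]
          exact Nat.mul_le_mul_right _
            ((Finset.card_le_card hcover).trans Finset.card_biUnion_le)
      _ = ∑ p ∈ I, (B p).card * 3 ^ (n.choose 2) := Finset.sum_mul _ _ _
      _ ≤ ∑ p ∈ I, 2 ^ (n.choose 2) * 3 ^ M := Finset.sum_le_sum hB
      _ = _ := by rw [Finset.sum_const, smul_eq_mul, hI]
  have hlt : (N * N.choose n) * (2 ^ (n.choose 2) * 3 ^ M) < 3 ^ M * 3 ^ (n.choose 2) := by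
    rw [← mul_assoc, mul_comm (3 ^ M)]
    exact Nat.mul_lt_mul_of_pos_right hnum (by positivity)
  exact absurd hsum (not_le.2 hlt)
end

section
/- There exists a constant c > 0 such that for all sufficiently large n, gr(Γ_{2,2}, K_n) ≥ 2^{c·(log n)²}; that is, for N = ⌊2^{c·(log n)²}⌋ there exists a red/blue edge-coloring of Γ_{N,N} containing no red rectangle and no blue K_n. -/
/-- Adjacency in the grid graph `K_m □ K_n`: two distinct vertices are adjacent iff they
agree in exactly one coordinate. -/
def GridAdj {m n : ℕ} (p q : Fin m × Fin n) : Prop :=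
  (p.1 = q.1 ∧ p.2 ≠ q.2) ∨ (p.1 ≠ q.1 ∧ p.2 = q.2)

/-- A red rectangle in an edge-coloring of `Γ_{N,M}` (red = `true`). -/
def HasRedRect (N M : ℕ) (χ : Sym2 (Fin N × Fin M) → Bool) : Prop :=
  ∃ x x' : Fin N, ∃ y y' : Fin M, x ≠ x' ∧ y ≠ y' ∧
    χ s((x, y), (x', y)) = true ∧ χ s((x, y'), (x', y')) = true ∧
    χ s((x, y), (x, y')) = true ∧ χ s((x', y), (x', y')) = true

/-- A blue `K_n` in an edge-coloring of `Γ_{N,M}`: `n` pairwise-adjacent vertices with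
all edges between them blue (blue = `false`). -/
def HasBlueGridClique (N M n : ℕ) (χ : Sym2 (Fin N × Fin M) → Bool) : Prop :=
  ∃ S : Finset (Fin N × Fin M), S.card = n ∧
    ∀ p ∈ S, ∀ q ∈ S, p ≠ q → GridAdj p q ∧ χ s(p, q) = false


open Finset in
theorem random_choice {V Y Ω : Type} [Fintype V] [DecidableEq V] [Fintype Y]
    [Fintype Ω] [Nonempty Ω] (P : Sym2 V → Y → Ω → Prop) (R n : ℕ) (hR : 0 < R)
    (hP : ∀ e : Sym2 V, ¬ e.IsDiag → ∀ y,
      Fintype.card Ω ≤ R * Nat.card {ω // P e y ω})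
    (hb : ((Fintype.card Y : ℝ) * (Fintype.card V : ℝ) ^ n) *
      (1 - 1 / (R : ℝ)) ^ (n.choose 2) < 1) :
    ∃ w : Sym2 V → Ω, ∀ y, ∀ S : Finset V, S.card = n →
      ∃ x ∈ S, ∃ x' ∈ S, x ≠ x' ∧ P s(x, x') y (w s(x, x')) := by
  classical
  by_contra hcon
  push Not at hcon
  set q : ℝ := 1 - 1 / (R : ℝ) with hq
  have hR1 : (1 : ℝ) ≤ R := by exact_mod_cast hR
  have hq0 : 0 ≤ q := by
    rw [hq, sub_nonneg, div_le_one (by linarith)]; exact hR1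
  let E : Finset V → Finset (Sym2 V) := fun S => S.offDiag.image Sym2.mk.uncurry
  let T : Y × Finset V → Sym2 V → Finset Ω := fun p e =>
    if e ∈ E p.2 then univ.filter (fun ω => ¬ P e p.1 ω) else univ
  let Bad : Y × Finset V → Finset (Sym2 V → Ω) := fun p => Fintype.piFinset (T p)
  let I : Finset (Y × Finset V) := univ ×ˢ powersetCard n univ
  have hcov : (univ : Finset (Sym2 V → Ω)) ⊆ I.biUnion Bad := by
    intro w _
    obtain ⟨y, S, hS, h⟩ := hcon w
    rw [mem_biUnion]
    refine ⟨(y, S), by simp [I, hS], ?_⟩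
    rw [Fintype.mem_piFinset]
    intro e
    by_cases he : e ∈ E S
    · simp only [T, he, if_true, mem_filter, mem_univ, true_and]
      simp only [E, mem_image, mem_offDiag, Prod.exists] at he
      obtain ⟨a, b, ⟨ha, hb, hab⟩, rfl⟩ := he
      exact h a ha b hb hab
    · simp [T, he]
  have hΩ : (0 : ℝ) < Fintype.card Ω := by exact_mod_cast Fintype.card_pos
  have hbad : ∀ p ∈ I, ((Bad p).card : ℝ) ≤
      (Fintype.card Ω : ℝ) ^ (Fintype.card (Sym2 V)) * q ^ (n.choose 2) := by
    rintro ⟨y, S⟩ hp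
    have hS : S.card = n := by simpa [I] using hp
    have hE : (E S).card = n.choose 2 := by
      rw [← hS]; exact Sym2.card_image_offDiag S
    rw [Fintype.card_piFinset]
    push_cast
    calc ∏ e, ((T (y, S) e).card : ℝ)
        ≤ ∏ e, ((Fintype.card Ω : ℝ) * (if e ∈ E S then q else 1)) := by
          apply prod_le_prod
          · intros; positivity
          · intro e _
            by_cases he : e ∈ E S
            · have hd : ¬ e.IsDiag := by
                simp only [E, mem_image, mem_offDiag, Prod.exists] at he
                obtain ⟨a, b, ⟨ha, hb, hab⟩, rfl⟩ := he
                simpa using hab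
              have h1 := hP e hd y
              rw [Nat.card_eq_fintype_card, Fintype.card_subtype] at h1
              have h2 := card_filter_add_card_filter_not (s := (univ : Finset Ω)) (fun ω => P e y ω)
              rw [card_univ] at h2
              simp only [T, he, if_true]
              have h1' : (Fintype.card Ω : ℝ) ≤ R * (#{ω | P e y ω} : ℕ) := by exact_mod_cast h1
              have h2' : ((#{ω | P e y ω} : ℕ) : ℝ) + (#{ω | ¬ P e y ω} : ℕ) = Fintype.card Ω := by
                exact_mod_cast h2
              have h3 : (Fintype.card Ω : ℝ) / R ≤ (#{ω | P e y ω} : ℕ) := by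
                rw [div_le_iff₀ (by linarith)]; linarith
              have h4 : (Fintype.card Ω : ℝ) * q = Fintype.card Ω - Fintype.card Ω / R := by
                rw [hq]; ring
              rw [h4]; linarith
            · simp [T, he]
      _ = _ := by
          rw [prod_mul_distrib, prod_const, card_univ, prod_ite_mem, univ_inter, prod_const, hE]
  have h1 : ((Fintype.card Ω : ℝ) ^ (Fintype.card (Sym2 V))) ≤
      ∑ p ∈ I, ((Bad p).card : ℝ) := by
    have := (card_le_card hcov).trans card_biUnion_le
    rw [card_univ, Fintype.card_fun] at this
    exact_mod_cast this
  have h2 := h1.trans (sum_le_sum hbad)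
  rw [sum_const, nsmul_eq_mul] at h2
  have hI : (I.card : ℝ) ≤ (Fintype.card Y : ℝ) * (Fintype.card V : ℝ) ^ n := by
    simp only [I, card_product, card_univ, card_powersetCard]
    push_cast
    gcongr
    exact_mod_cast Nat.choose_le_pow _ _
  have hpos : (0 : ℝ) < (Fintype.card Ω : ℝ) ^ (Fintype.card (Sym2 V)) := by positivity
  have h3 : (I.card : ℝ) * q ^ (n.choose 2) < 1 :=
    lt_of_le_of_lt (mul_le_mul_of_nonneg_right hI (by positivity)) hb
  nlinarith

theorem sq_le_two_pow (k : ℕ) (hk : 4 ≤ k) : k ^ 2 ≤ 2 ^ k := by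
  induction k, hk using Nat.le_induction with
  | base => norm_num
  | succ k hk ih => rw [pow_succ 2 k]; nlinarith

theorem param_bound (N n k : ℕ) (hk : 4 ≤ k) (hN : N ≤ 2 ^ (k ^ 2)) (hn : 16 ^ k ≤ n) :
    ((N : ℝ) * (N : ℝ) ^ n) * (1 - 1 / ((2 ^ (k + 1) : ℕ) : ℝ)) ^ (n.choose 2) < 1 := by
  set R : ℕ := 2 ^ (k + 1) with hR
  have hRpos : 2 ≤ R := by rw [hR, pow_succ]; have := Nat.one_le_two_pow (n := k); omega
  set q : ℝ := 1 - 1 / (R : ℝ) with hq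
  have hR2 : (2 : ℝ) ≤ R := by exact_mod_cast hRpos
  have hinv : 1 / (R : ℝ) ≤ 1 / 2 := one_div_le_one_div_of_le (by norm_num) hR2
  have hinv0 : 0 < 1 / (R : ℝ) := by positivity
  have hq0 : 0 ≤ q := by rw [hq]; linarith
  have hq1 : q ≤ 1 := by rw [hq]; linarith
  have hqR : q ^ R ≤ 1 / 2 := by
    have h1 : q ≤ Real.exp (-(1 / (R : ℝ))) := by
      have := Real.add_one_le_exp (-(1 / (R : ℝ))); rw [hq]; linarith
    calc q ^ R ≤ Real.exp (-(1 / (R : ℝ))) ^ R := pow_le_pow_left₀ hq0 h1 R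
      _ = Real.exp (-1) := by
        rw [← Real.exp_nat_mul]; congr 1; field_simp
      _ ≤ 1 / 2 := by
        rw [Real.exp_neg, ← one_div]
        apply one_div_le_one_div_of_le (by norm_num)
        have := Real.add_one_le_exp (1 : ℝ); linarith
  set M := k ^ 2 * (n + 1) + 1 with hM
  have hsq := sq_le_two_pow k hk
  have hch : R * M ≤ n.choose 2 := by
    rw [Nat.choose_two_right, Nat.le_div_iff_mul_le (by norm_num)]
    have h2k : 16 ≤ 2 ^ k := by
      calc 16 = 2 ^ 4 := by norm_num
        _ ≤ 2 ^ k := Nat.pow_le_pow_right (by norm_num) hk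
    have h16 : (16 : ℕ) ^ k = (2 ^ k) ^ 4 := by
      rw [← pow_mul, mul_comm, pow_mul]; norm_num
    rw [h16] at hn
    rw [hR, hM, pow_succ]
    generalize 2 ^ k = a at *
    have hn2 : 4 * a ^ 2 + 3 ≤ n := by
      refine le_trans ?_ hn
      have : 16 * 16 ≤ a ^ 2 := by nlinarith
      have h4 : a ^ 4 = a ^ 2 * a ^ 2 := by ring
      rw [h4]; nlinarith
    obtain ⟨m, rfl⟩ : ∃ m, n = m + 3 := ⟨n - 3, by omega⟩
    have h5 : 4 * a ^ 2 ≤ m := by omega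
    have h6 : m + 3 - 1 = m + 2 := by omega
    rw [h6]
    calc a * 2 * (k ^ 2 * (m + 3 + 1) + 1) * 2 ≤ a * 2 * (a * (m + 3 + 1) + a) * 2 := by
          gcongr; omega
      _ = 4 * a ^ 2 * (m + 5) := by ring
      _ ≤ m * (m + 5) := by gcongr
      _ ≤ _ := by nlinarith
  have hNr : (N : ℝ) ≤ 2 ^ (k ^ 2) := by exact_mod_cast hN
  calc ((N : ℝ) * (N : ℝ) ^ n) * q ^ (n.choose 2)
      = (N : ℝ) ^ (n + 1) * q ^ (n.choose 2) := by ring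
    _ ≤ (2 ^ (k ^ 2)) ^ (n + 1) * q ^ (R * M) := by
        gcongr ?_ * ?_
        · gcongr
        · exact pow_le_pow_of_le_one hq0 hq1 hch
    _ ≤ (2 ^ (k ^ 2)) ^ (n + 1) * (1 / 2) ^ M := by
        rw [pow_mul q]; gcongr
    _ = 1 / 2 := by
        rw [hM, ← pow_mul, pow_succ (1 / 2 : ℝ), ← mul_assoc, ← mul_pow]; norm_num
    _ < 1 := by norm_num

open Finset Polynomial in
theorem code_exists_s8 (N L d r : ℕ) [Fact r.Prime] (hL : L ≤ r) (hN : N ≤ r ^ d) :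
    ∃ f : Fin N → Fin L → ZMod r, ∀ x x', x ≠ x' →
      (univ.filter (fun i => f x i = f x' i)).card ≤ d := by
  classical
  obtain ⟨emb⟩ : Nonempty (Fin N ↪ (Fin d → ZMod r)) := by
    apply Function.Embedding.nonempty_of_card_le
    simpa [ZMod.card] using hN
  let p : Fin N → degreeLT (ZMod r) d := fun x => (degreeLTEquiv (ZMod r) d).symm (emb x)
  have hp : Function.Injective p := (degreeLTEquiv (ZMod r) d).symm.injective.comp emb.injective
  refine ⟨fun x i => (p x : (ZMod r)[X]).eval ((i : ℕ) : ZMod r), fun x x' hxx => ?_⟩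
  by_contra hc
  push Not at hc
  apply hxx
  apply hp
  apply Subtype.ext
  have hinj : Function.Injective (fun i : Fin L => ((i : ℕ) : ZMod r)) := by
    intro i j hij
    have h := (ZMod.natCast_eq_natCast_iff' _ _ _).1 hij
    rw [Nat.mod_eq_of_lt (by omega), Nat.mod_eq_of_lt (by omega)] at h
    exact Fin.ext h
  refine eq_of_degrees_lt_of_eval_index_eq
    (univ.filter (fun i : Fin L => (p x : (ZMod r)[X]).eval ((i : ℕ) : ZMod r)
      = (p x' : (ZMod r)[X]).eval ((i : ℕ) : ZMod r)))
    (v := fun i : Fin L => ((i : ℕ) : ZMod r)) hinj.injOn ?_ ?_ ?_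
  · exact lt_trans (mem_degreeLT.1 (p x).2) (by exact_mod_cast hc)
  · exact lt_trans (mem_degreeLT.1 (p x').2) (by exact_mod_cast hc)
  · intro i hi; simpa using hi

open Finset in
theorem count_agree (L k : ℕ) (I : Fin L → Prop) [DecidablePred I]
    (hI : (univ.filter I).card ≤ k) (v : Fin L → Bool) :
    Fintype.card (Fin L → Bool) ≤ 2 ^ (k + 1) * Nat.card {w : Fin L → Bool // ∀ i, I i → v i = w i} := by
  classical
  have h1 : (univ.filter (fun w : Fin L → Bool => ∀ i, I i → v i = w i)) =
      Fintype.piFinset (fun i => if I i then {v i} else univ) := by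
    ext w
    simp only [mem_filter, mem_univ, true_and, Fintype.mem_piFinset]
    refine forall_congr' fun i => ?_
    by_cases h : I i
    · simp only [h, if_true, mem_singleton, true_imp_iff]; exact eq_comm
    · simp [h]
  rw [Nat.card_eq_fintype_card, Fintype.card_subtype, h1, Fintype.card_piFinset]
  have h2 : Fintype.card (Fin L → Bool) =
      2 ^ (univ.filter I).card * ∏ i, (if I i then ({v i} : Finset Bool) else univ).card := by
    rw [← prod_const, prod_filter, ← prod_mul_distrib, Fintype.card_fun]
    rw [Fintype.card_bool, Fintype.card_fin]
    rw [show (2 : ℕ) ^ L = ∏ i : Fin L, 2 by simp]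
    refine prod_congr rfl fun i _ => ?_
    by_cases h : I i <;> simp [h]
  rw [h2]
  gcongr
  · norm_num
  · omega

open Finset in
theorem coloring_exists_s8 (N n k : ℕ) (hk : 4 ≤ k) (hN : N ≤ 2 ^ (k ^ 2)) (hn : 16 ^ k ≤ n) :
    ∃ χ : Sym2 (Fin N × Fin N) → Bool,
      ¬ HasRedRect N N χ ∧ ¬ HasBlueGridClique N N n χ := by
  classical
  obtain ⟨r, hrp, hr1, hr2⟩ := Nat.exists_prime_lt_and_le_two_mul (2 ^ k) (by positivity)
  have : Fact r.Prime := ⟨hrp⟩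
  have hsq := sq_le_two_pow k hk
  obtain ⟨f, hf⟩ := code_exists_s8 N (k ^ 2) k r (by omega) (by
    refine hN.trans ?_
    rw [sq, pow_mul]; gcongr)
  obtain ⟨g⟩ : Nonempty (Fin N ↪ (Fin (k ^ 2) → Bool)) := by
    apply Function.Embedding.nonempty_of_card_le
    simpa using hN
  have : Nonempty (Fin (k ^ 2)) := ⟨⟨0, by positivity⟩⟩
  have hδ : ∀ e : Sym2 (Fin N), ∃ i : Fin (k ^ 2), ∀ y y', e = s(y, y') → y ≠ y' →
      g y i ≠ g y' i := by
    intro e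
    induction e using Sym2.ind with
    | _ a b =>
      by_cases hab : a = b
      · refine ⟨Classical.arbitrary _, fun y y' h hne => ?_⟩
        rw [Sym2.eq_iff] at h
        exfalso; apply hne; rcases h with ⟨rfl, rfl⟩ | ⟨rfl, rfl⟩
        · exact hab
        · exact hab.symm
      · obtain ⟨i, hi⟩ := Function.ne_iff.1 (g.injective.ne hab)
        refine ⟨i, fun y y' h _ => ?_⟩
        rw [Sym2.eq_iff] at h
        rcases h with ⟨rfl, rfl⟩ | ⟨rfl, rfl⟩
        · exact hi
        · exact hi.symm
  choose δ hδ using hδ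
  have hb := param_bound N n k hk hN hn
  -- horizontal edges
  obtain ⟨w, hw⟩ := random_choice (V := Fin N) (Y := Fin N) (Ω := Fin (k ^ 2) → Bool)
    (fun e y ω => ∀ i, (∀ x ∈ e, ∀ x' ∈ e, f x i = f x' i) → g y i = ω i)
    (2 ^ (k + 1)) n (by positivity) (by
      intro e he y
      refine count_agree (k ^ 2) k _ ?_ (g y)
      induction e using Sym2.ind with
      | _ a b =>
        have hab : a ≠ b := by simpa using he
        refine le_trans (card_le_card ?_) (hf a b hab)
        intro i hi
        simp only [mem_filter, mem_univ, true_and] at hi ⊢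
        exact hi a (by simp) b (by simp)) (by simpa using hb)
  -- vertical edges
  obtain ⟨u, hu⟩ := random_choice (V := Fin N) (Y := Fin N) (Ω := ZMod r)
    (fun e x ω => f x (δ e) = ω)
    (2 ^ (k + 1)) n (by positivity) (by
      intro e he x
      rw [ZMod.card]
      simp
      rw [pow_succ]; omega) (by simpa using hb)
  let Q : Sym2 (Fin N × Fin N) → Prop := fun e =>
    (∃ x x' y, e = s((x, y), (x', y)) ∧ x ≠ x' ∧
      ∀ i, f x i = f x' i → g y i = w s(x, x') i) ∨
    (∃ x y y', e = s((x, y), (x, y')) ∧ y ≠ y' ∧ f x (δ s(y, y')) = u s(y, y'))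
  have hQh : ∀ x x' y, x ≠ x' → Q s((x, y), (x', y)) →
      ∀ i, f x i = f x' i → g y i = w s(x, x') i := by
    rintro x x' y hne (⟨a, a', b, h, -, h2⟩ | ⟨a, b, b', h, hb, -⟩)
    · simp only [Sym2.eq_iff, Prod.mk.injEq] at h
      rcases h with ⟨⟨rfl, rfl⟩, rfl, -⟩ | ⟨⟨rfl, rfl⟩, rfl, -⟩
      · exact h2
      · intro i hi; rw [Sym2.eq_swap]; exact h2 i hi.symm
    · simp only [Sym2.eq_iff, Prod.mk.injEq] at h
      grind
  have hQv : ∀ x y y', y ≠ y' → Q s((x, y), (x, y')) →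
      f x (δ s(y, y')) = u s(y, y') := by
    rintro x y y' hne (⟨a, a', b, h, -, h2⟩ | ⟨a, b, b', h, hb, h2⟩)
    · simp only [Sym2.eq_iff, Prod.mk.injEq] at h
      grind
    · simp only [Sym2.eq_iff, Prod.mk.injEq] at h
      rcases h with ⟨⟨rfl, rfl⟩, -, rfl⟩ | ⟨⟨rfl, rfl⟩, -, rfl⟩
      · exact h2
      · rw [Sym2.eq_swap]; exact h2
  refine ⟨fun e => decide (Q e), ?_, ?_⟩
  · rintro ⟨x, x', y, y', hx, hy, h1, h2, h3, h4⟩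
    simp only [decide_eq_true_eq] at h1 h2 h3 h4
    have h5 := (hQv x y y' hy h3).trans (hQv x' y y' hy h4).symm
    have h6 := hQh x x' y hx h1 _ h5
    have h7 := hQh x x' y' hx h2 _ h5
    exact hδ _ y y' rfl hy (h6.trans h7.symm)
  · rintro ⟨S, hS, h⟩
    simp only [decide_eq_false_iff_not] at h
    have hn2 : 2 ≤ n := by
      refine le_trans ?_ hn
      calc 2 ≤ 16 ^ 1 := by norm_num
        _ ≤ 16 ^ k := Nat.pow_le_pow_right (by norm_num) (by omega)
    obtain ⟨p, hp, q, hq, hpq⟩ := Finset.one_lt_card.1 (by omega : 1 < S.card)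
    rcases (h p hp q hq hpq).1 with ⟨e1, e2⟩ | ⟨e1, e2⟩
    · -- column
      have hall : ∀ s ∈ S, s.1 = p.1 := by
        intro s hs
        by_contra hne
        rcases (h s hs p hp (fun hh => hne (by rw [hh]))).1 with a1 | a1
        · exact hne a1.1
        rcases (h s hs q hq (fun hh => hne (by rw [hh, e1]))).1 with a2 | a2
        · exact hne (a2.1.trans e1.symm)
        exact e2 (a1.2.symm.trans a2.2)
      have hinj : Set.InjOn Prod.snd (S : Set (Fin N × Fin N)) := by
        intro a ha b hb hab
        exact Prod.ext ((hall a ha).trans (hall b hb).symm) hab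
      obtain ⟨y, hy, y', hy', hne, hP⟩ := hu p.1 (S.image Prod.snd)
        (by rw [card_image_of_injOn hinj, hS])
      rw [mem_image] at hy hy'
      obtain ⟨a, ha, rfl⟩ := hy
      obtain ⟨b, hb, rfl⟩ := hy'
      refine (h a ha b hb (fun hh => hne (by rw [hh]))).2 (Or.inr ⟨p.1, a.2, b.2, ?_, hne, hP⟩)
      rw [show a = (p.1, a.2) from Prod.ext (hall a ha) rfl,
        show b = (p.1, b.2) from Prod.ext (hall b hb) rfl]
    · have hall : ∀ s ∈ S, s.2 = p.2 := by
        intro s hs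
        by_contra hne
        rcases (h s hs p hp (fun hh => hne (by rw [hh]))).1 with a1 | a1
        · rcases (h s hs q hq (fun hh => hne (by rw [hh, e2]))).1 with a2 | a2
          · exact e1 (a1.1.symm.trans a2.1)
          · exact hne (a2.2.trans e2.symm)
        · exact hne a1.2
      have hinj : Set.InjOn Prod.fst (S : Set (Fin N × Fin N)) := by
        intro a ha b hb hab
        exact Prod.ext hab ((hall a ha).trans (hall b hb).symm)
      obtain ⟨y, hy, y', hy', hne, hP⟩ := hw p.2 (S.image Prod.fst)
        (by rw [card_image_of_injOn hinj, hS])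
      rw [mem_image] at hy hy'
      obtain ⟨a, ha, rfl⟩ := hy
      obtain ⟨b, hb, rfl⟩ := hy'
      refine (h a ha b hb (fun hh => hne (by rw [hh]))).2
        (Or.inl ⟨a.1, b.1, p.2, ?_, hne, ?_⟩)
      · rw [show a = (a.1, p.2) from Prod.ext rfl (hall a ha),
          show b = (b.1, p.2) from Prod.ext rfl (hall b hb)]
      · intro i hi
        apply hP i
        intro s hs t ht
        rw [Sym2.mem_iff] at hs ht
        rcases hs with rfl | rfl <;> rcases ht with rfl | rfl <;> simp [hi]

/-- There is `c > 0` such that for all sufficiently large `n`,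
`gr(Γ₂,₂, K_n) ≥ 2^(c (log₂ n)²)`: for `N = ⌊2^(c (log₂ n)²)⌋` there is a red/blue
edge-coloring of `Γ_{N,N}` with no red rectangle and no blue `K_n`. -/
theorem lower_bound_grid_ramsey :
    ∃ c : ℝ, 0 < c ∧ ∃ n₀ : ℕ, ∀ n : ℕ, n₀ ≤ n →
      ∀ N : ℕ, N = ⌊(2 : ℝ) ^ (c * (Real.logb 2 n) ^ 2)⌋₊ →
        ∃ χ : Sym2 (Fin N × Fin N) → Bool,
          ¬ HasRedRect N N χ ∧ ¬ HasBlueGridClique N N n χ := by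
  refine ⟨1 / 64, by norm_num, 16 ^ 4, fun n hn N hN => ?_⟩
  have hn0 : n ≠ 0 := by rintro rfl; norm_num at hn
  have hk : 4 ≤ Nat.log 16 n := (Nat.le_log_iff_pow_le (by norm_num) hn0).2 hn
  have hkn : 16 ^ Nat.log 16 n ≤ n := Nat.pow_log_le_self 16 hn0
  have hlt : n < 16 ^ (Nat.log 16 n + 1) := Nat.lt_pow_succ_log_self (by norm_num) n
  generalize Nat.log 16 n = k at *
  refine coloring_exists_s8 N n k hk ?_ hkn
  have hnpos : (0 : ℝ) < n := by exact_mod_cast Nat.pos_of_ne_zero hn0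
  have hlog : Real.logb 2 n ≤ 8 * k := by
    rw [Real.logb_le_iff_le_rpow (by norm_num) hnpos]
    have h1 : (n : ℝ) ≤ ((2 : ℝ) ^ (8 * k : ℕ)) := by
      have : n ≤ 2 ^ (8 * k) := by
        refine hlt.le.trans ?_
        rw [show 16 = 2 ^ 4 by norm_num, ← pow_mul]
        exact Nat.pow_le_pow_right (by norm_num) (by omega)
      exact_mod_cast this
    refine h1.trans (le_of_eq ?_)
    rw [← Real.rpow_natCast]; push_cast; rfl
  have hlog0 : 0 ≤ Real.logb 2 n :=
    Real.logb_nonneg (by norm_num) (by exact_mod_cast Nat.pos_of_ne_zero hn0)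
  rw [hN]
  apply Nat.floor_le_of_le
  push_cast
  rw [← Real.rpow_natCast 2 (k ^ 2)]
  apply Real.rpow_le_rpow_of_exponent_le (by norm_num)
  push_cast
  nlinarith
end

section
/- There exists a constant c' > 0 such that for all integers n ≥ 2, gr(Γ_{2,2}, K_n) ≤ 2^{c'·n^{2/3}·log n}; that is, if N ≥ 2^{c'·n^{2/3}·log n}, then every red/blue edge-coloring of Γ_{N,N} contains a red rectangle or a blue K_n. -/
open Finset Classical in
/-- A weak Ramsey bound. -/
lemma gr_ramsey {V : Type*} (r : V → V → Prop) (hs : ∀ u v, r u v → r v u) (n : ℕ) (hn : 1 ≤ n) :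
    ∀ (k : ℕ) (S : Finset V), n ^ k ≤ S.card →
      (∃ K ⊆ S, K.card = n ∧ ∀ u ∈ K, ∀ v ∈ K, u ≠ v → r u v) ∨
      (∃ K ⊆ S, K.card = k ∧ ∀ u ∈ K, ∀ v ∈ K, u ≠ v → ¬ r u v) := by
  intro k
  induction k with
  | zero =>
    intro S _
    right
    exact ⟨∅, by simp, by simp, by simp⟩
  | succ k ih =>
    intro S hS
    by_cases hcl : ∃ K ⊆ S, K.card = n ∧ ∀ u ∈ K, ∀ v ∈ K, u ≠ v → r u v
    · exact Or.inl hcl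
    right
    -- maximal clique
    obtain ⟨K, hK, hKmax⟩ := Finset.exists_max_image
      (S.powerset.filter (fun K => ∀ u ∈ K, ∀ v ∈ K, u ≠ v → r u v)) Finset.card
      ⟨∅, by simp⟩
    simp only [Finset.mem_filter, Finset.mem_powerset] at hK hKmax
    obtain ⟨hKS, hKc⟩ := hK
    have hKn : K.card < n := by
      by_contra hge
      push Not at hge
      obtain ⟨K', hK', hc'⟩ := Finset.exists_subset_card_eq hge
      exact hcl ⟨K', hK'.trans hKS, hc', fun u hu v hv => hKc u (hK' hu) v (hK' hv)⟩
    have hcov : ∀ w ∈ S, ∃ v ∈ K, w = v ∨ ¬ r v w := by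
      intro w hw
      by_contra hno
      push Not at hno
      have hwK : w ∉ K := fun h => (hno w h).1 rfl
      have := hKmax (insert w K) ⟨Finset.insert_subset hw hKS, by
        intro u hu v hv huv
        rw [Finset.mem_insert] at hu hv
        rcases hu with rfl | hu <;> rcases hv with rfl | hv
        · exact absurd rfl huv
        · exact hs _ _ (hno v hv).2
        · exact (hno u hu).2
        · exact hKc u hu v hv huv⟩
      rw [Finset.card_insert_of_notMem hwK] at this
      omega
    have hex : ∃ v ∈ K, n ^ k < (S.filter (fun w => w = v ∨ ¬ r v w)).card := by
      by_contra hno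
      push Not at hno
      have h1 : S ⊆ K.biUnion (fun v => S.filter (fun w => w = v ∨ ¬ r v w)) := by
        intro w hw
        obtain ⟨v, hv, h⟩ := hcov w hw
        simp only [Finset.mem_biUnion, Finset.mem_filter]
        exact ⟨v, hv, hw, h⟩
      have h2 := (Finset.card_le_card h1).trans (Finset.card_biUnion_le_card_mul _ _ _ hno)
      have h3 : 0 < n ^ k := by positivity
      have h4 : K.card * n ^ k < n * n ^ k := Nat.mul_lt_mul_of_pos_right hKn h3
      rw [pow_succ, mul_comm] at hS
      omega
    obtain ⟨v, hv, hlt⟩ := hex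
    have hle : n ^ k ≤ ((S.filter (fun w => w = v ∨ ¬ r v w)).erase v).card := by
      have := Finset.pred_card_le_card_erase (s := S.filter (fun w => w = v ∨ ¬ r v w)) (a := v)
      omega
    have hsub : ((S.filter (fun w => w = v ∨ ¬ r v w)).erase v) ⊆ S :=
      (Finset.erase_subset _ _).trans (Finset.filter_subset _ _)
    rcases ih _ hle with ⟨J, hJ, h1, h2⟩ | ⟨J, hJ, h1, h2⟩
    · exact absurd ⟨J, hJ.trans hsub, h1, h2⟩ hcl
    · have hvJ : v ∉ J := fun h => by simpa using hJ h
      have hJv : ∀ w ∈ J, ¬ r v w := by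
        intro w hw
        have := hJ hw
        simp only [Finset.mem_erase, Finset.mem_filter] at this
        exact this.2.2.resolve_left this.1
      refine ⟨insert v J, Finset.insert_subset (hKS hv) (hJ.trans hsub), ?_, ?_⟩
      · rw [Finset.card_insert_of_notMem hvJ, h1]
      · intro u hu w hw huw
        rw [Finset.mem_insert] at hu hw
        rcases hu with rfl | hu <;> rcases hw with rfl | hw
        · exact absurd rfl huw
        · exact hJv w hw
        · exact fun h => hJv u hu (hs _ _ h)
        · exact h2 u hu w hw huw

open Finset Classical in
lemma gr_count {V : Type*} (I : Finset V) (s : ℕ) :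
    (I.powerset.filter (fun A => A.card ≤ s)).card ≤ (I.card + 1) ^ s := by
  have h1 : I.powerset.filter (fun A => A.card ≤ s) ⊆
      (Finset.range (s+1)).biUnion (fun j => I.powersetCard j) := by
    intro A hA
    simp only [Finset.mem_filter, Finset.mem_powerset] at hA
    simp only [Finset.mem_biUnion, Finset.mem_range, Finset.mem_powersetCard]
    exact ⟨A.card, by omega, hA.1, rfl⟩
  refine (Finset.card_le_card h1).trans (Finset.card_biUnion_le.trans ?_)
  rw [add_pow]
  refine Finset.sum_le_sum fun j hj => ?_
  rw [Finset.card_powersetCard, one_pow, mul_one]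
  have hj' : j ≤ s := by simpa [Nat.lt_succ_iff] using hj
  exact (Nat.choose_le_pow _ _).trans (Nat.le_mul_of_pos_right _ (Nat.choose_pos hj'))

open Finset Classical in
/-- Edge-disjoint graphs with small independence number live on few vertices. -/
lemma gr_disjoint {V ι : Type*} (r : ι → V → V → Prop) (T : Finset ι) (Y : Finset V) (n : ℕ)
    (hn : 1 ≤ n) (hT : 2 ≤ T.card) (hs : ∀ i u v, r i u v → r i v u)
    (hd : ∀ i ∈ T, ∀ j ∈ T, i ≠ j → ∀ u ∈ Y, ∀ v ∈ Y, r i u v → ¬ r j u v)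
    (hI : ∀ i ∈ T, ∀ K ⊆ Y, K.card = n → ∃ u ∈ K, ∃ v ∈ K, u ≠ v ∧ r i u v) :
    Y.card < 4 * n ^ (2 * (8 * n / T.card) + 3) := by
  by_contra hbig
  push Not at hbig
  set t := T.card with ht
  set N := Y.card with hN
  set s := 8 * n / t with hsdef
  have hNpos : 0 < N := lt_of_lt_of_le (by positivity) hbig
  -- a sparse colour
  have hsum : ∀ v ∈ Y, ∑ i ∈ T, (Y.filter (r i v)).card ≤ N := by
    intro v hv
    rw [← Finset.card_biUnion]
    · refine Finset.card_le_card ?_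
      intro w hw
      simp only [Finset.mem_biUnion, Finset.mem_filter] at hw
      obtain ⟨_, _, h, _⟩ := hw
      exact h
    · intro i hi j hj hij
      refine Finset.disjoint_left.mpr ?_
      intro w hw hw'
      simp only [Finset.mem_filter] at hw hw'
      exact hd i hi j hj hij v hv w hw.1 hw.2 hw'.2
  obtain ⟨i, hiT, hi⟩ : ∃ i ∈ T, t * ∑ v ∈ Y, (Y.filter (r i v)).card ≤ N * N := by
    apply Finset.exists_le_of_sum_le (Finset.card_pos.mp (by omega))
    rw [← Finset.mul_sum, Finset.sum_comm, Finset.sum_const, smul_eq_mul, ← ht]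
    refine Nat.mul_le_mul_left _ ?_
    refine (Finset.sum_le_sum hsum).trans ?_
    simp [hN]
  obtain ⟨j, hjT, hji⟩ : ∃ j ∈ T, j ≠ i := Finset.exists_mem_ne (by omega) i
  set Y' := Y.filter (fun v => t * (Y.filter (r i v)).card ≤ 2 * N) with hY'
  have hY'Y : Y' ⊆ Y := Finset.filter_subset _ _
  have hY'card : N ≤ 2 * Y'.card := by
    have h1 : Y'.card + (Y.filter (fun v => ¬ t * (Y.filter (r i v)).card ≤ 2 * N)).card = N :=
      Finset.card_filter_add_card_filter_not _
    set B := Y.filter (fun v => ¬ t * (Y.filter (r i v)).card ≤ 2 * N) with hB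
    have h2 : B.card * (2 * N) ≤ N * N := by
      calc B.card * (2 * N) = ∑ v ∈ B, 2 * N := by simp
        _ ≤ ∑ v ∈ B, t * (Y.filter (r i v)).card := by
            refine Finset.sum_le_sum fun v hv => ?_
            have := (Finset.mem_filter.mp hv).2
            omega
        _ ≤ ∑ v ∈ Y, t * (Y.filter (r i v)).card :=
            Finset.sum_le_sum_of_subset (Finset.filter_subset _ _)
        _ ≤ N * N := by rw [← Finset.mul_sum]; exact hi
    have h3 : B.card * 2 ≤ N := by
      refine Nat.le_of_mul_le_mul_right ?_ hNpos
      nlinarith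
    omega
  -- maximum independent set
  obtain ⟨I, hImem, hImax⟩ := Finset.exists_max_image
      (Y'.powerset.filter (fun K => ∀ u ∈ K, ∀ v ∈ K, u ≠ v → ¬ r i u v)) Finset.card
      ⟨∅, by simp⟩
  simp only [Finset.mem_filter, Finset.mem_powerset] at hImem hImax
  obtain ⟨hIY, hIind⟩ := hImem
  have hIn : I.card < n := by
    by_contra hge
    push Not at hge
    obtain ⟨K', hK', hc'⟩ := Finset.exists_subset_card_eq hge
    obtain ⟨u, hu, v, hv, huv, h⟩ := hI i hiT K' (hK'.trans (hIY.trans hY'Y)) hc'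
    exact hIind u (hK' hu) v (hK' hv) huv h
  -- most vertices have few neighbours in I
  set Z := Y'.filter (fun w => t * (I.filter (fun v => r i v w)).card ≤ 8 * n) with hZ
  have hZcard : Y'.card ≤ 2 * Z.card := by
    have h1 : Z.card + (Y'.filter (fun w => ¬ t * (I.filter (fun v => r i v w)).card ≤ 8 * n)).card
        = Y'.card := Finset.card_filter_add_card_filter_not _
    set B := Y'.filter (fun w => ¬ t * (I.filter (fun v => r i v w)).card ≤ 8 * n) with hB
    have h2 : B.card * (8 * n) ≤ (4 * n) * Y'.card := by
      calc B.card * (8 * n) = ∑ v ∈ B, 8 * n := by simp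
        _ ≤ ∑ w ∈ B, t * (I.filter (fun v => r i v w)).card := by
            refine Finset.sum_le_sum fun v hv => ?_
            have := (Finset.mem_filter.mp hv).2
            omega
        _ ≤ ∑ w ∈ Y, t * (I.filter (fun v => r i v w)).card :=
            Finset.sum_le_sum_of_subset ((Finset.filter_subset _ _).trans hY'Y)
        _ = ∑ v ∈ I, t * (Y.filter (fun w => r i v w)).card := by
            rw [← Finset.mul_sum, ← Finset.mul_sum]
            congr 1
            simp only [Finset.card_filter]
            rw [Finset.sum_comm]
        _ ≤ ∑ v ∈ I, 2 * N := by
            refine Finset.sum_le_sum fun v hv => ?_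
            exact (Finset.mem_filter.mp (hIY hv)).2
        _ = I.card * (2 * N) := by simp
        _ ≤ n * (2 * (2 * Y'.card)) := by gcongr
        _ = _ := by ring
    have h3 : B.card * 2 ≤ Y'.card := by
      refine Nat.le_of_mul_le_mul_right (c := 4 * n) ?_ (by omega)
      nlinarith
    omega
  -- pigeonhole on patterns
  set pat : V → Finset V := fun w => I.filter (fun v => v = w ∨ r i v w) with hpat
  have hmaps : ∀ w ∈ Z, pat w ∈ I.powerset.filter (fun A => A.card ≤ s + 1) := by
    intro w hw
    rw [Finset.mem_filter, Finset.mem_powerset]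
    refine ⟨Finset.filter_subset _ _, ?_⟩
    have h1 : pat w ⊆ insert w (I.filter (fun v => r i v w)) := by
      intro v hv
      simp only [hpat, Finset.mem_filter] at hv
      rw [Finset.mem_insert, Finset.mem_filter]
      tauto
    have h2 := (Finset.mem_filter.mp hw).2
    have h3 : (I.filter (fun v => r i v w)).card ≤ s := by
      rw [hsdef, Nat.le_div_iff_mul_le (by omega), mul_comm]
      exact h2
    have h4 := (Finset.card_le_card h1).trans (Finset.card_insert_le _ _)
    omega
  have hcount : (I.powerset.filter (fun A => A.card ≤ s + 1)).card ≤ n ^ (s + 1) :=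
    (gr_count I (s + 1)).trans (Nat.pow_le_pow_left hIn _)
  have hZbig : n ^ (s + 1) * n ^ (s + 2) ≤ Z.card := by
    rw [← pow_add, show s + 1 + (s + 2) = 2 * s + 3 by ring]
    omega
  obtain ⟨A, hA, hAcard⟩ : ∃ A ∈ I.powerset.filter (fun A => A.card ≤ s + 1),
      n ^ (s + 2) ≤ (Z.filter (fun w => pat w = A)).card := by
    apply Finset.exists_le_card_fiber_of_mul_le_card_of_maps_to hmaps
    · exact ⟨∅, by simp⟩
    · exact (Nat.mul_le_mul_right _ hcount).trans hZbig
  have hUY' : Z.filter (fun w => pat w = A) ⊆ Y' :=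
    (Finset.filter_subset _ _).trans (Finset.filter_subset _ _)
  rcases gr_ramsey (r i) (hs i) n hn (s + 2) _ hAcard with ⟨K, hK, hKc, hKr⟩ | ⟨J, hJ, hJc, hJr⟩
  · have hKY := hK.trans (hUY'.trans hY'Y)
    obtain ⟨u, hu, v, hv, huv, h⟩ := hI j hjT K hKY hKc
    exact hd j hjT i hiT hji u (hKY hu) v (hKY hv) h (hKr u hu v hv huv)
  · simp only [Finset.mem_filter, Finset.mem_powerset] at hA
    have hcross : ∀ w ∈ J, ∀ v ∈ I \ A, v ≠ w ∧ ¬ r i v w := by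
      intro w hw v hv
      have h1 := (Finset.mem_filter.mp (hJ hw)).2
      rw [Finset.mem_sdiff] at hv
      have h2 : v ∉ pat w := h1 ▸ hv.2
      simp only [hpat, Finset.mem_filter, not_and, not_or] at h2
      exact h2 hv.1
    have hdis : Disjoint J (I \ A) := by
      rw [Finset.disjoint_left]
      intro w hw hw'
      exact (hcross w hw w hw').1 rfl
    have := hImax (J ∪ (I \ A)) ⟨Finset.union_subset (hJ.trans hUY')
      (Finset.sdiff_subset.trans hIY), by
        intro u hu v hv huv
        rw [Finset.mem_union] at hu hv
        rcases hu with hu | hu <;> rcases hv with hv | hv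
        · exact hJr u hu v hv huv
        · exact fun h => (hcross u hu v hv).2 (hs _ _ _ h)
        · exact (hcross v hv u hu).2
        · exact hIind u (Finset.sdiff_subset hu) v (Finset.sdiff_subset hv) huv⟩
    rw [Finset.card_union_of_disjoint hdis, Finset.card_sdiff_of_subset hA.1] at this
    have h5 := Finset.card_le_card hA.1
    omega

open Finset Classical in
lemma gr_main (n t N : ℕ) (hn : 1 ≤ n) (ht : 2 ≤ t) (h1 : n ^ t ≤ N)
    (h2 : n ^ (t * t) * (4 * n ^ (2 * (8 * n / t) + 3)) ≤ N)
    (χ : Sym2 (Fin N × Fin N) → Bool) :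
    HasRedRect N N χ ∨ HasBlueGridClique N N n χ := by
  by_contra hcon
  push Not at hcon
  obtain ⟨hR, hB⟩ := hcon
  obtain ⟨S, -, hS⟩ := Finset.exists_subset_card_eq (s := (Finset.univ : Finset (Fin N)))
    (n := n ^ t) (by simpa using h1)
  -- no blue clique in rows
  have hrow : ∀ y : Fin N, ∃ T ∈ S.powersetCard t, ∀ u ∈ T, ∀ v ∈ T, u ≠ v →
      χ s((u, y), (v, y)) = true := by
    intro y
    rcases gr_ramsey (fun u v : Fin N => χ s((u, y), (v, y)) = false)
      (fun u v h => by rw [Sym2.eq_swap]; exact h) n hn t S hS.ge with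
      ⟨K, -, hKc, hK⟩ | ⟨K, hKS, hKc, hK⟩
    · exfalso
      refine hB ⟨K.image (fun u => (u, y)), ?_, ?_⟩
      · rw [Finset.card_image_of_injective _ (fun a b h => (Prod.mk.inj h).1), hKc]
      · intro p hp q hq hpq
        simp only [Finset.mem_image] at hp hq
        obtain ⟨u, hu, rfl⟩ := hp
        obtain ⟨v, hv, rfl⟩ := hq
        have huv : u ≠ v := fun h => hpq (by rw [h])
        exact ⟨Or.inr ⟨huv, rfl⟩, hK u hu v hv huv⟩
    · refine ⟨K, Finset.mem_powersetCard.mpr ⟨hKS, hKc⟩, fun u hu v hv huv => ?_⟩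
      simpa using hK u hu v hv huv
  choose f hf hfr using hrow
  have hcnt : (S.powersetCard t).card ≤ n ^ (t * t) := by
    rw [Finset.card_powersetCard, hS, pow_mul]
    exact Nat.choose_le_pow _ _
  obtain ⟨T, hT, hTc⟩ : ∃ T ∈ S.powersetCard t, 4 * n ^ (2 * (8 * n / t) + 3) ≤
      ((Finset.univ : Finset (Fin N)).filter (fun y => f y = T)).card := by
    apply Finset.exists_le_card_fiber_of_mul_le_card_of_maps_to (fun y _ => hf y)
    · have : 0 < N := lt_of_lt_of_le (by positivity) h1
      exact ⟨f ⟨0, this⟩, hf _⟩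
    · refine (Nat.mul_le_mul_right _ hcnt).trans ?_
      simpa using h2
  have hTt : T.card = t := (Finset.mem_powersetCard.mp hT).2
  have := gr_disjoint (fun (x : Fin N) (y y' : Fin N) => y ≠ y' ∧ χ s((x, y), (x, y')) = true) T
    ((Finset.univ : Finset (Fin N)).filter (fun y => f y = T)) n hn (by omega)
    (fun x u v h => ⟨h.1.symm, by rw [Sym2.eq_swap]; exact h.2⟩)
    (by
      intro x hx x' hx' hxx y hy y' hy' h h'
      simp only [Finset.mem_filter, Finset.mem_univ, true_and] at hy hy'
      exact hR ⟨x, x', y, y', hxx, h.1, hfr y x (hy ▸ hx) x' (hy ▸ hx') hxx,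
        hfr y' x (hy' ▸ hx) x' (hy' ▸ hx') hxx, h.2, h'.2⟩)
    (by
      intro x hx K hK hKc
      by_contra hno
      push Not at hno
      refine hB ⟨K.image (fun u => (x, u)), ?_, ?_⟩
      · rw [Finset.card_image_of_injective _ (fun a b h => (Prod.mk.inj h).2), hKc]
      · intro p hp q hq hpq
        simp only [Finset.mem_image] at hp hq
        obtain ⟨u, hu, rfl⟩ := hp
        obtain ⟨v, hv, rfl⟩ := hq
        have huv : u ≠ v := fun h => hpq (by rw [h])
        exact ⟨Or.inl ⟨rfl, huv⟩, by simpa using hno u hu v hv huv huv⟩)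
  rw [hTt] at this
  omega

/-- There is `c' > 0` such that for all `n ≥ 2`,
`gr(Γ₂,₂, K_n) ≤ 2^(c' n^(2/3) log₂ n)`: if `N ≥ 2^(c' n^(2/3) log₂ n)` then every
red/blue edge-coloring of `Γ_{N,N}` contains a red rectangle or a blue `K_n`. -/
theorem upper_bound_grid_ramsey :
    ∃ c' : ℝ, 0 < c' ∧ ∀ n : ℕ, 2 ≤ n →
      ∀ N : ℕ, (2 : ℝ) ^ (c' * (n : ℝ) ^ ((2 : ℝ) / 3) * Real.logb 2 n) ≤ N →
        ∀ χ : Sym2 (Fin N × Fin N) → Bool,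
          HasRedRect N N χ ∨ HasBlueGridClique N N n χ := by
  refine ⟨30, by norm_num, ?_⟩
  intro n hn N hN χ
  have hn0 : (0 : ℝ) < n := by positivity
  have hn1 : (1 : ℝ) ≤ n := by exact_mod_cast (by omega : 1 ≤ n)
  set a : ℝ := (n : ℝ) ^ ((1 : ℝ) / 3) with ha
  have ha1 : 1 ≤ a := Real.one_le_rpow hn1 (by norm_num)
  have ha2 : (n : ℝ) ^ ((2 : ℝ) / 3) = a ^ 2 := by
    rw [ha, ← Real.rpow_natCast, ← Real.rpow_mul hn0.le]
    norm_num
  have ha3 : (n : ℝ) = a ^ 3 := by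
    rw [ha, ← Real.rpow_natCast, ← Real.rpow_mul hn0.le]
    norm_num
  have hN' : (n : ℝ) ^ (30 * a ^ 2) ≤ N := by
    rw [ha2, mul_comm, Real.rpow_mul (by norm_num),
      Real.rpow_logb (by norm_num) (by norm_num) hn0] at hN
    exact hN
  have key : ∀ e : ℕ, (e : ℝ) ≤ 30 * a ^ 2 → n ^ e ≤ N := by
    intro e he
    have : (n : ℝ) ^ (e : ℝ) ≤ N := (Real.rpow_le_rpow_of_exponent_le hn1 he).trans hN'
    rw [Real.rpow_natCast] at this
    exact_mod_cast this
  set t : ℕ := ⌊a⌋₊ + 1 with ht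
  have ht1 : (t : ℝ) ≤ 2 * a := by
    have := Nat.floor_le (show 0 ≤ a by linarith)
    rw [ht]; push_cast; linarith
  have ht2 : a ≤ t := by
    have := Nat.lt_floor_add_one a
    rw [ht]; push_cast; linarith
  have ht3 : 2 ≤ t := by
    have : 1 ≤ ⌊a⌋₊ := Nat.le_floor (by simpa using ha1)
    omega
  have hs : ((8 * n / t : ℕ) : ℝ) ≤ 8 * a ^ 2 := by
    refine Nat.cast_div_le.trans ?_
    rw [div_le_iff₀ (by positivity)]
    push_cast
    nlinarith [sq_nonneg a]
  have htt : (t : ℝ) * t ≤ 4 * a ^ 2 := by nlinarith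
  have haa : 1 ≤ a ^ 2 := by nlinarith
  refine gr_main n t N (by omega) ht3 (key t (by nlinarith)) ?_ χ
  have h4 : 4 ≤ n ^ 2 := by nlinarith
  calc n ^ (t * t) * (4 * n ^ (2 * (8 * n / t) + 3))
      ≤ n ^ (t * t) * (n ^ 2 * n ^ (2 * (8 * n / t) + 3)) := by gcongr
    _ = n ^ (t * t + (2 + (2 * (8 * n / t) + 3))) := by rw [← pow_add, ← pow_add]
    _ ≤ N := by
        apply key
        rw [Nat.cast_add, Nat.cast_add, Nat.cast_add, Nat.cast_mul, Nat.cast_mul]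
        push_cast at hs ⊢
        nlinarith
end
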